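/- Let Ω ⊂ ℝ^d be a bounded open set with Lipschitz boundary, let W : Ω×ℝ^{m×d} → [0,+∞] satisfy Assumption 1, and let g ∈ C_c^1(ℝ^d)^m. If ∫_Ω W(x, s Dg(x)) dx < +∞ for some s > 1, then for any u ∈ g + W^{1,p}_0(Ω)^m there exists a sequence u_n ∈ g + C_c^∞(Ω)^m such that u_n → u strongly in W^{1,p}(Ω)^m and ∫_Ω W(x, Du_n(x)) dx → ∫_Ω W(x, Du(x)) dx. -/

import Mathlib

open MeasureTheory Metric Set Filter
open scoped ENNReal Topology NNReal RealInnerProductSpace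

noncomputable section

/-- `ℝ^d` as a Euclidean space. -/
abbrev Euc (d : ℕ) := EuclideanSpace ℝ (Fin d)

/-- The space `ℝ^{m×d}` of `m×d` matrices. -/
abbrev Mat (m d : ℕ) := Fin m → Fin d → ℝ

/-- Frobenius (Euclidean) norm of an `m×d` matrix. -/
def frobNorm {m d : ℕ} (ξ : Mat m d) : ℝ :=
  Real.sqrt (∑ i, ∑ j, ξ i j ^ 2)

/-- `φ ∈ C_c^∞(Ω)^m`: a smooth function with compact support contained in `Ω`. -/
def IsCcSmooth {d m : ℕ} (Ω : Set (Euc d)) (φ : Euc d → Euc m) : Prop :=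
  ContDiff ℝ (⊤ : ℕ∞) φ ∧ HasCompactSupport φ ∧ tsupport φ ⊆ Ω

/-- The (classical) Jacobian matrix of a differentiable map. -/
def smoothJac {d m : ℕ} (φ : Euc d → Euc m) (x : Euc d) : Mat m d :=
  fun i j => fderiv ℝ φ x (EuclideanSpace.single j 1) i

/-- `Du` is the weak Jacobian of `u` on `Ω` (integration by parts against test functions). -/
def IsWeakJacobianOn {d m : ℕ} (Ω : Set (Euc d)) (u : Euc d → Euc m)
    (Du : Euc d → Mat m d) : Prop :=
  ∀ φ : Euc d → ℝ, ContDiff ℝ (⊤ : ℕ∞) φ → HasCompactSupport φ → tsupport φ ⊆ Ω →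
    ∀ (i : Fin m) (j : Fin d),
      ∫ x in Ω, u x i * fderiv ℝ φ x (EuclideanSpace.single j 1) =
        - ∫ x in Ω, Du x i j * φ x

/-- `u ∈ W^{1,p}(Ω)^m` with weak Jacobian `Du`. -/
def MemW1p {d m : ℕ} (Ω : Set (Euc d)) (p : ℝ≥0∞) (u : Euc d → Euc m)
    (Du : Euc d → Mat m d) : Prop :=
  MemLp u p (volume.restrict Ω) ∧ MemLp Du p (volume.restrict Ω) ∧ IsWeakJacobianOn Ω u Du

/-- Strong convergence `uₙ → v` in `W^{1,p}(Ω)^m` (together with the Jacobians). -/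
def TendstoW1p {d m : ℕ} (Ω : Set (Euc d)) (p : ℝ≥0∞)
    (u : ℕ → Euc d → Euc m) (Du : ℕ → Euc d → Mat m d)
    (v : Euc d → Euc m) (Dv : Euc d → Mat m d) : Prop :=
  Tendsto (fun n => eLpNorm (u n - v) p (volume.restrict Ω)) atTop (𝓝 0) ∧
  Tendsto (fun n => eLpNorm (Du n - Dv) p (volume.restrict Ω)) atTop (𝓝 0)

/-- `v ∈ W_0^{1,p}(Ω)^m`, i.e. `v ∈ W^{1,p}` and `v` is a `W^{1,p}`-limit of functions in
`C_c^∞(Ω)^m`. -/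
def MemW1p0 {d m : ℕ} (Ω : Set (Euc d)) (p : ℝ≥0∞) (v : Euc d → Euc m)
    (Dv : Euc d → Mat m d) : Prop :=
  MemW1p Ω p v Dv ∧
  ∃ w : ℕ → Euc d → Euc m, (∀ n, IsCcSmooth Ω (w n)) ∧
    TendstoW1p Ω p w (fun n => smoothJac (w n)) v Dv

/-- `Ω` has Lipschitz boundary: near each boundary point, `Ω` is the subgraph of a Lipschitz
function over a hyperplane. -/
def HasLipschitzBoundary {d : ℕ} (Ω : Set (Euc d)) : Prop :=
  ∀ x ∈ frontier Ω, ∃ (ν : Euc d) (r L : ℝ) (ψ : Euc d → ℝ),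
    ‖ν‖ = 1 ∧ 0 < r ∧ 0 ≤ L ∧ LipschitzWith (Real.toNNReal L) ψ ∧
    ∀ y ∈ ball x r, (y ∈ Ω ↔ ⟪y, ν⟫ < ψ (y - ⟪y, ν⟫ • ν))

/-- Convexity of a `[0,+∞]`-valued function. -/
def ConvexENNReal {m d : ℕ} (f : Mat m d → ℝ≥0∞) : Prop :=
  ∀ ξ η : Mat m d, ∀ t : ℝ, 0 ≤ t → t ≤ 1 →
    f (t • ξ + (1 - t) • η) ≤ ENNReal.ofReal t * f ξ + ENNReal.ofReal (1 - t) * f η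

/-- The convex biconjugate `f**` of a `[0,+∞]`-valued function: the supremum of all affine
minorants of `f`. -/
def biconj {m d : ℕ} (f : Mat m d → ℝ≥0∞) (ξ : Mat m d) : ℝ≥0∞ :=
  ⨆ (L : Mat m d →ₗ[ℝ] ℝ) (c : ℝ) (_ : ∀ η, ENNReal.ofReal (L η + c) ≤ f η),
    ENNReal.ofReal (L ξ + c)

/-- Assumption (a4): the local stability estimate
`W(x,ξ) ≤ C_M (ess inf_{y ∈ B̄_δ(x) ∩ Ω} W(y,·))**(ξ) + α_M(x)` for `|ξ| ≤ M δ^{-d/p}`. -/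
def StabilityEstimate {d m : ℕ} (Ω : Set (Euc d)) (p : ℝ)
    (W : Euc d → Mat m d → ℝ≥0∞) : Prop :=
  ∀ M : ℝ, 1 < M → ∃ (CM δ₀ : ℝ) (αM : Euc d → ℝ≥0∞),
    0 < CM ∧ 0 < δ₀ ∧ (∫⁻ x in Ω, αM x) < ⊤ ∧
    ∀ δ : ℝ, 0 < δ → δ < δ₀ → ∀ x ∈ Ω, ∀ ξ : Mat m d,
      frobNorm ξ ≤ M * δ ^ (-(d : ℝ) / p) →
      W x ξ ≤ ENNReal.ofReal CM *
          biconj (fun η => essInf (fun y => W y η) (volume.restrict (closedBall x δ ∩ Ω))) ξ +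
        αM x

/-- Assumption 1 of the paper (items (a1)–(a4)) for the integrand `W` on `Ω`, with lower
growth exponent `p`. -/
def Assumption1 {d m : ℕ} (Ω : Set (Euc d)) (p : ℝ) (W : Euc d → Mat m d → ℝ≥0∞) : Prop :=
  Measurable (Function.uncurry W) ∧
  (∀ᵐ x ∂volume.restrict Ω, ConvexENNReal (W x) ∧ LowerSemicontinuous (W x)) ∧
  (∀ᵐ x ∂volume.restrict Ω, ∀ ξ, ENNReal.ofReal (frobNorm ξ ^ p) ≤ W x ξ) ∧
  ((p ≤ (d : ℝ) - 1 →
      ∃ (C q : ℝ) (α : Euc d → ℝ≥0∞), 0 < C ∧ p < q ∧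
        (p < (d : ℝ) - 1 → q ≤ ((d : ℝ) - 1) * p / ((d : ℝ) - 1 - p)) ∧
        (∫⁻ x in Ω, α x) < ⊤ ∧
        ∀ᵐ x ∂volume.restrict Ω, ∀ ξ,
          W x ξ ≤ ENNReal.ofReal (C * frobNorm ξ ^ q) + α x) ∧
    ((d : ℝ) - 1 < p →
      ∃ θ : ℝ, 0 < θ ∧
        (∫⁻ x in Ω, ⨆ ξ ∈ {ξ : Mat m d | frobNorm ξ ≤ θ}, W x ξ) < ⊤)) ∧
  StabilityEstimate Ω p W


lemma affine_le_of_dense {m d : ℕ} {f : Mat m d → ℝ≥0∞} (hf : ConvexENNReal f) {θ : ℝ} (hθ : 0 < θ)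
    {B : ℝ≥0∞} (hB : B < ⊤) (hb : ∀ ξ, ‖ξ‖ < θ → f ξ ≤ B) {D : Set (Mat m d)} (hD : Dense D)
    (L : Mat m d →ₗ[ℝ] ℝ) (c : ℝ) (h : ∀ η ∈ D, ENNReal.ofReal (L η + c) ≤ f η) :
    ∀ η, ENNReal.ofReal (L η + c) ≤ f η := by
  intro η
  rcases eq_or_ne (f η) ⊤ with hη | hη
  · rw [hη]; exact le_top
  have hLc : Continuous L := L.continuous_of_finiteDimensional
  have key : ∀ t : ℝ, 0 < t → t < 1 →
      ENNReal.ofReal (L (t • η) + c) ≤ ENNReal.ofReal t * f η + ENNReal.ofReal (1 - t) * B := by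
    intro t ht0 ht1
    set A : Set (Mat m d) := {ζ | ENNReal.ofReal (L ζ + c) ≤
      ENNReal.ofReal t * f η + ENNReal.ofReal (1 - t) * B} with hA
    have hAc : IsClosed A := by
      apply isClosed_le _ continuous_const
      exact ENNReal.continuous_ofReal.comp (hLc.add continuous_const)
    have h1t : 0 < 1 - t := by linarith
    have hsub : ball (t • η) ((1 - t) * θ) ∩ D ⊆ A := by
      rintro ζ ⟨hζ, hζD⟩
      refine (h ζ hζD).trans ?_
      have e : ζ = t • η + (1 - t) • ((1 - t)⁻¹ • (ζ - t • η)) := by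
        rw [smul_smul, mul_inv_cancel₀ h1t.ne', one_smul]; abel
      rw [e]
      refine (hf _ _ t ht0.le ht1.le).trans ?_
      gcongr
      apply hb
      rw [norm_smul, norm_inv, Real.norm_of_nonneg h1t.le, inv_mul_lt_iff₀ h1t]
      simpa [dist_eq_norm] using hζ
    have : t • η ∈ closure (ball (t • η) ((1 - t) * θ) ∩ D) := by
      have := hD.open_subset_closure_inter (isOpen_ball (x := t • η) (ε := (1 - t) * θ))
      exact this (mem_ball_self (by positivity))
    exact (hAc.closure_subset_iff.2 hsub) this
  have l1 : Tendsto (fun t : ℝ => ENNReal.ofReal (L (t • η) + c)) (𝓝[<] 1)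
      (𝓝 (ENNReal.ofReal (L ((1 : ℝ) • η) + c))) := by
    apply Tendsto.mono_left _ nhdsWithin_le_nhds
    apply Continuous.tendsto
    exact ENNReal.continuous_ofReal.comp
      ((hLc.comp (continuous_id.smul continuous_const)).add continuous_const)
  have l2 : Tendsto (fun t : ℝ => ENNReal.ofReal t * f η + ENNReal.ofReal (1 - t) * B) (𝓝[<] 1)
      (𝓝 (ENNReal.ofReal 1 * f η + ENNReal.ofReal (1 - 1) * B)) := by
    apply Tendsto.mono_left _ nhdsWithin_le_nhds
    apply Tendsto.add
    · exact ENNReal.Tendsto.mul_const (ENNReal.continuous_ofReal.tendsto _) (Or.inr hη)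
    · apply ENNReal.Tendsto.mul_const _ (Or.inr hB.ne)
      exact (ENNReal.continuous_ofReal.comp (continuous_const.sub continuous_id)).tendsto (1 : ℝ)
  have := le_of_tendsto_of_tendsto l1 l2 (by
    have h0 : Ioo (0 : ℝ) 1 ∈ 𝓝[<] (1 : ℝ) := Ioo_mem_nhdsLT (by norm_num)
    filter_upwards [h0] with t ht using key t ht.1 ht.2)
  simpa using this

lemma convex_three {m d : ℕ} {f : Mat m d → ℝ≥0∞} (hf : ConvexENNReal f) {t s : ℝ} (ht0 : 0 ≤ t)
    (ht1 : t ≤ 1) (hs : 1 < s) (a b c : Mat m d) :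
    f (t • a + ((1 - t) / s) • b + ((1 - t) * (1 - 1 / s)) • c) ≤ f a + f b + f c := by
  have e : t • a + ((1 - t) / s) • b + ((1 - t) * (1 - 1 / s)) • c
      = t • a + (1 - t) • ((1 / s) • b + (1 - 1 / s) • c) := by
    rw [smul_add, smul_smul, smul_smul, add_assoc]; congr 3; ring
  have hs0 : 0 ≤ 1 / s := by positivity
  have hs1 : 1 / s ≤ 1 := by rw [div_le_one (by linarith)]; exact hs.le
  rw [e]
  have o1 : ∀ r : ℝ, r ≤ 1 → ∀ z : ℝ≥0∞, ENNReal.ofReal r * z ≤ z := fun r hr z =>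
    mul_le_of_le_one_left (zero_le) (by simpa using hr)
  calc _ ≤ _ := hf _ _ t ht0 ht1
    _ ≤ f a + f ((1 / s) • b + (1 - 1 / s) • c) :=
        add_le_add (o1 _ ht1 _) (o1 _ (by linarith) _)
    _ ≤ f a + (f b + f c) := by
        gcongr
        exact (hf _ _ _ hs0 hs1).trans (add_le_add (o1 _ hs1 _) (o1 _ (by linarith) _))
    _ = _ := by rw [add_assoc]

lemma limsup_le_interior {m d : ℕ} {f : Mat m d → ℝ≥0∞} (hf : ConvexENNReal f) {θ : ℝ} (hθ : 0 < θ)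
    {B : ℝ≥0∞} (hB : B < ⊤) (hb : ∀ ξ, ‖ξ‖ < θ → f ξ ≤ B) {t s : ℝ} (ht0 : 0 ≤ t)
    (ht1 : t < 1) (hs : 1 < s) (a b : Mat m d) (ha : f a < ⊤) (hb' : f b < ⊤)
    (ξ : ℕ → Mat m d) (hξ : Tendsto ξ atTop (𝓝 (t • a + ((1 - t) / s) • b))) :
    limsup (fun n => f (ξ n)) atTop ≤ f (t • a + ((1 - t) / s) • b) := by
  set ξ₀ := t • a + ((1 - t) / s) • b
  set κ := (1 - t) * (1 - 1 / s)
  have hs1 : 1 / s < 1 := by rw [div_lt_one (by linarith)]; exact hs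
  have hκ : 0 < κ := mul_pos (by linarith) (by linarith)
  have hB' : f a + f b + B < ⊤ := by simp [ha, hb', hB]
  have hball : ∀ z, ‖z‖ < κ * θ → f (ξ₀ + z) ≤ f a + f b + B := by
    intro z hz
    have e : ξ₀ + z = ξ₀ + κ • (κ⁻¹ • z) := by rw [smul_smul, mul_inv_cancel₀ hκ.ne', one_smul]
    rw [e]
    refine (convex_three hf ht0 ht1.le hs a b _).trans ?_
    gcongr
    apply hb
    rwa [norm_smul, norm_inv, Real.norm_of_nonneg hκ.le, inv_mul_lt_iff₀ hκ]
  have key : ∀ τ : ℝ, 0 < τ → τ < 1 →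
      limsup (fun n => f (ξ n)) atTop ≤ f ξ₀ + ENNReal.ofReal τ * (f a + f b + B) := by
    intro τ h0 h1
    apply limsup_le_of_le
    · isBoundedDefault
    have := hξ.eventually (ball_mem_nhds ξ₀ (show 0 < τ * (κ * θ) by positivity))
    filter_upwards [this] with n hn
    have e0 : ∀ z w : Mat m d, w = (1 - τ) • z + (1 - (1 - τ)) • (z + τ⁻¹ • (w - z)) := by
      intro z w
      rw [sub_sub_cancel, smul_add, smul_smul, mul_inv_cancel₀ h0.ne', one_smul, sub_smul]
      rw [one_smul]; abel
    rw [e0 ξ₀ (ξ n)]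
    refine (hf _ _ _ (by linarith) (by linarith)).trans ?_
    rw [sub_sub_cancel]
    gcongr
    · exact mul_le_of_le_one_left zero_le (by simpa using h0.le)
    · apply hball
      rw [norm_smul, norm_inv, Real.norm_of_nonneg h0.le, inv_mul_lt_iff₀ h0]
      simpa [dist_eq_norm] using hn
  have l2 : Tendsto (fun τ : ℝ => f ξ₀ + ENNReal.ofReal τ * (f a + f b + B)) (𝓝[>] 0)
      (𝓝 (f ξ₀ + ENNReal.ofReal 0 * (f a + f b + B))) := by
    apply Tendsto.mono_left _ nhdsWithin_le_nhds
    apply tendsto_const_nhds.add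
    exact ENNReal.Tendsto.mul_const (ENNReal.continuous_ofReal.tendsto _) (Or.inr hB'.ne)
  have := ge_of_tendsto l2 (by
    have h0 : Ioo (0 : ℝ) 1 ∈ 𝓝[>] (0 : ℝ) := Ioo_mem_nhdsGT (by norm_num)
    filter_upwards [h0] with t ht using key t ht.1 ht.2)
  simpa using this

lemma ae_essInf_ball_le {d : ℕ} (Ω : Set (Euc d)) (f : Euc d → ℝ≥0∞) {δ : ℝ}
    (hδ : 0 < δ) :
    ∀ᵐ x ∂volume.restrict Ω, essInf f (volume.restrict (closedBall x δ ∩ Ω)) ≤ f x := by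
  obtain ⟨s, hs⟩ := TopologicalSpace.exists_dense_seq (Euc d)
  have h : ∀ k, ∀ᵐ x ∂volume.restrict Ω, x ∈ ball (s k) (δ / 2) →
      essInf f (volume.restrict (ball (s k) (δ / 2) ∩ Ω)) ≤ f x := by
    intro k
    have := ae_essInf_le (f := f) (μ := volume.restrict (ball (s k) (δ / 2) ∩ Ω))
    rw [← Measure.restrict_restrict measurableSet_ball, ae_restrict_iff' measurableSet_ball] at this
    rwa [← Measure.restrict_restrict measurableSet_ball]
  rw [← ae_all_iff] at h
  filter_upwards [h] with x hx
  obtain ⟨k, hk⟩ := hs.exists_dist_lt x (half_pos hδ)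
  refine le_trans ?_ (hx k (by simpa using hk))
  refine essInf_antitone_measure ?_
  apply Measure.absolutelyContinuous_of_le
  apply Measure.restrict_mono _ le_rfl
  apply inter_subset_inter_left
  intro z hz
  rw [mem_closedBall]
  rw [mem_ball] at hz
  have := dist_triangle z (s k) x
  rw [dist_comm x] at hk
  linarith

lemma ofReal_integral_le_lintegral_ofReal' {α : Type*} [MeasurableSpace α] {μ : Measure α} {f : α → ℝ}
    (hf : Integrable f μ) : ENNReal.ofReal (∫ x, f x ∂μ) ≤ ∫⁻ x, ENNReal.ofReal (f x) ∂μ := by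
  rw [integral_eq_lintegral_pos_part_sub_lintegral_neg_part hf]
  refine (ENNReal.ofReal_le_ofReal (sub_le_self _ ENNReal.toReal_nonneg)).trans ?_
  exact ENNReal.ofReal_toReal_le

lemma biconj_jensen {d m : ℕ} (Ω : Set (Euc d))
    (W : Euc d → Mat m d → ℝ≥0∞)
    (hconv : ∀ᵐ x ∂volume.restrict Ω, ConvexENNReal (W x)) {θ : ℝ} (hθ : 0 < θ)
    (hball : ∀ᵐ x ∂volume.restrict Ω, ∃ B : ℝ≥0∞, B < ⊤ ∧ ∀ ξ, ‖ξ‖ < θ → W x ξ ≤ B)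
    {δ : ℝ} (hδ : 0 < δ) :
    ∀ᵐ x ∂volume.restrict Ω, ∀ (k : Euc d → ℝ) (V : Euc d → Mat m d), (∀ z, 0 ≤ k z) →
      (∀ z, z ∉ closedBall x δ → k z = 0) → IntegrableOn k Ω → (∫ z in Ω, k z) ≤ 1 →
      IntegrableOn (fun z => k z • V z) Ω → ∀ ζ : Mat m d,
      biconj (fun η => essInf (fun y => W y η) (volume.restrict (closedBall x δ ∩ Ω)))
        ((∫ z in Ω, k z • V z) + (1 - ∫ z in Ω, k z) • ζ) ≤
      (∫⁻ z in Ω, ENNReal.ofReal (k z) * W z (V z)) + W x ζ := by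
  obtain ⟨D, hDc, hDd⟩ := TopologicalSpace.exists_countable_dense (Mat m d)
  have h1 : ∀ᵐ x ∂volume.restrict Ω, ∀ η ∈ D,
      essInf (fun y => W y η) (volume.restrict (closedBall x δ ∩ Ω)) ≤ W x η := by
    rw [ae_ball_iff hDc]
    intro η _
    exact ae_essInf_ball_le Ω (fun y => W y η) hδ
  filter_upwards [h1, hconv, hball] with x hx hcx hbx k V hk0 hks hki hk1 hkV ζ
  obtain ⟨Bx, hBx, hbx⟩ := hbx
  refine iSup_le fun L => iSup_le fun c => iSup_le fun hLc => ?_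
  have hxζ : ENNReal.ofReal (L ζ + c) ≤ W x ζ :=
    affine_le_of_dense hcx hθ hBx hbx hDd L c (fun η hη => (hLc η).trans (hx η hη)) ζ
  have hy : ∀ᵐ y ∂volume.restrict Ω, y ∈ closedBall x δ → ∀ η, ENNReal.ofReal (L η + c) ≤ W y η := by
    rw [← ae_restrict_iff' measurableSet_closedBall,
      Measure.restrict_restrict measurableSet_closedBall]
    have h2 : ∀ᵐ y ∂volume.restrict (closedBall x δ ∩ Ω), ∀ η ∈ D, ENNReal.ofReal (L η + c) ≤ W y η := by
      rw [ae_ball_iff hDc]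
      intro η _
      filter_upwards [ae_essInf_le (f := fun y => W y η)
        (μ := volume.restrict (closedBall x δ ∩ Ω))] with y hy
      exact (hLc η).trans hy
    have hle : volume.restrict (closedBall x δ ∩ Ω) ≤ volume.restrict Ω :=
      Measure.restrict_mono inter_subset_right le_rfl
    filter_upwards [h2, ae_mono hle hconv, ae_mono hle hball] with y h2 hcy hby
    obtain ⟨By, hBy, hby⟩ := hby
    exact affine_le_of_dense hcy hθ hBy hby hDd L c h2
  set lam := ∫ z in Ω, k z
  have hl0 : 0 ≤ lam := integral_nonneg hk0
  let L' : Mat m d →L[ℝ] ℝ := LinearMap.toContinuousLinearMap L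
  have hLL : ∀ z, L z = L' z := fun z => rfl
  have hintg : IntegrableOn (fun z => k z * (L (V z) + c)) Ω := by
    have a1 : IntegrableOn (fun z => L' (k z • V z) + k z * c) Ω :=
      (L'.integrable_comp hkV).add (hki.mul_const c)
    refine a1.congr (Eventually.of_forall fun z => ?_)
    simp only [map_smul, smul_eq_mul, hLL]; ring
  have e : L ((∫ z in Ω, k z • V z) + (1 - lam) • ζ) + c
      = (∫ z in Ω, k z * (L (V z) + c)) + (1 - lam) * (L ζ + c) := by
    have e1 : (∫ z in Ω, k z * (L (V z) + c)) = L (∫ z in Ω, k z • V z) + lam * c := by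
      rw [hLL (∫ z in Ω, k z • V z), ← L'.integral_comp_comm hkV, ← integral_mul_const,
        ← integral_add (L'.integrable_comp hkV) (hki.mul_const c)]
      refine integral_congr_ae (Eventually.of_forall fun z => ?_)
      simp only [map_smul, smul_eq_mul, hLL]; ring
    rw [e1, map_add, map_smul, smul_eq_mul]; ring
  rw [e]
  refine ENNReal.ofReal_add_le.trans (add_le_add ?_ ?_)
  · refine (ofReal_integral_le_lintegral_ofReal' hintg).trans (lintegral_mono_ae ?_)
    filter_upwards [hy] with z hz
    by_cases hzb : z ∈ closedBall x δ
    · rw [ENNReal.ofReal_mul (hk0 z)]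
      gcongr
      exact hz hzb _
    · simp [hks z hzb]
  · rw [ENNReal.ofReal_mul (by linarith)]
    refine le_trans ?_ hxζ
    exact mul_le_of_le_one_left zero_le (by simpa using hl0)

lemma norm_le_frobNorm {m d : ℕ} (ξ : Mat m d) : ‖ξ‖ ≤ frobNorm ξ := by
  have h0 : 0 ≤ frobNorm ξ := Real.sqrt_nonneg _
  rw [pi_norm_le_iff_of_nonneg h0]
  intro i
  rw [pi_norm_le_iff_of_nonneg h0]
  intro j
  rw [Real.norm_eq_abs]
  apply Real.abs_le_sqrt
  calc ξ i j ^ 2 ≤ ∑ j, ξ i j ^ 2 :=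
        Finset.single_le_sum (f := fun j => ξ i j ^ 2) (fun _ _ => sq_nonneg _) (Finset.mem_univ j)
    _ ≤ _ := Finset.single_le_sum (f := fun i => ∑ j, ξ i j ^ 2)
        (fun _ _ => Finset.sum_nonneg fun _ _ => sq_nonneg _) (Finset.mem_univ i)

lemma frobNorm_le_norm {m d : ℕ} (ξ : Mat m d) : frobNorm ξ ≤ (m * d + 1) * ‖ξ‖ := by
  unfold frobNorm
  rw [Real.sqrt_le_left (by positivity)]
  have h : ∀ i j, ξ i j ^ 2 ≤ ‖ξ‖ ^ 2 := by
    intro i j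
    have : ‖ξ i j‖ ≤ ‖ξ‖ := (norm_le_pi_norm (ξ i) j).trans (norm_le_pi_norm ξ i)
    rw [← sq_abs, ← Real.norm_eq_abs]
    gcongr
  calc ∑ i, ∑ j, ξ i j ^ 2 ≤ ∑ i : Fin m, ∑ j : Fin d, ‖ξ‖ ^ 2 :=
        Finset.sum_le_sum fun i _ => Finset.sum_le_sum fun j _ => h i j
    _ = (m * d) * ‖ξ‖ ^ 2 := by simp; ring
    _ ≤ _ := by
      rw [mul_pow]
      gcongr
      have : (0:ℝ) ≤ m * d := by positivity
      nlinarith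

/-- From `W ≤ c(ξ) + α` with arbitrary `α`, get a measurable replacement of `α`. -/
lemma measurable_bound {d m : ℕ} (Ω : Set (Euc d))
    (W : Euc d → Mat m d → ℝ≥0∞) (hWm : Measurable (Function.uncurry W))
    (hlsc : ∀ᵐ x ∂volume.restrict Ω, LowerSemicontinuous (W x))
    (U : Set (Mat m d)) (hU : IsOpen U)
    (h : Mat m d → ℝ≥0∞) (hc : Continuous h) (α : Euc d → ℝ≥0∞) (hα : (∫⁻ x in Ω, α x) < ⊤)
    (hWα : ∀ᵐ x ∂volume.restrict Ω, ∀ ξ ∈ U, W x ξ ≤ h ξ + α x) :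
    ∃ S : Euc d → ℝ≥0∞, Measurable S ∧ (∫⁻ x in Ω, S x) < ⊤ ∧
      ∀ᵐ x ∂volume.restrict Ω, ∀ ξ ∈ U, W x ξ ≤ h ξ + S x := by
  obtain ⟨D, hDc, hDd⟩ := TopologicalSpace.exists_countable_dense (Mat m d)
  have hDUc : (D ∩ U).Countable := hDc.mono inter_subset_left
  refine ⟨fun x => ⨆ ξ ∈ D ∩ U, (W x ξ - h ξ), ?_, ?_, ?_⟩
  · refine Measurable.biSup _ hDUc fun ξ _ => ?_
    have : Measurable fun x => W x ξ := hWm.comp (measurable_id.prodMk measurable_const)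
    exact this.sub measurable_const
  · refine lt_of_le_of_lt (lintegral_mono_ae ?_) hα
    filter_upwards [hWα] with x hx
    refine iSup₂_le fun ξ hξ => ?_
    rw [tsub_le_iff_left]
    exact hx ξ hξ.2
  · filter_upwards [hlsc] with x hx ξ hξ
    set S := ⨆ ξ ∈ D ∩ U, (W x ξ - h ξ)
    have hcl : IsClosed {ξ | W x ξ ≤ h ξ + S} := by
      have := hx.isClosed_epigraph
      have hcont : Continuous fun ξ : Mat m d => (ξ, h ξ + S) :=
        continuous_id.prodMk (hc.add continuous_const)
      exact this.preimage hcont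
    have hsub : U ∩ D ⊆ {ξ | W x ξ ≤ h ξ + S} := by
      intro η hη
      have : W x η - h η ≤ S := le_iSup₂ (f := fun ξ (_ : ξ ∈ D ∩ U) => W x ξ - h ξ) η ⟨hη.2, hη.1⟩
      exact tsub_le_iff_left.1 this
    exact (hcl.closure_subset_iff.2 hsub) (hDd.open_subset_closure_inter hU hξ)

lemma continuous_frobNorm {m d : ℕ} : Continuous (frobNorm : Mat m d → ℝ) := by
  unfold frobNorm
  fun_prop

lemma growth_case {d m : ℕ} {Ω : Set (Euc d)} {p : ℝ} (hp1 : 1 ≤ p) {W : Euc d → Mat m d → ℝ≥0∞}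
    (hW : Assumption1 Ω p W) :
    ((d : ℝ) - 1 < p ∧ ∃ θ : ℝ, 0 < θ ∧ ∃ S : Euc d → ℝ≥0∞, Measurable S ∧ (∫⁻ x in Ω, S x) < ⊤ ∧
      ∀ᵐ x ∂volume.restrict Ω, ∀ ξ, ‖ξ‖ < θ → W x ξ ≤ S x) ∨
    (∃ C q : ℝ, 0 < C ∧ p < q ∧ 0 ≤ (1 - ((d : ℝ) - 1) / p) * (q - p) + p ∧
      ∃ S : Euc d → ℝ≥0∞, Measurable S ∧ (∫⁻ x in Ω, S x) < ⊤ ∧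
      ∀ᵐ x ∂volume.restrict Ω, ∀ ξ, W x ξ ≤ ENNReal.ofReal C * ‖ξ‖ₑ ^ q + S x) := by
  obtain ⟨hm, hcl, -, ⟨h3a, h3b⟩, -⟩ := hW
  have hlsc : ∀ᵐ x ∂volume.restrict Ω, LowerSemicontinuous (W x) := hcl.mono fun x hx => hx.2
  have hmd : (0 : ℝ) < m * d + 1 := by positivity
  rcases lt_or_ge ((d : ℝ) - 1) p with hp | hp
  · left
    refine ⟨hp, ?_⟩
    obtain ⟨θ, hθ, hintg⟩ := h3b hp
    obtain ⟨S, hS, hSi, hSb⟩ := measurable_bound Ω W hm hlsc (ball 0 (θ / (m * d + 1))) isOpen_ball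
      (fun _ => 0) continuous_const _ hintg (Eventually.of_forall fun x ξ hξ => by
        rw [zero_add]
        refine le_iSup₂ (f := fun ξ (_ : ξ ∈ {ξ : Mat m d | frobNorm ξ ≤ θ}) => W x ξ) ξ ?_
        have h1 := frobNorm_le_norm ξ
        rw [mem_ball_zero_iff, lt_div_iff₀ hmd] at hξ
        show frobNorm ξ ≤ θ
        linarith)
    refine ⟨θ / (m * d + 1), by positivity, S, hS, hSi, ?_⟩
    filter_upwards [hSb] with x hx ξ hξ
    simpa using hx ξ (by simpa using hξ)
  · right
    obtain ⟨C, q, α, hC, hpq, hq, hαi, hα⟩ := h3a hp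
    have hp0 : 0 < p := by linarith
    have hq0 : 0 < q := by linarith
    obtain ⟨S, hS, hSi, hSb⟩ := measurable_bound Ω W hm hlsc univ isOpen_univ
      (fun ξ => ENNReal.ofReal (C * frobNorm ξ ^ q))
      (ENNReal.continuous_ofReal.comp (continuous_const.mul
        (continuous_frobNorm.rpow_const fun _ => Or.inr hq0.le))) α hαi
      (by filter_upwards [hα] with x hx ξ _ using hx ξ)
    refine ⟨C * (m * d + 1) ^ q, q, by positivity, hpq, ?_, S, hS, hSi, ?_⟩
    · have e : (1 - ((d : ℝ) - 1) / p) * (q - p) + p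
          = (((d : ℝ) - 1) * p - q * ((d : ℝ) - 1 - p)) / p := by
        field_simp; ring
      rw [e]
      apply div_nonneg _ hp0.le
      rcases hp.lt_or_eq with hp' | hp'
      · have := hq hp'
        rw [le_div_iff₀ (by linarith)] at this
        linarith
      · rw [← hp']; simp; positivity
    · filter_upwards [hSb] with x hx ξ
      refine (hx ξ (mem_univ _)).trans ?_
      gcongr
      have h1 : C * frobNorm ξ ^ q ≤ C * (m * d + 1) ^ q * ‖ξ‖ ^ q := by
        rw [mul_assoc, ← Real.mul_rpow hmd.le (norm_nonneg _)]
        gcongr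
        · exact Real.sqrt_nonneg _
        · exact frobNorm_le_norm ξ
      refine (ENNReal.ofReal_le_ofReal h1).trans ?_
      rw [ENNReal.ofReal_mul (by positivity), ← ENNReal.ofReal_rpow_of_nonneg (norm_nonneg _) hq0.le,
        ofReal_norm]

lemma small_ball {d m : ℕ} {Ω : Set (Euc d)} (hΩv : volume Ω < ⊤) {p : ℝ} (hp1 : 1 ≤ p)
    {W : Euc d → Mat m d → ℝ≥0∞} (hW : Assumption1 Ω p W) :
    ∃ θ : ℝ, 0 < θ ∧ ∃ S : Euc d → ℝ≥0∞, Measurable S ∧ (∫⁻ x in Ω, S x) < ⊤ ∧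
      ∀ᵐ x ∂volume.restrict Ω, ∀ ξ, ‖ξ‖ < θ → W x ξ ≤ S x := by
  rcases growth_case hp1 hW with ⟨-, h⟩ | ⟨C, q, hC, hpq, -, S, hS, hSi, hSb⟩
  · exact h
  · refine ⟨1, one_pos, fun x => ENNReal.ofReal C + S x, measurable_const.add hS, ?_, ?_⟩
    · rw [lintegral_add_left measurable_const, lintegral_const, Measure.restrict_apply_univ]
      exact ENNReal.add_lt_top.2 ⟨ENNReal.mul_lt_top ENNReal.ofReal_lt_top hΩv, hSi⟩
    · filter_upwards [hSb] with x hx ξ hξ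
      refine (hx ξ).trans ?_
      gcongr
      refine mul_le_of_le_one_right zero_le ?_
      apply ENNReal.rpow_le_one _ (by linarith)
      rw [← ofReal_norm, ENNReal.ofReal_le_one]
      exact hξ.le

lemma error_term {d m : ℕ} {Ω : Set (Euc d)} (hΩv : volume Ω < ⊤) {p : ℝ} (hp1 : 1 ≤ p)
    {W : Euc d → Mat m d → ℝ≥0∞} (hW : Assumption1 Ω p W) (C0 C1 : ℝ≥0)
    (ε τ : ℕ → ℝ) (hε0 : ∀ n, 0 < ε n) (hε1 : ∀ n, ε n ≤ 1) (hτ0 : ∀ n, 0 < τ n)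
    (hτ : Tendsto τ atTop (𝓝 0)) (Y : ℕ → Euc d → ℝ≥0∞) (hYm : ∀ n, Measurable (Y n))
    (hY1 : ∀ n x, Y n x ≤ C1 * ENNReal.ofReal (ε n ^ (1 - ((d : ℝ) - 1) / p) * τ n))
    (hY2 : ∀ n, (∫⁻ x in Ω, Y n x ^ p) ≤ C1 * ENNReal.ofReal (ε n ^ p * τ n ^ p)) :
    ∃ S : Euc d → ℝ≥0∞, Measurable S ∧ (∫⁻ x in Ω, S x) < ⊤ ∧
      ∃ R : ℕ → Euc d → ℝ≥0∞, (∀ n, Measurable (R n)) ∧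
        Tendsto (fun n => ∫⁻ x in Ω, R n x) atTop (𝓝 0) ∧
        ∀ᶠ n in atTop, ∀ᵐ x ∂volume.restrict Ω, ∀ ζ : Mat m d,
          ‖ζ‖ₑ ≤ C0 * (ENNReal.ofReal (τ n) + Y n x) → W x ζ ≤ S x + R n x := by
  have hp0 : 0 < p := by linarith
  have hτE : Tendsto (fun n => ENNReal.ofReal (τ n)) atTop (𝓝 0) := by
    simpa [Function.comp_def] using (ENNReal.continuous_ofReal.tendsto 0).comp hτ
  rcases growth_case hp1 hW with ⟨hpd, θ, hθ, S, hS, hSi, hSb⟩ | ⟨C, q, hC, hpq, hexp, S, hS, hSi, hSb⟩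
  · refine ⟨S, hS, hSi, fun _ _ => 0, fun _ => measurable_const, by simp, ?_⟩
    have ha : 0 ≤ 1 - ((d : ℝ) - 1) / p := by
      rw [sub_nonneg, div_le_one hp0]; exact hpd.le
    have hlim : Tendsto (fun n => (C0 : ℝ≥0∞) * (ENNReal.ofReal (τ n) + C1 * ENNReal.ofReal (τ n)))
        atTop (𝓝 (C0 * (0 + C1 * 0))) := by
      apply ENNReal.Tendsto.const_mul _ (Or.inr ENNReal.coe_ne_top)
      apply hτE.add
      exact ENNReal.Tendsto.const_mul hτE (Or.inr ENNReal.coe_ne_top)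
    have hev := hlim.eventually (gt_mem_nhds (show (C0 : ℝ≥0∞) * (0 + C1 * 0) < ENNReal.ofReal θ by
      simpa using hθ))
    filter_upwards [hev] with n hn
    filter_upwards [hSb] with x hx ζ hζ
    rw [add_zero]
    apply hx
    have h2 : ‖ζ‖ₑ < ENNReal.ofReal θ := by
      refine lt_of_le_of_lt (hζ.trans ?_) hn
      gcongr
      refine (hY1 n x).trans ?_
      gcongr
      exact mul_le_of_le_one_left (hτ0 n).le (Real.rpow_le_one (hε0 n).le (hε1 n) ha)
    rw [← ofReal_norm, ENNReal.ofReal_lt_ofReal_iff hθ] at h2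
    exact h2
  · have hq0 : 0 < q := by linarith
    set R : ℕ → Euc d → ℝ≥0∞ := fun n x =>
      ENNReal.ofReal C * (C0 * (ENNReal.ofReal (τ n) + Y n x)) ^ q with hR
    have hRm : ∀ n, Measurable (R n) := fun n =>
      measurable_const.mul ((measurable_const.mul (measurable_const.add (hYm n))).pow_const q)
    refine ⟨S, hS, hSi, R, hRm, ?_, ?_⟩
    ·
      set K : ℝ≥0∞ := ENNReal.ofReal C * ((C0 : ℝ≥0∞) ^ q * (2 ^ (q - 1) *
        (volume Ω + (C1 : ℝ≥0∞) ^ (q - p) * C1))) with hK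
      have hKt : K ≠ ⊤ := by
        rw [hK]
        have a1 : (C0 : ℝ≥0∞) ^ q ≠ ⊤ := ENNReal.rpow_ne_top_of_nonneg hq0.le ENNReal.coe_ne_top
        have a2 : (C1 : ℝ≥0∞) ^ (q - p) ≠ ⊤ :=
          ENNReal.rpow_ne_top_of_nonneg (by linarith) ENNReal.coe_ne_top
        have a3 : (2 : ℝ≥0∞) ^ (q - 1) ≠ ⊤ :=
          ENNReal.rpow_ne_top_of_nonneg (by linarith) (by simp)
        finiteness
      have hbd : ∀ n, (∫⁻ x in Ω, R n x) ≤ K * ENNReal.ofReal (τ n) ^ q := by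
        intro n
        have hYq : (∫⁻ x in Ω, Y n x ^ q) ≤
            (C1 : ℝ≥0∞) ^ (q - p) * C1 * ENNReal.ofReal (τ n) ^ q := by
          have e1 : ∀ x, Y n x ^ q ≤
              (C1 * ENNReal.ofReal (ε n ^ (1 - ((d : ℝ) - 1) / p) * τ n)) ^ (q - p) * Y n x ^ p := by
            intro x
            have : Y n x ^ q = Y n x ^ (q - p) * Y n x ^ p := by
              rw [← ENNReal.rpow_add_of_nonneg _ _ (by linarith) hp0.le]; congr 1; ring
            rw [this]
            exact mul_le_mul_left (ENNReal.rpow_le_rpow (hY1 n x) (by linarith)) _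
          refine (lintegral_mono e1).trans ?_
          rw [lintegral_const_mul _ ((hYm n).pow_const p)]
          refine (mul_le_mul_right (hY2 n) _).trans ?_
          have hpos : 0 ≤ ε n ^ (1 - ((d : ℝ) - 1) / p) * τ n :=
            mul_nonneg (Real.rpow_nonneg (hε0 n).le _) (hτ0 n).le
          rw [ENNReal.mul_rpow_of_nonneg _ _ (by linarith : 0 ≤ q - p),
            ENNReal.ofReal_rpow_of_nonneg hpos (by linarith),
            ENNReal.ofReal_rpow_of_nonneg (hτ0 n).le hq0.le, mul_mul_mul_comm,
            ← ENNReal.ofReal_mul (by positivity)]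
          gcongr
          rw [Real.mul_rpow (Real.rpow_nonneg (hε0 n).le _) (hτ0 n).le, mul_mul_mul_comm,
            ← Real.rpow_mul (hε0 n).le, ← Real.rpow_add (hε0 n), ← Real.rpow_add (hτ0 n),
            sub_add_cancel]
          exact mul_le_of_le_one_left (Real.rpow_nonneg (hτ0 n).le _)
            (Real.rpow_le_one (hε0 n).le (hε1 n) hexp)
        simp only [hR]
        have hYn := hYm n
        rw [lintegral_const_mul _ (by fun_prop), hK, mul_assoc]
        gcongr
        simp_rw [ENNReal.mul_rpow_of_nonneg _ _ hq0.le]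
        rw [lintegral_const_mul _ (by fun_prop), mul_assoc]
        gcongr
        calc _ ≤ ∫⁻ x in Ω, 2 ^ (q - 1) * (ENNReal.ofReal (τ n) ^ q + Y n x ^ q) :=
              lintegral_mono fun x => ENNReal.rpow_add_le_mul_rpow_add_rpow _ _ (by linarith)
          _ = 2 ^ (q - 1) * (ENNReal.ofReal (τ n) ^ q * volume Ω + ∫⁻ x in Ω, Y n x ^ q) := by
              rw [lintegral_const_mul _ (by fun_prop),
                lintegral_add_left measurable_const, lintegral_const, Measure.restrict_apply_univ]
          _ ≤ _ := by
              rw [mul_assoc]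
              gcongr
              rw [add_mul, mul_comm (volume Ω)]
              gcongr
      have hlim : Tendsto (fun n => K * ENNReal.ofReal (τ n) ^ q) atTop (𝓝 (K * 0 ^ q)) := by
        apply ENNReal.Tendsto.const_mul _ (Or.inr hKt)
        exact ((ENNReal.continuous_rpow_const (y := q)).tendsto 0).comp hτE
      rw [ENNReal.zero_rpow_of_pos hq0, mul_zero] at hlim
      exact tendsto_of_tendsto_of_tendsto_of_le_of_le tendsto_const_nhds hlim (fun _ => zero_le) hbd
    · refine Eventually.of_forall fun n => ?_
      filter_upwards [hSb] with x hx ζ hζ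
      refine (hx ζ).trans ?_
      rw [add_comm]
      simp only [hR]
      gcongr

def innerDirs {d : ℕ} (Ω : Set (Euc d)) (x : Euc d) : Set (Euc d) :=
  {e | ∃ r : ℝ, 0 < r ∧ ∀ z ∈ closure Ω, dist z x < r → ∀ ε : ℝ, 0 < ε → ε < r →
    ∀ y : Euc d, ‖y‖ < r → z + ε • (e + y) ∈ Ω}

lemma convex_innerDirs {d : ℕ} (Ω : Set (Euc d)) (x : Euc d) : Convex ℝ (innerDirs Ω x) := by
  rintro e₁ ⟨r₁, hr₁, h₁⟩ e₂ ⟨r₂, hr₂, h₂⟩ a b ha hb hab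
  rcases ha.eq_or_lt with rfl | ha
  · have : b = 1 := by linarith
    subst this
    simpa using ⟨r₂, hr₂, h₂⟩
  rcases hb.eq_or_lt with rfl | hb
  · have : a = 1 := by linarith
    subst this
    simpa using ⟨r₁, hr₁, h₁⟩
  set r₀ := min r₁ r₂
  have hr₀ : 0 < r₀ := lt_min hr₁ hr₂
  have hD : 0 < ‖e₁‖ + r₀ + 1 := by positivity
  refine ⟨min (r₀ / 2) ((r₀ / 2) / (‖e₁‖ + r₀ + 1)), by positivity, ?_⟩
  intro z hz hzx ε hε hεr y hy
  rw [lt_min_iff] at hzx hεr hy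
  rw [lt_div_iff₀ hD] at hεr
  have hy1 : ‖y‖ < r₁ := by have := min_le_left r₁ r₂; linarith [hy.1]
  have hy2 : ‖y‖ < r₂ := by have := min_le_right r₁ r₂; linarith [hy.1]
  have m1 : z + (ε * a) • (e₁ + y) ∈ Ω := by
    apply h₁ z hz _ _ (by positivity) _ y hy1
    · have := min_le_left r₁ r₂; linarith [hzx.1]
    · have := min_le_left r₁ r₂; nlinarith [hεr.1]
  have m2 : (z + (ε * a) • (e₁ + y)) + (ε * b) • (e₂ + y) ∈ Ω := by
    apply h₂ _ (subset_closure m1) _ _ (by positivity) _ y hy2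
    · have h3 : dist (z + (ε * a) • (e₁ + y)) z ≤ ε * (‖e₁‖ + r₀ + 1) := by
        rw [dist_eq_norm, add_sub_cancel_left, norm_smul, Real.norm_of_nonneg (by positivity)]
        have := norm_add_le e₁ y
        have : ‖e₁ + y‖ ≤ ‖e₁‖ + r₀ + 1 := by linarith [hy.1]
        have h4 : ε * a ≤ ε := by nlinarith
        exact mul_le_mul h4 this (norm_nonneg _) hε.le
      have := dist_triangle (z + (ε * a) • (e₁ + y)) z x
      have := min_le_right r₁ r₂
      linarith [hzx.1, hεr.2]
    · have := min_le_right r₁ r₂; nlinarith [hεr.1]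
  convert m2 using 1
  have : ε • (a • e₁ + b • e₂ + y) = (ε * a) • (e₁ + y) + (ε * b) • (e₂ + y) := by
    have hy' : y = a • y + b • y := by rw [← add_smul, hab, one_smul]
    conv_lhs => rw [hy']
    simp only [smul_add, mul_smul]
    abel
  rw [this, add_assoc]

lemma innerDirs_nonempty {d : ℕ} {Ω : Set (Euc d)} (hΩo : IsOpen Ω) (hΩl : HasLipschitzBoundary Ω)
    (x : Euc d) : ∃ e, e ∈ innerDirs Ω x := by
  by_cases hxc : x ∈ closure Ω
  swap
  · obtain ⟨r, hr, hb⟩ := Metric.isOpen_iff.1 isClosed_closure.isOpen_compl x hxc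
    exact ⟨0, r, hr, fun z hz hzx => absurd hz (hb hzx)⟩
  by_cases hx : x ∈ Ω
  · obtain ⟨R, hR, hb⟩ := Metric.isOpen_iff.1 hΩo x hx
    refine ⟨0, min 1 (R / 2), by positivity, ?_⟩
    intro z hz hzx ε hε hεr y hy
    apply hb
    rw [lt_min_iff] at hzx hεr hy
    rw [zero_add, mem_ball]
    have h1 : dist (z + ε • y) z ≤ ‖y‖ := by
      rw [dist_eq_norm, add_sub_cancel_left, norm_smul, Real.norm_of_nonneg hε.le]
      nlinarith [norm_nonneg y, hεr.1]
    have := dist_triangle (z + ε • y) z x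
    linarith [hy.2, hzx.2]
  have hf : x ∈ frontier Ω := ⟨hxc, by rwa [hΩo.interior_eq]⟩
  obtain ⟨ν, r, L, ψ, hν, hr, hL, hψ, hchart⟩ := hΩl x hf
  have h2L : 0 < 1 + 2 * L := by positivity
  refine ⟨-ν, min (r / 3) (1 / (1 + 2 * L)), by positivity, ?_⟩
  intro z hz hzx ε hε hεr y hy
  rw [lt_min_iff] at hzx hεr hy
  rw [lt_div_iff₀ h2L] at hy
  have hy1 : ‖y‖ < 1 := by nlinarith [norm_nonneg y, hy.2]
  have hψc := hψ.continuous
  have hzψ : ⟪z, ν⟫ ≤ ψ (z - ⟪z, ν⟫ • ν) := by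
    have hcl : IsClosed {w : Euc d | ⟪w, ν⟫ ≤ ψ (w - ⟪w, ν⟫ • ν)} := by
      apply isClosed_le <;> fun_prop
    have hsub : ball x r ∩ Ω ⊆ {w : Euc d | ⟪w, ν⟫ ≤ ψ (w - ⟪w, ν⟫ • ν)} := by
      rintro w ⟨hw, hwΩ⟩
      exact ((hchart w hw).1 hwΩ).le
    have hzb : z ∈ ball x r := by rw [mem_ball]; linarith [hzx.1]
    exact (hcl.closure_subset_iff.2 hsub) (isOpen_ball.inter_closure ⟨hzb, hz⟩)
  have hzh : z + ε • (-ν + y) ∈ ball x r := by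
    have h1 : dist (z + ε • (-ν + y)) z ≤ ε * 2 := by
      rw [dist_eq_norm, add_sub_cancel_left, norm_smul, Real.norm_of_nonneg hε.le]
      have := norm_add_le (-ν) y
      rw [norm_neg, hν] at this
      gcongr; linarith
    have := dist_triangle (z + ε • (-ν + y)) z x
    rw [mem_ball]
    linarith [hεr.1, hzx.1]
  rw [hchart _ hzh]
  have hνν : ⟪ν, ν⟫ = 1 := by rw [real_inner_self_eq_norm_sq, hν]; norm_num
  have e1 : ⟪z + ε • (-ν + y), ν⟫ = ⟪z, ν⟫ + ε * (-1 + ⟪y, ν⟫) := by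
    rw [inner_add_left, real_inner_smul_left, inner_add_left, inner_neg_left, hνν]
  have e2 : z + ε • (-ν + y) - ⟪z + ε • (-ν + y), ν⟫ • ν
      = (z - ⟪z, ν⟫ • ν) + ε • (y - ⟪y, ν⟫ • ν) := by
    rw [e1]; module
  have hyν : |⟪y, ν⟫| ≤ ‖y‖ := by
    have := abs_real_inner_le_norm y ν
    rwa [hν, mul_one] at this
  have h3 : dist (ψ (z - ⟪z, ν⟫ • ν)) (ψ ((z - ⟪z, ν⟫ • ν) + ε • (y - ⟪y, ν⟫ • ν)))
      ≤ L * (ε * (2 * ‖y‖)) := by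
    refine (hψ.dist_le_mul _ _).trans ?_
    rw [Real.coe_toNNReal _ hL, dist_self_add_right, norm_smul, Real.norm_of_nonneg hε.le]
    gcongr
    refine (norm_sub_le _ _).trans ?_
    rw [norm_smul, hν, Real.norm_eq_abs]
    linarith
  rw [e2, e1]
  rw [Real.dist_eq] at h3
  have h4 := (abs_le.1 h3).2
  have h5 := (abs_le.1 hyν).2
  nlinarith [mul_lt_mul_of_pos_left hy.2 hε, mul_le_mul_of_nonneg_left h5 hε.le]

lemma exists_inner_field {d : ℕ} {Ω : Set (Euc d)} (hΩo : IsOpen Ω) (hΩb : Bornology.IsBounded Ω)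
    (hΩl : HasLipschitzBoundary Ω) :
    ∃ (X : Euc d → Euc d) (CX r : ℝ), ContDiff ℝ (⊤ : ℕ∞) X ∧ (∀ x, ‖fderiv ℝ X x‖ ≤ CX) ∧
      (∀ x, ‖X x‖ ≤ 1 / 2) ∧ 0 < r ∧ r ≤ 1 / 2 ∧
      ∀ z ∈ closure Ω, ∀ x, dist x z < r → ∀ ε : ℝ, 0 < ε → ε < r → ∀ y : Euc d, ‖y‖ < r →
        z + ε • (X x + y) ∈ Ω := by
  have hloc : ∀ x : Euc d, ∃ c : Euc d, ∀ᶠ y in 𝓝 x, c ∈ innerDirs Ω y := by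
    intro x
    obtain ⟨e, r, hr, he⟩ := innerDirs_nonempty hΩo hΩl x
    refine ⟨e, ?_⟩
    filter_upwards [ball_mem_nhds x (half_pos hr)] with y hy
    refine ⟨r / 2, half_pos hr, fun z hz hzy ε hε hεr w hw => he z hz ?_ ε hε (by linarith) w
      (by linarith)⟩
    have := dist_triangle z y x
    rw [mem_ball] at hy
    linarith
  obtain ⟨X0, hX0⟩ := exists_contMDiffMap_forall_mem_convex_of_local_const (n := ((⊤ : ℕ∞)))
    (modelWithCornersSelf ℝ (Euc d)) (convex_innerDirs Ω) hloc
  have hX0s : ContDiff ℝ (⊤ : ℕ∞) X0 := X0.contMDiff.contDiff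
  have hK : IsCompact (closure Ω) := hΩb.isCompact_closure
  have hunif : ∃ r : ℝ, 0 < r ∧ ∀ z ∈ closure Ω, z ∈ closure Ω → ∀ x, dist x z < r →
      ∀ ε : ℝ, 0 < ε → ε < r → ∀ y : Euc d, ‖y‖ < r → z + ε • (X0 x + y) ∈ Ω := by
    refine hK.induction_on (p := fun s => ∃ r : ℝ, 0 < r ∧ ∀ z ∈ s, z ∈ closure Ω → ∀ x, dist x z < r →
      ∀ ε : ℝ, 0 < ε → ε < r → ∀ y : Euc d, ‖y‖ < r → z + ε • (X0 x + y) ∈ Ω) ?_ ?_ ?_ ?_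
    · exact ⟨1, one_pos, by simp⟩
    · rintro s t hst ⟨r, hr, h⟩
      exact ⟨r, hr, fun z hz => h z (hst hz)⟩
    · rintro s t ⟨r, hr, h⟩ ⟨r', hr', h'⟩
      refine ⟨min r r', lt_min hr hr', ?_⟩
      rintro z (hz | hz) hzc x hx ε hε hεr y hy
      · rw [lt_min_iff] at hx hεr hy
        exact h z hz hzc x hx.1 ε hε hεr.1 y hy.1
      · rw [lt_min_iff] at hx hεr hy
        exact h' z hz hzc x hx.2 ε hε hεr.2 y hy.2
    · intro x _
      obtain ⟨r, hr, hx⟩ := hX0 x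
      obtain ⟨ρ, hρ, hXρ⟩ := Metric.continuous_iff.1 hX0s.continuous x (r / 2) (half_pos hr)
      refine ⟨ball x (min ρ r / 2), mem_nhdsWithin_of_mem_nhds (ball_mem_nhds _ (by positivity)),
        min ρ r / 2, by positivity, ?_⟩
      intro z hz hzc x' hx' ε hε hεr y hy
      rw [mem_ball] at hz
      have h1 := min_le_left ρ r
      have h2 := min_le_right ρ r
      have h3 := dist_triangle x' z x
      have h4 := hXρ x' (by linarith)
      have := hx z hzc (by linarith) ε hε (by linarith) (X0 x' - X0 x + y) (by
        refine (norm_add_le _ _).trans_lt ?_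
        rw [dist_eq_norm] at h4
        linarith)
      convert this using 3
      abel
  obtain ⟨r, hr, hX⟩ := hunif
  obtain ⟨R, hR0, hR⟩ := hΩb.closure.subset_ball_lt 0 0
  let χ : ContDiffBump (0 : Euc d) := ⟨R + 1, R + 2, by linarith, by linarith⟩
  let X1 : Euc d → Euc d := fun x => χ x • X0 x
  have hX1s : ContDiff ℝ (⊤ : ℕ∞) X1 := χ.contDiff.smul hX0s
  have hX1c : HasCompactSupport X1 := χ.hasCompactSupport.smul_right
  obtain ⟨B, hB⟩ := hX1c.exists_bound_of_continuous hX1s.continuous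
  have hB0 : 0 ≤ B := (norm_nonneg _).trans (hB 0)
  obtain ⟨B', hB'⟩ := (hX1c.fderiv (𝕜 := ℝ)).exists_bound_of_continuous
    (hX1s.continuous_fderiv (by simp))
  set c : ℝ := 1 / (2 * (B + 1)) with hc
  have hc0 : 0 < c := by positivity
  have hc1 : c ≤ 1 := by
    rw [hc, div_le_one (by positivity)]; linarith
  refine ⟨fun x => c • X1 x, c * B', c * min r (1 / 2), hX1s.const_smul c, ?_, ?_, by positivity, ?_, ?_⟩
  · intro x
    have : fderiv ℝ (fun x => c • X1 x) x = c • fderiv ℝ X1 x :=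
      fderiv_const_smul (hX1s.differentiable (by simp) x) c
    rw [this, norm_smul, Real.norm_of_nonneg hc0.le]
    gcongr
    exact hB' x
  · intro x
    rw [norm_smul, Real.norm_of_nonneg hc0.le, hc]
    rw [div_mul_eq_mul_div, div_le_div_iff₀ (by positivity) (by norm_num)]
    linarith [hB x]
  · have := min_le_right r (1 / 2)
    nlinarith
  · intro z hz x hx ε hε hεr y hy
    have hm0 : 0 < min r (1 / 2) := by positivity
    have hcm : c * min r (1 / 2) ≤ min r (1 / 2) := by nlinarith
    have h1 := min_le_left r (1 / 2)
    have h2 := min_le_right r (1 / 2)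
    have hχ : χ x = 1 := by
      apply χ.one_of_mem_closedBall
      have hzR := hR hz
      rw [mem_ball] at hzR
      have := dist_triangle x z 0
      rw [mem_closedBall]
      show dist x 0 ≤ R + 1
      linarith
    have hX1x : X1 x = X0 x := by simp [X1, hχ]
    have := hX z hz hz x (by linarith) (ε * c) (by positivity) (by nlinarith) (c⁻¹ • y) (by
      rw [norm_smul, norm_inv, Real.norm_of_nonneg hc0.le, inv_mul_lt_iff₀ hc0]
      nlinarith)
    convert this using 2
    show ε • (c • X1 x + y) = (ε * c) • (X0 x + c⁻¹ • y)
    rw [hX1x, mul_smul, smul_add, smul_add, smul_add, smul_smul c c⁻¹, mul_inv_cancel₀ hc0.ne', one_smul]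

lemma lintegral_measure_closedBall (μ : Measure ℝ) [IsFiniteMeasure μ] (R : ℝ) :
    ∫⁻ s, μ (closedBall s R) = ENNReal.ofReal (2 * R) * μ univ := by
  have hS : MeasurableSet {q : ℝ × ℝ | dist q.2 q.1 ≤ R} :=
    (isClosed_le (continuous_snd.dist continuous_fst) continuous_const).measurableSet
  have h1 := Measure.prod_apply (μ := (volume : Measure ℝ)) (ν := μ) hS
  have h2 := Measure.prod_apply_symm (μ := (volume : Measure ℝ)) (ν := μ) hS
  rw [h1] at h2
  have e1 : ∀ s : ℝ, Prod.mk s ⁻¹' {q : ℝ × ℝ | dist q.2 q.1 ≤ R} = closedBall s R := by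
    intro s; ext t; simp
  have e2 : ∀ t : ℝ, (fun s => (s, t)) ⁻¹' {q : ℝ × ℝ | dist q.2 q.1 ≤ R} = closedBall t R := by
    intro t; ext s; simp [dist_comm]
  simp only [e1, e2, Real.volume_closedBall, lintegral_const] at h2
  exact h2

lemma exists_T (μ : Measure ℝ) [IsFiniteMeasure μ] {r0 ε c : ℝ} (hr0 : 0 < r0) (hε : 0 < ε)
    (hc : 0 < c) (hμ : μ univ ≤ ENNReal.ofReal c) :
    ∃ T : ℝ → ℝ, ContDiff ℝ (⊤ : ℕ∞) T ∧ (∀ s, |T s - s| ≤ r0) ∧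
      (∀ s, 0 ≤ deriv T s ∧ deriv T s ≤ 1) ∧
      ∀ s, deriv T s ≠ 0 → μ (closedBall s ε) ≤ ENNReal.ofReal (8 / r0 * ε * c) := by
  have hmeas : Measurable fun s => μ (closedBall s (2 * ε)) := by
    have hS : MeasurableSet {q : ℝ × ℝ | dist q.2 q.1 ≤ 2 * ε} :=
      (isClosed_le (continuous_snd.dist continuous_fst) continuous_const).measurableSet
    have := measurable_measure_prodMk_left (ν := μ) hS
    exact this
  set bad : Set ℝ := {s | ENNReal.ofReal (8 / r0 * ε * c) ≤ μ (closedBall s (2 * ε))} with hbad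
  have hbm : volume bad < ENNReal.ofReal r0 := by
    have h1 := mul_meas_ge_le_lintegral (μ := (volume : Measure ℝ)) hmeas (ENNReal.ofReal (8 / r0 * ε * c))
    rw [lintegral_measure_closedBall] at h1
    have h2 : ENNReal.ofReal (8 / r0 * ε * c) * volume bad ≤
        ENNReal.ofReal (8 / r0 * ε * c) * ENNReal.ofReal (r0 / 2) := by
      refine h1.trans ((mul_le_mul_right hμ _).trans ?_)
      rw [← ENNReal.ofReal_mul (by positivity), ← ENNReal.ofReal_mul (by positivity)]
      apply ENNReal.ofReal_le_ofReal
      field_simp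
      norm_num
    rw [ENNReal.mul_le_mul_iff_right (by simp; positivity) ENNReal.ofReal_ne_top] at h2
    refine lt_of_le_of_lt h2 ?_
    rw [ENNReal.ofReal_lt_ofReal_iff hr0]; linarith
  set O : Set ℝ := thickening ε badᶜ with hO
  have hOb : Oᶜ ⊆ bad := by
    intro s hs
    by_contra h
    exact hs (self_subset_thickening hε _ h)
  obtain ⟨V, hVs, hVo, hVm⟩ := Set.exists_isOpen_lt_of_lt (μ := (volume : Measure ℝ)) Oᶜ
    (ENNReal.ofReal r0) ((measure_mono hOb).trans_lt hbm)
  obtain ⟨f, hf0, hf1, hf01⟩ := exists_contMDiffMap_zero_one_of_isClosed (n := (⊤ : ℕ∞)) (modelWithCornersSelf ℝ ℝ)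
    (s := Vᶜ) (t := Oᶜ) hVo.isClosed_compl isOpen_thickening.isClosed_compl
    (by rw [disjoint_compl_left_iff_subset]; exact hVs)
  have hfs : ContDiff ℝ (⊤ : ℕ∞) f := f.contMDiff.contDiff
  have hfc : Continuous f := hfs.continuous
  have hd : ∀ s, HasDerivAt (fun s => s - ∫ x in (0:ℝ)..s, f x) (1 - f s) s := fun s =>
    (hasDerivAt_id s).sub (intervalIntegral.integral_hasDerivAt_right
      (hfc.intervalIntegrable _ _) (hfc.stronglyMeasurableAtFilter _ _) hfc.continuousAt)
  have hde : deriv (fun s => s - ∫ x in (0:ℝ)..s, f x) = fun s => 1 - f s :=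
    funext fun s => (hd s).deriv
  refine ⟨fun s => s - ∫ x in (0:ℝ)..s, f x, ?_, ?_, ?_, ?_⟩
  · rw [contDiff_infty_iff_deriv]
    refine ⟨fun s => (hd s).differentiableAt, ?_⟩
    rw [hde]
    exact contDiff_const.sub hfs
  · intro s
    rw [show s - (∫ x in (0:ℝ)..s, f x) - s = - ∫ x in (0:ℝ)..s, f x by ring, abs_neg]
    rw [← Real.norm_eq_abs]
    refine intervalIntegral.norm_integral_le_integral_norm_uIoc.trans ?_
    have hle : ∀ x, ‖f x‖ ≤ V.indicator (fun _ => (1:ℝ)) x := by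
      intro x
      by_cases hx : x ∈ V
      · simp only [hx, indicator_of_mem]
        rw [Real.norm_of_nonneg (hf01 x).1]; exact (hf01 x).2
      · simp only [hx, not_false_eq_true, indicator_of_notMem]
        have := hf0 hx
        simp at this
        simp [this]
    have hVt : volume V ≠ ⊤ := (hVm.trans ENNReal.ofReal_lt_top).ne
    have hintg : Integrable (V.indicator (fun _ => (1:ℝ))) volume :=
      (integrable_indicator_iff hVo.measurableSet).2 (integrableOn_const hVt)
    calc _ ≤ ∫ x in Set.uIoc 0 s, V.indicator (fun _ => (1:ℝ)) x :=
          setIntegral_mono (by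
            rw [← intervalIntegrable_iff]
            exact (hfc.norm.intervalIntegrable 0 s)) hintg.integrableOn hle
      _ ≤ ∫ x, V.indicator (fun _ => (1:ℝ)) x :=
          setIntegral_le_integral hintg (Eventually.of_forall fun x => indicator_nonneg (by simp) x)
      _ ≤ r0 := by
          rw [integral_indicator hVo.measurableSet]
          simp only [integral_const, MeasurableSet.univ, measureReal_restrict_apply, univ_inter, smul_eq_mul, mul_one]
          exact ENNReal.toReal_le_of_le_ofReal hr0.le hVm.le
  · intro s
    rw [hde]
    have := hf01 s
    exact ⟨by linarith [this.2], by linarith [this.1]⟩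
  · intro s hs
    rw [hde] at hs
    have hsO : s ∈ O := by
      by_contra h
      have := hf1 h
      simp at this
      simp [this] at hs
    obtain ⟨s', hs', hd'⟩ := mem_thickening_iff.1 hsO
    have h3 : μ (closedBall s' (2 * ε)) < ENNReal.ofReal (8 / r0 * ε * c) := by
      simpa [hbad] using hs'
    refine (measure_mono ?_).trans h3.le
    apply closedBall_subset_closedBall'
    linarith

lemma exists_moll (d : ℕ) {r1 : ℝ} (hr1 : 0 < r1) : ∃ κ : ℝ≥0, ∀ ε : ℝ, 0 < ε →
    ∃ ρ : Euc d → ℝ, ContDiff ℝ (⊤ : ℕ∞) ρ ∧ (∀ y, 0 ≤ ρ y) ∧ (∀ y, ε * r1 ≤ ‖y‖ → ρ y = 0) ∧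
      HasCompactSupport ρ ∧ Integrable ρ ∧ (∫ y, ρ y) = 1 ∧ ∀ y, ρ y ≤ κ * (ε ^ d)⁻¹ := by
  have hβ : 0 < volume.real (ball (0 : Euc d) 1) :=
    ENNReal.toReal_pos (measure_ball_pos _ _ one_pos).ne' measure_ball_lt_top.ne
  refine ⟨Real.toNNReal ((r1 / 2) ^ d * volume.real (ball (0 : Euc d) 1))⁻¹, fun ε hε => ?_⟩
  let b : ContDiffBump (0 : Euc d) := ⟨ε * r1 / 2, ε * r1, by positivity, by
    have : 0 < ε * r1 := by positivity
    linarith⟩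
  refine ⟨b.normed volume, b.contDiff_normed, fun y => b.nonneg_normed y, ?_,
    b.hasCompactSupport_normed, b.integrable_normed, b.integral_normed, ?_⟩
  · intro y hy
    have : y ∉ Function.support (b.normed volume) := by
      rw [b.support_normed_eq]
      simp only [mem_ball, dist_zero_right, not_lt]
      exact hy
    simpa using this
  · intro y
    refine (b.normed_le_div_measure_closedBall_rIn volume y).trans ?_
    have : volume.real (closedBall (0 : Euc d) b.rIn) = (ε * r1 / 2) ^ d * volume.real (ball (0 : Euc d) 1) := by
      rw [measureReal_def, Measure.addHaar_closedBall _ _ b.rIn_pos.le, ENNReal.toReal_mul,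
        ENNReal.toReal_ofReal (by have := b.rIn_pos; positivity)]
      simp [b, measureReal_def]
    rw [this, Real.coe_toNNReal _ (by positivity), ← mul_inv, one_div]
    apply le_of_eq
    congr 1
    rw [show ε * r1 / 2 = (r1 / 2) * ε by ring, mul_pow]; ring

lemma tendsto_integral_bdd {E : Type*} [NormedAddCommGroup E] [NormedSpace ℝ E]
    {α : Type*} [MeasurableSpace α] {μ : Measure α} {h : α → ℝ} (hm : AEStronglyMeasurable h μ) {B : ℝ}
    (hB : ∀ x, |h x| ≤ B) {f : ℕ → α → E} {g : α → E} (hf : ∀ n, Integrable (f n) μ)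
    (hg : Integrable g μ) (hlim : Tendsto (fun n => ∫⁻ x, ‖f n x - g x‖ₑ ∂μ) atTop (𝓝 0)) :
    Tendsto (fun n => ∫ x, h x • f n x ∂μ) atTop (𝓝 (∫ x, h x • g x ∂μ)) := by
  have hi : ∀ u : α → E, Integrable u μ → Integrable (fun x => h x • u x) μ := fun u hu =>
    hu.bdd_smul B hm (Eventually.of_forall hB)
  apply tendsto_integral_of_L1 _ (hi g hg).aestronglyMeasurable (Eventually.of_forall fun n => hi _ (hf n))
  have : Tendsto (fun n => ENNReal.ofReal B * ∫⁻ x, ‖f n x - g x‖ₑ ∂μ) atTop (𝓝 (ENNReal.ofReal B * 0)) :=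
    ENNReal.Tendsto.const_mul hlim (Or.inr ENNReal.ofReal_ne_top)
  rw [mul_zero] at this
  refine tendsto_of_tendsto_of_tendsto_of_le_of_le tendsto_const_nhds this (fun _ => zero_le) fun n => ?_
  dsimp only
  rw [← lintegral_const_mul' _ _ ENNReal.ofReal_ne_top]
  apply lintegral_mono
  intro x
  dsimp only
  rw [← smul_sub, enorm_smul]
  gcongr
  rw [← ofReal_norm]
  exact ENNReal.ofReal_le_ofReal (hB x)

lemma conv_left {d m : ℕ} {ρ : Euc d → ℝ} (hρ : ContDiff ℝ (⊤ : ℕ∞) ρ) (hρc : HasCompactSupport ρ)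
    {g : Euc d → Euc m} (hg : Integrable g) :
    ContDiff ℝ (⊤ : ℕ∞) (fun y => ∫ z, ρ (y - z) • g z) ∧
    ∀ y e, fderiv ℝ (fun y => ∫ z, ρ (y - z) • g z) y e = ∫ z, (fderiv ℝ ρ (y - z) e) • g z := by
  have e1 : (fun y => ∫ z, ρ (y - z) • g z) =
      MeasureTheory.convolution ρ g (ContinuousLinearMap.lsmul ℝ ℝ) volume := by
    funext y
    rw [convolution_eq_swap]
    rfl
  rw [e1]
  refine ⟨hρc.contDiff_convolution_left _ hρ hg.locallyIntegrable, fun y e => ?_⟩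
  have hρ1 : ContDiff ℝ 1 ρ := hρ.of_le (by exact_mod_cast le_top)
  rw [(hρc.hasFDerivAt_convolution_left (ContinuousLinearMap.lsmul ℝ ℝ) hρ1 hg.locallyIntegrable y).fderiv]
  rw [convolution_eq_swap, ContinuousLinearMap.integral_apply]
  · rfl
  · have := (HasCompactSupport.convolutionExists_left ((ContinuousLinearMap.lsmul ℝ ℝ).precompL (Euc d))
      (hρc.fderiv ℝ) (hρ1.continuous_fderiv one_ne_zero) hg.locallyIntegrable y).integrable_swap
    exact this

lemma conv_right {d m : ℕ} {ρ : Euc d → ℝ} (hρ : Continuous ρ) 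
    {g : Euc d → Euc m} (hg : ContDiff ℝ 1 g) (hgc : HasCompactSupport g) :
    ∀ y e, fderiv ℝ (fun y => ∫ z, ρ (y - z) • g z) y e = ∫ z, ρ (y - z) • fderiv ℝ g z e := by
  have e1 : (fun y => ∫ z, ρ (y - z) • g z) =
      MeasureTheory.convolution ρ g (ContinuousLinearMap.lsmul ℝ ℝ) volume := by
    funext y
    rw [convolution_eq_swap]
    rfl
  rw [e1]
  intro y e
  rw [(hgc.hasFDerivAt_convolution_right (ContinuousLinearMap.lsmul ℝ ℝ) hρ.locallyIntegrable hg y).fderiv]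
  rw [convolution_eq_swap, ContinuousLinearMap.integral_apply]
  · rfl
  · have := (HasCompactSupport.convolutionExists_right ((ContinuousLinearMap.lsmul ℝ ℝ).precompR (Euc d))
      (hgc.fderiv ℝ) (hρ.locallyIntegrable (μ := volume)) (hg.continuous_fderiv one_ne_zero) y).integrable_swap
    exact this

lemma smoothJac_conv {d m : ℕ} {Ω : Set (Euc d)} (hΩ : MeasurableSet Ω) {ρ : Euc d → ℝ}
    (hρ : ContDiff ℝ (⊤ : ℕ∞) ρ) (hρc : HasCompactSupport ρ)
    {v : Euc d → Euc m} {Dv : Euc d → Mat m d} (hv : IntegrableOn v Ω) (hDv : IntegrableOn Dv Ω)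
    {w : ℕ → Euc d → Euc m} (hw : ∀ n, IsCcSmooth Ω (w n))
    (h1 : Tendsto (fun n => ∫⁻ x in Ω, ‖w n x - v x‖ₑ) atTop (𝓝 0))
    (h2 : Tendsto (fun n => ∫⁻ x in Ω, ‖smoothJac (w n) x - Dv x‖ₑ) atTop (𝓝 0)) :
    ContDiff ℝ (⊤ : ℕ∞) (fun y => ∫ z in Ω, ρ (y - z) • v z) ∧
    ∀ y, smoothJac (fun y => ∫ z in Ω, ρ (y - z) • v z) y = ∫ z in Ω, ρ (y - z) • Dv z := by
  have hind : ∀ {E : Type} [NormedAddCommGroup E] [NormedSpace ℝ E] (h : Euc d → ℝ) (u : Euc d → E),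
      ∫ z in Ω, h z • u z = ∫ z, h z • Ω.indicator u z := by
    intro E _ _ h u
    rw [← integral_indicator hΩ]
    congr 1; funext z
    by_cases hz : z ∈ Ω <;> simp [hz]
  have e0 : (fun y => ∫ z in Ω, ρ (y - z) • v z) = fun y => ∫ z, ρ (y - z) • Ω.indicator v z :=
    funext fun y => hind _ _
  have hvi : Integrable (Ω.indicator v) := (integrable_indicator_iff hΩ).2 hv
  obtain ⟨c1, c2⟩ := conv_left hρ hρc hvi
  rw [e0]
  refine ⟨c1, fun y => ?_⟩
  have hρ1 : ContDiff ℝ 1 ρ := hρ.of_le (by exact_mod_cast le_top)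
  obtain ⟨B, hB⟩ := hρ.continuous.bounded_above_of_compact_support hρc
  have hD : ∀ u : Euc d → Mat m d, IntegrableOn u Ω → IntegrableOn (fun z => ρ (y - z) • u z) Ω :=
    fun u hu => hu.bdd_smul B (hρ.continuous.comp (continuous_const.sub continuous_id)).aestronglyMeasurable
      (Eventually.of_forall fun z => hB _)
  obtain ⟨B', hB'⟩ := (hρ1.continuous_fderiv one_ne_zero).bounded_above_of_compact_support (hρc.fderiv ℝ)
  have hw1 : ∀ n, ContDiff ℝ 1 (w n) := fun n => (hw n).1.of_le (by exact_mod_cast le_top)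
  have hwi : ∀ n, Integrable (w n) := fun n => (hw n).1.continuous.integrable_of_hasCompactSupport (hw n).2.1
  have hwz : ∀ n, ∀ z, z ∉ Ω → fderiv ℝ (w n) z = 0 := by
    intro n z hz
    by_contra hne
    exact hz ((hw n).2.2 (support_fderiv_subset ℝ hne))
  have hwz0 : ∀ n, ∀ z, z ∉ Ω → w n z = 0 := by
    intro n z hz
    by_contra hne
    exact hz ((hw n).2.2 (subset_tsupport _ hne))
  have hJc : ∀ n, Continuous (smoothJac (w n)) := by
    intro n
    have := (hw1 n).continuous_fderiv one_ne_zero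
    unfold smoothJac
    fun_prop
  have hJs : ∀ n, ∀ z, z ∉ Ω → smoothJac (w n) z = 0 := by
    intro n z hz
    funext i j
    simp [smoothJac, hwz n z hz]
  have hJi : ∀ n, Integrable (smoothJac (w n)) := by
    intro n
    apply (hJc n).integrable_of_hasCompactSupport
    refine ((hw n).2.1.fderiv ℝ).mono ?_
    intro z hz h
    apply hz
    funext i j
    simp [smoothJac, h]
  funext i j
  set e : Euc d := EuclideanSpace.single j 1
  have key : ∀ n, ∫ z in Ω, (fderiv ℝ ρ (y - z) e) • w n z = ∫ z in Ω, ρ (y - z) • fderiv ℝ (w n) z e := by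
    intro n
    have k1 := (conv_left hρ hρc (hwi n)).2 y e
    have k2 := conv_right hρ.continuous (hw1 n) (hw n).2.1 y e
    rw [k1] at k2
    rw [setIntegral_eq_integral_of_forall_compl_eq_zero, setIntegral_eq_integral_of_forall_compl_eq_zero, k2]
    · intro z hz; simp [hwz n z hz]
    · intro z hz; simp [hwz0 n z hz]
  have l1 : Tendsto (fun n => ∫ z in Ω, (fderiv ℝ ρ (y - z) e) • w n z) atTop
      (𝓝 (∫ z in Ω, (fderiv ℝ ρ (y - z) e) • v z)) := by
    refine tendsto_integral_bdd (B := B' * ‖e‖) ?_ ?_ (fun n => (hwi n).integrableOn) hv h1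
    · have := hρ1.continuous_fderiv one_ne_zero
      apply Continuous.aestronglyMeasurable
      fun_prop
    · intro z
      rw [← Real.norm_eq_abs]
      refine (ContinuousLinearMap.le_opNorm _ _).trans ?_
      gcongr
      exact hB' _
  have l2 : Tendsto (fun n => ∫ z in Ω, ρ (y - z) • smoothJac (w n) z) atTop
      (𝓝 (∫ z in Ω, ρ (y - z) • Dv z)) := by
    refine tendsto_integral_bdd (B := B) ?_ ?_ (fun n => (hJi n).integrableOn) hDv h2
    · apply Continuous.aestronglyMeasurable
      have := hρ.continuous
      fun_prop
    · intro z; exact hB _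
  have heval : ∀ u : Euc d → Mat m d, IntegrableOn u Ω → 
      (∫ z in Ω, ρ (y - z) • u z) i j = ∫ z in Ω, ρ (y - z) * u z i j := by
    intro u hu
    have h3 := hD u hu
    let L : Mat m d →L[ℝ] ℝ := (ContinuousLinearMap.proj j).comp (ContinuousLinearMap.proj (R := ℝ) (φ := fun _ : Fin m => Fin d → ℝ) i)
    exact (L.integral_comp_comm h3).symm
  have heval2 : ∀ u : Euc d → Euc m, IntegrableOn u Ω → 
      (∫ z in Ω, u z) i = ∫ z in Ω, u z i := by
    intro u hu
    exact ((EuclideanSpace.proj i : Euc m →L[ℝ] ℝ).integral_comp_comm hu).symm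
  have l3 : Tendsto (fun n => (∫ z in Ω, (fderiv ℝ ρ (y - z) e) • w n z) i) atTop
      (𝓝 ((∫ z in Ω, (fderiv ℝ ρ (y - z) e) • v z) i)) :=
    ((EuclideanSpace.proj i : Euc m →L[ℝ] ℝ).continuous.tendsto _).comp l1
  have l4 : Tendsto (fun n => (∫ z in Ω, ρ (y - z) • smoothJac (w n) z) i j) atTop
      (𝓝 ((∫ z in Ω, ρ (y - z) • Dv z) i j)) := ((continuous_apply_apply i j).tendsto _).comp l2
  have l5 : ∀ n, (∫ z in Ω, (fderiv ℝ ρ (y - z) e) • w n z) i = (∫ z in Ω, ρ (y - z) • smoothJac (w n) z) i j := by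
    intro n
    rw [key, heval _ (hJi n).integrableOn, heval2]
    · simp [smoothJac, e]
    · have h6 : IntegrableOn (fun z => fderiv ℝ (w n) z e) Ω := by
        apply Integrable.integrableOn
        apply Continuous.integrable_of_hasCompactSupport
        · have := (hw1 n).continuous_fderiv one_ne_zero
          fun_prop
        · refine ((hw n).2.1.fderiv ℝ).mono ?_
          intro z hz h
          apply hz
          simp [h]
      exact h6.bdd_smul B (hρ.continuous.comp (continuous_const.sub continuous_id)).aestronglyMeasurable
        (Eventually.of_forall fun z => hB _)
  simp_rw [l5] at l3
  have := tendsto_nhds_unique l3 l4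
  rw [← this]
  show (fderiv ℝ (fun y => ∫ z, ρ (y - z) • Ω.indicator v z) y e : Euc m) i = _
  rw [c2, ← hind]

lemma ennreal_rpow_sub_one_mul {N : ℝ≥0∞} (h0 : N ≠ 0) (ht : N ≠ ⊤) (p : ℝ) : N ^ (p - 1) * N = N ^ p := by
  have := ENNReal.rpow_add (p - 1) 1 h0 ht
  rw [ENNReal.rpow_one] at this
  rw [← this]; simp

/-- Averages over closed balls (not normalised by the volume of the unit ball). -/
def avg {d : ℕ} (ε : ℝ) (f : Euc d → ℝ≥0∞) (x : Euc d) : ℝ≥0∞ :=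
  ENNReal.ofReal ((ε ^ d)⁻¹) * ∫⁻ z in closedBall x ε, f z

lemma avg_eq {d : ℕ} (ε : ℝ) (f : Euc d → ℝ≥0∞) (x : Euc d) :
    avg ε f x = ∫⁻ z, ENNReal.ofReal ((ε ^ d)⁻¹) *
      ({q : Euc d × Euc d | dist q.2 q.1 ≤ ε}.indicator (fun q => f q.2) (x, z)) := by
  rw [lintegral_const_mul' _ _ ENNReal.ofReal_ne_top, avg, ← lintegral_indicator measurableSet_closedBall]
  rfl

lemma measurable_avg_aux {d : ℕ} (ε : ℝ) {f : Euc d → ℝ≥0∞} (hf : Measurable f) :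
    Measurable fun q : Euc d × Euc d => ENNReal.ofReal ((ε ^ d)⁻¹) *
      ({q : Euc d × Euc d | dist q.2 q.1 ≤ ε}.indicator (fun q => f q.2) q) := by
  have hS : MeasurableSet {q : Euc d × Euc d | dist q.2 q.1 ≤ ε} :=
    (isClosed_le (continuous_snd.dist continuous_fst) continuous_const).measurableSet
  exact measurable_const.mul ((hf.comp measurable_snd).indicator hS)

lemma measurable_avg {d : ℕ} (ε : ℝ) {f : Euc d → ℝ≥0∞} (hf : Measurable f) :
    Measurable (avg ε f) := by
  have : avg ε f = fun x => ∫⁻ z, ENNReal.ofReal ((ε ^ d)⁻¹) *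
      ({q : Euc d × Euc d | dist q.2 q.1 ≤ ε}.indicator (fun q => f q.2) (x, z)) :=
    funext fun x => avg_eq ε f x
  rw [this]
  exact Measurable.lintegral_prod_right' (measurable_avg_aux ε hf)

lemma ofReal_inv_mul_vol {d : ℕ} {ε : ℝ} (hε : 0 < ε) (z : Euc d) :
    ENNReal.ofReal ((ε ^ d)⁻¹) * volume (closedBall z ε) = volume (ball (0 : Euc d) 1) := by
  rw [Measure.addHaar_closedBall _ _ hε.le, ← mul_assoc, ← ENNReal.ofReal_mul (by positivity)]
  simp only [finrank_euclideanSpace, Fintype.card_fin]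
  rw [inv_mul_cancel₀ (by positivity)]; simp

lemma lintegral_avg {d : ℕ} {ε : ℝ} (hε : 0 < ε) {f : Euc d → ℝ≥0∞} (hf : Measurable f) :
    ∫⁻ x, avg ε f x = volume (ball (0 : Euc d) 1) * ∫⁻ x, f x := by
  simp_rw [avg_eq]
  rw [lintegral_lintegral_swap (measurable_avg_aux ε hf).aemeasurable, ← lintegral_const_mul _ hf]
  congr 1; funext z
  have e : ∀ x : Euc d, {q : Euc d × Euc d | dist q.2 q.1 ≤ ε}.indicator (fun q => f q.2) (x, z)
      = (closedBall z ε).indicator (fun _ => f z) x := by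
    intro x
    simp only [indicator, mem_ofPred_eq, mem_closedBall, dist_comm]
  simp_rw [e]
  rw [lintegral_const_mul' _ _ ENNReal.ofReal_ne_top, lintegral_indicator measurableSet_closedBall,
    setLIntegral_const, mul_comm (f z), ← mul_assoc, ofReal_inv_mul_vol hε]

lemma avg_rpow {d : ℕ} {ε : ℝ} (hε : 0 < ε) {f : Euc d → ℝ≥0∞} (hf : Measurable f) {p : ℝ} (hp : 1 ≤ p)
    (x : Euc d) :
    avg ε f x ^ p ≤ volume (ball (0 : Euc d) 1) ^ (p - 1) * avg ε (fun z => f z ^ p) x := by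
  have hp0 : 0 < p := by linarith
  have h := eLpNorm'_le_eLpNorm'_mul_rpow_measure_univ (μ := volume.restrict (closedBall x ε)) (f := f)
    one_pos hp hf.aestronglyMeasurable
  simp only [eLpNorm', enorm_eq_self, ENNReal.rpow_one, div_one, Measure.restrict_apply_univ] at h
  have h2 := ENNReal.rpow_le_rpow h hp0.le
  rw [ENNReal.mul_rpow_of_nonneg _ _ hp0.le, ← ENNReal.rpow_mul, ← ENNReal.rpow_mul,
    one_div_mul_cancel hp0.ne', ENNReal.rpow_one, sub_mul, one_div_mul_cancel hp0.ne', one_mul] at h2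
  unfold avg
  rw [ENNReal.mul_rpow_of_nonneg _ _ hp0.le]
  set N := ENNReal.ofReal ((ε ^ d)⁻¹) with hN
  have hN0 : N ≠ 0 := by simp [hN]; positivity
  have hNt : N ≠ ⊤ := ENNReal.ofReal_ne_top
  calc N ^ p * (∫⁻ z in closedBall x ε, f z) ^ p
      ≤ N ^ p * ((∫⁻ z in closedBall x ε, f z ^ p) * volume (closedBall x ε) ^ (p - 1)) := by gcongr
    _ = (N * volume (closedBall x ε)) ^ (p - 1) * (N * ∫⁻ z in closedBall x ε, f z ^ p) := by
        rw [ENNReal.mul_rpow_of_nonneg _ _ (by linarith)]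
        rw [← ennreal_rpow_sub_one_mul hN0 hNt p]; ring
    _ = _ := by rw [ofReal_inv_mul_vol hε]

lemma lintegral_avg_rpow {d : ℕ} {ε : ℝ} (hε : 0 < ε) {f : Euc d → ℝ≥0∞} (hf : Measurable f) {p : ℝ}
    (hp : 1 ≤ p) :
    ∫⁻ x, avg ε f x ^ p ≤ volume (ball (0 : Euc d) 1) ^ p * ∫⁻ x, f x ^ p := by
  have hβ0 : volume (ball (0 : Euc d) 1) ≠ 0 := (measure_ball_pos _ _ one_pos).ne'
  have hβt : volume (ball (0 : Euc d) 1) ≠ ⊤ := measure_ball_lt_top.ne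
  calc _ ≤ ∫⁻ x, volume (ball (0 : Euc d) 1) ^ (p - 1) * avg ε (fun z => f z ^ p) x :=
        lintegral_mono fun x => avg_rpow hε hf hp x
    _ = volume (ball (0 : Euc d) 1) ^ (p - 1) * (volume (ball (0 : Euc d) 1) * ∫⁻ x, f x ^ p) := by
        rw [lintegral_const_mul _ (measurable_avg ε (hf.pow_const p)), lintegral_avg hε (hf.pow_const p)]
    _ = _ := by
        rw [← mul_assoc, ennreal_rpow_sub_one_mul hβ0 hβt]

lemma lintegral_kernel_le_avg {d : ℕ} {Ω : Set (Euc d)} (hΩ : MeasurableSet Ω) {ε : ℝ} (hε : 0 < ε) {κ : ℝ≥0}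
    {k : Euc d → ℝ} {x : Euc d} (hk : ∀ z, k z ≤ κ * (ε ^ d)⁻¹) (hk0 : ∀ z, z ∉ closedBall x ε → k z = 0)
    (f : Euc d → ℝ≥0∞) :
    ∫⁻ z in Ω, ENNReal.ofReal (k z) * f z ≤ κ * avg ε (Ω.indicator f) x := by
  rw [← lintegral_indicator hΩ, avg, ← lintegral_indicator measurableSet_closedBall,
    ← mul_assoc, ← lintegral_const_mul' _ _ (ENNReal.mul_ne_top ENNReal.coe_ne_top ENNReal.ofReal_ne_top)]
  apply lintegral_mono
  intro z
  by_cases hz : z ∈ Ω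
  · by_cases hzx : z ∈ closedBall x ε
    · simp only [hz, hzx, indicator_of_mem]
      gcongr
      rw [← ENNReal.ofReal_coe_nnreal, ← ENNReal.ofReal_mul (by positivity)]
      exact ENNReal.ofReal_le_ofReal (hk z)
    · simp [hz, hk0 z hzx]
  · simp [hz]

lemma enorm_kernel_le_avg {d : ℕ} {E : Type*} [NormedAddCommGroup E] [NormedSpace ℝ E]
    {Ω : Set (Euc d)} (hΩ : MeasurableSet Ω) {ε : ℝ} (hε : 0 < ε) {κ : ℝ≥0}
    {k : Euc d → ℝ} {x : Euc d} (hkn : ∀ z, 0 ≤ k z) (hk : ∀ z, k z ≤ κ * (ε ^ d)⁻¹) (hk0 : ∀ z, z ∉ closedBall x ε → k z = 0)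
    (f : Euc d → E) :
    ‖∫ z in Ω, k z • f z‖ₑ ≤ κ * avg ε (Ω.indicator fun z => ‖f z‖ₑ) x := by
  refine le_trans (enorm_integral_le_lintegral_enorm _) (le_trans (le_of_eq ?_) (lintegral_kernel_le_avg hΩ hε hk hk0 _))
  congr 1; funext z
  rw [enorm_smul, ← ofReal_norm, Real.norm_of_nonneg (hkn z)]

/-- The coordinatewise map `x ↦ (T_k(x_k))_k`. -/
def Tmap {d : ℕ} (T : Fin d → ℝ → ℝ) (x : Euc d) : Euc d := WithLp.toLp 2 (fun k => T k (x k))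

/-- The transport map `x ↦ x - ε X(T x)`. -/
def Pmap {d : ℕ} (ε : ℝ) (X : Euc d → Euc d) (T : Fin d → ℝ → ℝ) (x : Euc d) : Euc d :=
  x - ε • X (Tmap T x)

lemma contDiff_Tmap {d : ℕ} {T : Fin d → ℝ → ℝ} (hT : ∀ k, ContDiff ℝ (⊤ : ℕ∞) (T k)) :
    ContDiff ℝ (⊤ : ℕ∞) (Tmap T) := by
  rw [contDiff_euclidean]
  intro i
  show ContDiff ℝ (⊤ : ℕ∞) (fun x : Euc d => T i (x i))
  exact (hT i).comp (EuclideanSpace.proj i : Euc d →L[ℝ] ℝ).contDiff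

lemma contDiff_Pmap {d : ℕ} {T : Fin d → ℝ → ℝ} (hT : ∀ k, ContDiff ℝ (⊤ : ℕ∞) (T k)) (ε : ℝ)
    {X : Euc d → Euc d} (hX : ContDiff ℝ (⊤ : ℕ∞) X) :
    ContDiff ℝ (⊤ : ℕ∞) (Pmap ε X T) :=
  contDiff_id.sub ((hX.comp (contDiff_Tmap hT)).const_smul ε)

lemma fderiv_Tmap {d : ℕ} {T : Fin d → ℝ → ℝ} (hT : ∀ k, ContDiff ℝ (⊤ : ℕ∞) (T k)) (x : Euc d) (k : Fin d) :
    fderiv ℝ (Tmap T) x (EuclideanSpace.single k 1) = deriv (T k) (x k) • EuclideanSpace.single k (1:ℝ) := by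
  have hd : HasFDerivAt (Tmap T) (fderiv ℝ (Tmap T) x) x :=
    ((contDiff_Tmap hT).differentiable (by simp) x).hasFDerivAt
  ext i
  have h1 : HasFDerivAt (fun x : Euc d => T i (x i))
      ((EuclideanSpace.proj i : Euc d →L[ℝ] ℝ).comp (fderiv ℝ (Tmap T) x)) x :=
    (EuclideanSpace.proj i : Euc d →L[ℝ] ℝ).hasFDerivAt.comp x hd
  have h2 : HasFDerivAt (fun x : Euc d => T i (x i))
      (deriv (T i) (x i) • (EuclideanSpace.proj i : Euc d →L[ℝ] ℝ)) x := by
    have h3 : HasDerivAt (T i) (deriv (T i) (x i)) ((EuclideanSpace.proj i : Euc d →L[ℝ] ℝ) x) :=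
      ((hT i).differentiable (by simp) _).hasDerivAt
    exact h3.comp_hasFDerivAt x (EuclideanSpace.proj i : Euc d →L[ℝ] ℝ).hasFDerivAt
  have h4 := congrArg (fun L : Euc d →L[ℝ] ℝ => L (EuclideanSpace.single k 1)) (h1.unique h2)
  change (fderiv ℝ (Tmap T) x (EuclideanSpace.single k 1)) i =
    deriv (T i) (x i) • (EuclideanSpace.single k (1:ℝ) : Euc d) i at h4
  rw [h4]
  by_cases hik : i = k
  · subst hik; simp
  · simp [hik]

lemma fderiv_comp_Pmap {d m : ℕ} {T : Fin d → ℝ → ℝ} (hT : ∀ k, ContDiff ℝ (⊤ : ℕ∞) (T k)) (ε : ℝ)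
    {X : Euc d → Euc d} (hX : ContDiff ℝ (⊤ : ℕ∞) X) {V : Euc d → Euc m} (hV : ContDiff ℝ (⊤ : ℕ∞) V)
    (x : Euc d) (i : Fin m) (k : Fin d) :
    smoothJac (fun x => V (Pmap ε X T x)) x i k = smoothJac V (Pmap ε X T x) i k -
      ε * deriv (T k) (x k) * ∑ j, (fderiv ℝ X (Tmap T x) (EuclideanSpace.single k 1)) j *
        smoothJac V (Pmap ε X T x) i j := by
  have hP : HasFDerivAt (Pmap ε X T) (ContinuousLinearMap.id ℝ (Euc d) -
      ε • (fderiv ℝ X (Tmap T x)).comp (fderiv ℝ (Tmap T) x)) x := by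
    apply HasFDerivAt.sub (hasFDerivAt_id x)
    refine HasFDerivAt.const_smul (f := fun x => X (Tmap T x)) ?_ ε
    exact (hX.differentiable (by simp) _).hasFDerivAt.comp x
      ((contDiff_Tmap hT).differentiable (by simp) x).hasFDerivAt
  have hVP : HasFDerivAt (fun x => V (Pmap ε X T x)) _ x :=
    (hV.differentiable (by simp) _).hasFDerivAt.comp x hP
  have hlin : ∀ a : Euc d, fderiv ℝ V (Pmap ε X T x) a = ∑ j, a j • fderiv ℝ V (Pmap ε X T x) (EuclideanSpace.single j 1) := by
    intro a
    conv_lhs => rw [← (EuclideanSpace.basisFun (Fin d) ℝ).sum_repr a]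
    simp [map_sum]
  unfold smoothJac
  rw [hVP.fderiv]
  simp only [ContinuousLinearMap.comp_apply, sub_apply, smul_apply,
    ContinuousLinearMap.id_apply, map_sub, map_smul, fderiv_Tmap hT]
  rw [hlin (fderiv ℝ X (Tmap T x) (EuclideanSpace.single k 1))]
  simp [Finset.mul_sum, mul_assoc]

lemma norm_Tmap_sub {d : ℕ} {T : Fin d → ℝ → ℝ} {r0 : ℝ} (hr0 : 0 ≤ r0) (hT : ∀ k s, |T k s - s| ≤ r0) (x : Euc d) :
    ‖Tmap T x - x‖ ≤ (d + 1) * r0 := by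
  rw [EuclideanSpace.norm_eq]
  apply Real.sqrt_le_iff.2 ⟨by positivity, ?_⟩
  calc ∑ i, ‖(Tmap T x - x) i‖ ^ 2 ≤ ∑ i : Fin d, r0 ^ 2 := by
        apply Finset.sum_le_sum
        intro i _
        have : ‖(Tmap T x - x) i‖ ≤ r0 := hT i (x i)
        gcongr
    _ = d * r0 ^ 2 := by simp
    _ ≤ _ := by
        have : (0:ℝ) ≤ d := Nat.cast_nonneg d
        nlinarith [sq_nonneg r0, mul_nonneg this (sq_nonneg r0), mul_nonneg (mul_nonneg this this) (sq_nonneg r0)]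

/-- The support of the transported mollification is contained in `Ω`. -/
lemma support_U {d m : ℕ} {Ω : Set (Euc d)} (hΩb : Bornology.IsBounded Ω)
    {X : Euc d → Euc d} {r : ℝ} (hXb : ∀ x, ‖X x‖ ≤ 1 / 2) (hr : 0 < r) 
    (hX : ∀ z ∈ closure Ω, ∀ x, dist x z < r → ∀ ε : ℝ, 0 < ε → ε < r → ∀ y : Euc d, ‖y‖ < r →
        z + ε • (X x + y) ∈ Ω) (hXc : Continuous X) {T : Fin d → ℝ → ℝ} (hTc : ∀ k, ContDiff ℝ (⊤ : ℕ∞) (T k))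
    (hT : ∀ x, ‖Tmap T x - x‖ ≤ r / 4) {ε : ℝ} (hε : 0 < ε) (hεr : ε < r / 4)
    (hr1 : r ≤ 1 / 2)
    {ρ : Euc d → ℝ} (hρ : ∀ y, ε * (r / 2) ≤ ‖y‖ → ρ y = 0) (v : Euc d → Euc m) :
    HasCompactSupport (fun x => ∫ z in Ω, ρ (Pmap ε X T x - z) • v z) ∧
    tsupport (fun x => ∫ z in Ω, ρ (Pmap ε X T x - z) • v z) ⊆ Ω := by
  have hPc : Continuous (Pmap ε X T) := by
    have := (contDiff_Tmap hTc).continuous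
    unfold Pmap
    fun_prop
  set K : Set (Euc d) := Pmap ε X T ⁻¹' (cthickening (ε * (r / 2)) Ω) with hK
  have hKc : IsClosed K := isClosed_cthickening.preimage hPc
  have hsub : Function.support (fun x => ∫ z in Ω, ρ (Pmap ε X T x - z) • v z) ⊆ K := by
    intro x hx
    by_contra hxK
    apply hx
    apply setIntegral_eq_zero_of_forall_eq_zero
    intro z hz
    have : ρ (Pmap ε X T x - z) = 0 := by
      apply hρ
      by_contra hlt
      push Not at hlt
      apply hxK
      show Pmap ε X T x ∈ cthickening (ε * (r / 2)) Ω
      apply mem_cthickening_of_dist_le _ z _ _ hz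
      rw [dist_eq_norm]; exact hlt.le
    simp [this]
  have hts : tsupport (fun x => ∫ z in Ω, ρ (Pmap ε X T x - z) • v z) ⊆ K :=
    closure_minimal hsub hKc
  have hcomp : IsCompact (closure Ω) := hΩb.isCompact_closure
  have hex : ∀ x ∈ K, ∃ z ∈ closure Ω, dist (Pmap ε X T x) z ≤ ε * (r / 2) := by
    intro x hx
    have hx' : Pmap ε X T x ∈ cthickening (ε * (r / 2)) (closure Ω) := by
      rw [cthickening_closure]; exact hx
    rw [hcomp.cthickening_eq_biUnion_closedBall (by positivity)] at hx'
    simpa using hx'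
  have hPx : ∀ x, dist x (Pmap ε X T x) ≤ ε / 2 := by
    intro x
    rw [dist_eq_norm, Pmap, sub_sub_cancel, norm_smul, Real.norm_of_nonneg hε.le]
    nlinarith [hXb (Tmap T x)]
  have hKO : K ⊆ Ω := by
    intro x hx
    obtain ⟨z, hz, hd⟩ := hex x hx
    have hy := hX z hz (Tmap T x) ?_ ε hε (by linarith) (ε⁻¹ • (Pmap ε X T x - z)) ?_
    · convert hy using 1
      rw [smul_add, smul_smul, mul_inv_cancel₀ hε.ne', one_smul, Pmap]
      abel
    · have h1 : dist (Tmap T x) x ≤ r / 4 := by rw [dist_eq_norm]; exact hT x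
      have := dist_triangle4 (Tmap T x) x (Pmap ε X T x) z
      have := hPx x
      nlinarith
    · rw [norm_smul, norm_inv, Real.norm_of_nonneg hε.le, inv_mul_lt_iff₀ hε, ← dist_eq_norm]
      nlinarith
  have hKb : Bornology.IsBounded K := hΩb.subset hKO
  exact ⟨(Metric.isCompact_of_isClosed_isBounded hKc hKb).of_isClosed_subset (isClosed_tsupport _) hts, hts.trans hKO⟩

lemma kernel_pointwise {d : ℕ} {E : Type*} [NormedAddCommGroup E] [NormedSpace ℝ E] [CompleteSpace E]
    {Ω : Set (Euc d)} (hΩ : MeasurableSet Ω) {ε τ : ℝ} (hε : 0 < ε) {κ : ℝ≥0}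
    {k : Euc d → ℝ} {x : Euc d} (hkc : Continuous k) (hkn : ∀ z, 0 ≤ k z) (hk : ∀ z, k z ≤ κ * (ε ^ d)⁻¹)
    (hk0 : ∀ z, z ∉ closedBall x ε → k z = 0) (hki : Integrable k) (hk1 : ∫ z, k z = 1)
    {a b : Euc d → E} (ha : IntegrableOn a Ω) (hb : Integrable b) (hb0 : ∀ z, z ∉ Ω → b z = 0)
    (hτ : ∀ z, dist z x ≤ ε → ‖b z - b x‖ ≤ τ) :
    ‖(∫ z in Ω, k z • a z) - a x‖ₑ ≤ κ * avg ε (Ω.indicator fun z => ‖b z - a z‖ₑ) x + ENNReal.ofReal τ + ‖b x - a x‖ₑ := by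
  have hs : ∀ {μ : Measure (Euc d)} (u : Euc d → E), Integrable u μ → Integrable (fun z => k z • u z) μ := fun u hu =>
    hu.bdd_smul (κ * (ε ^ d)⁻¹) hkc.aestronglyMeasurable (Eventually.of_forall fun z => by
      rw [Real.norm_of_nonneg (hkn z)]; exact hk z)
  have e1 : (∫ z in Ω, k z • a z) - a x = -(∫ z in Ω, k z • (b z - a z)) + (∫ z, k z • (b z - b x)) + (b x - a x) := by
    simp_rw [smul_sub]
    rw [integral_sub (hs b hb.integrableOn) (hs a ha), integral_sub (hs b hb) (hki.smul_const _),
      integral_smul_const, hk1, one_smul, setIntegral_eq_integral_of_forall_compl_eq_zero (s := Ω) (f := fun z => k z • b z)]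
    · abel
    · intro z hz; simp [hb0 z hz]
  rw [e1]
  refine (enorm_add_le _ _).trans ?_
  gcongr
  refine (enorm_add_le _ _).trans ?_
  gcongr
  · rw [enorm_neg]
    exact enorm_kernel_le_avg hΩ hε hkn hk hk0 _
  · rw [← ofReal_norm]
    apply ENNReal.ofReal_le_ofReal
    refine (norm_integral_le_integral_norm _).trans ?_
    calc ∫ z, ‖k z • (b z - b x)‖ ≤ ∫ z, k z * τ := by
          apply integral_mono_of_nonneg (Eventually.of_forall fun z => norm_nonneg _) (hki.mul_const _)
          apply Eventually.of_forall
          intro z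
          dsimp only
          rw [norm_smul, Real.norm_of_nonneg (hkn z)]
          by_cases hz : z ∈ closedBall x ε
          · exact mul_le_mul_of_nonneg_left (hτ z hz) (hkn z)
          · simp [hk0 z hz]
      _ = τ := by rw [integral_mul_const, hk1, one_mul]

lemma eLpNorm_ofReal_eq {d : ℕ} {E : Type*} [TopologicalSpace E] [ContinuousENorm E] {p : ℝ} (hp : 1 ≤ p) (μ : Measure (Euc d))
    (f : Euc d → E) : eLpNorm f (ENNReal.ofReal p) μ = (∫⁻ x, ‖f x‖ₑ ^ p ∂μ) ^ (1 / p) := by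
  rw [eLpNorm_eq_lintegral_rpow_enorm_toReal (by simp; linarith) ENNReal.ofReal_ne_top,
    ENNReal.toReal_ofReal (by linarith)]

lemma eLpNorm_avg_le {d : ℕ} {E : Type*} [NormedAddCommGroup E]
    {Ω : Set (Euc d)} (hΩ : MeasurableSet Ω) {ε p : ℝ} (hε : 0 < ε) (hp : 1 ≤ p)
    {q : Euc d → E} (hq : Measurable fun z => ‖q z‖ₑ) :
    eLpNorm (avg ε (Ω.indicator fun z => ‖q z‖ₑ)) (ENNReal.ofReal p) (volume.restrict Ω) ≤
      volume (ball (0 : Euc d) 1) * eLpNorm q (ENNReal.ofReal p) (volume.restrict Ω) := by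
  have hp0 : 0 < p := by linarith
  rw [eLpNorm_ofReal_eq hp, eLpNorm_ofReal_eq hp]
  have h1 : ∫⁻ x in Ω, ‖avg ε (Ω.indicator fun z => ‖q z‖ₑ) x‖ₑ ^ p ≤
      volume (ball (0 : Euc d) 1) ^ p * ∫⁻ x in Ω, ‖q x‖ₑ ^ p := by
    refine (setLIntegral_le_lintegral _ _).trans ?_
    refine (lintegral_avg_rpow hε (hq.indicator hΩ) hp).trans ?_
    refine mul_le_mul_right ?_ _
    rw [← lintegral_indicator hΩ]
    apply lintegral_mono
    intro z
    by_cases hz : z ∈ Ω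
    · simp [hz]
    · simp [hz, hp0]
  refine (ENNReal.rpow_le_rpow h1 (by positivity)).trans (le_of_eq ?_)
  rw [ENNReal.mul_rpow_of_nonneg _ _ (by positivity), ← ENNReal.rpow_mul, mul_one_div_cancel hp0.ne', ENNReal.rpow_one]

lemma eLpNorm_sum_le {d : ℕ} {E : Type*} [NormedAddCommGroup E] [MeasurableSpace E] [BorelSpace E]
    {Ω : Set (Euc d)} (hΩ : MeasurableSet Ω) {ε τ p : ℝ} (hε : 0 < ε) (hp : 1 ≤ p) {κ : ℝ≥0}
    {q f : Euc d → E} (hq : Measurable q) 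
    (hf : ∀ x, ‖f x‖ₑ ≤ κ * avg ε (Ω.indicator fun z => ‖q z‖ₑ) x + ENNReal.ofReal τ + ‖q x‖ₑ)
    (hN : eLpNorm q (ENNReal.ofReal p) (volume.restrict Ω) ≤ ENNReal.ofReal τ) :
    eLpNorm f (ENNReal.ofReal p) (volume.restrict Ω) ≤
      (κ * volume (ball (0 : Euc d) 1) + volume Ω ^ (1 / p) + 1) * ENNReal.ofReal τ := by
  have hp0 : 0 < p := by linarith
  have hP1 : 1 ≤ ENNReal.ofReal p := by simpa using hp
  have hqe : Measurable fun z => ‖q z‖ₑ := hq.enorm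
  have ha := measurable_avg ε (hqe.indicator hΩ)
  refine (eLpNorm_mono_enorm (g := fun x => κ * avg ε (Ω.indicator fun z => ‖q z‖ₑ) x + ENNReal.ofReal τ + ‖q x‖ₑ)
    (fun x => (by simpa using hf x))).trans ?_
  refine (eLpNorm_add_le (f := fun x => κ * avg ε (Ω.indicator fun z => ‖q z‖ₑ) x + ENNReal.ofReal τ) (g := fun x => ‖q x‖ₑ)
    ((ha.const_mul _).add_const _).aestronglyMeasurable hqe.aestronglyMeasurable hP1).trans ?_
  rw [add_mul, one_mul]
  gcongr ?_ + ?_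
  · refine (eLpNorm_add_le (f := fun x => κ * avg ε (Ω.indicator fun z => ‖q z‖ₑ) x) (g := fun x => ENNReal.ofReal τ)
      (ha.const_mul _).aestronglyMeasurable aestronglyMeasurable_const hP1).trans ?_
    rw [add_mul]
    gcongr ?_ + ?_
    · have h2 : eLpNorm (fun x => (κ : ℝ≥0∞) * avg ε (Ω.indicator fun z => ‖q z‖ₑ) x) (ENNReal.ofReal p) (volume.restrict Ω) =
          κ * eLpNorm (avg ε (Ω.indicator fun z => ‖q z‖ₑ)) (ENNReal.ofReal p) (volume.restrict Ω) := by
        rw [eLpNorm_ofReal_eq hp, eLpNorm_ofReal_eq hp]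
        simp only [enorm_eq_self, ENNReal.mul_rpow_of_nonneg _ _ hp0.le]
        rw [lintegral_const_mul' _ _ (by simp [hp0.le]), ENNReal.mul_rpow_of_nonneg _ _ (by positivity), ← ENNReal.rpow_mul, mul_one_div_cancel hp0.ne', ENNReal.rpow_one]
      rw [h2, mul_assoc]
      gcongr
      exact (eLpNorm_avg_le hΩ hε hp hqe).trans (by gcongr)
    · rw [eLpNorm_ofReal_eq hp]
      simp only [enorm_eq_self, lintegral_const, Measure.restrict_apply_univ]
      rw [ENNReal.mul_rpow_of_nonneg _ _ (by positivity), ← ENNReal.rpow_mul, mul_one_div_cancel hp0.ne', ENNReal.rpow_one, mul_comm]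
  · refine le_trans (le_of_eq ?_) hN
    rw [eLpNorm_ofReal_eq hp, eLpNorm_ofReal_eq hp]
    simp

lemma exists_Tvec {d : ℕ} {f : Euc d → ℝ≥0∞} (hf : Measurable f) {p τ r0 ε : ℝ} (hp : 1 ≤ p) (hτ : 0 < τ)
    (hr0 : 0 < r0) (hε : 0 < ε) (hfp : ∫⁻ z, f z ^ p ≤ ENNReal.ofReal (τ ^ p)) :
    ∃ (T : Fin d → ℝ → ℝ) (Y : Euc d → ℝ≥0∞), (∀ k, ContDiff ℝ (⊤ : ℕ∞) (T k)) ∧ (∀ k s, |T k s - s| ≤ r0) ∧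
      (∀ k s, 0 ≤ deriv (T k) s ∧ deriv (T k) s ≤ 1) ∧ Measurable Y ∧
      (∀ x k, deriv (T k) (x k) ≠ 0 → Y x = ENNReal.ofReal ε * avg ε f x) ∧
      (∀ x, Y x ≤ ENNReal.ofReal ε * avg ε f x) ∧
      (∀ x, Y x ≤ (volume (ball (0 : Euc d) 1) ^ (p - 1) * ENNReal.ofReal (8 / r0)) ^ (1 / p) *
        ENNReal.ofReal (ε ^ (1 - ((d : ℝ) - 1) / p) * τ)) ∧
      (∫⁻ x, Y x ^ p) ≤ volume (ball (0 : Euc d) 1) ^ p * ENNReal.ofReal (ε ^ p * τ ^ p) := by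
  have hp0 : 0 < p := by linarith
  have hfpm : Measurable fun z => f z ^ p := hf.pow_const p
  let ν : Measure (Euc d) := volume.withDensity fun z => f z ^ p
  have hνu : ν univ ≤ ENNReal.ofReal (τ ^ p) := by
    rw [withDensity_apply _ MeasurableSet.univ, Measure.restrict_univ]; exact hfp
  have hνf : IsFiniteMeasure ν := ⟨hνu.trans_lt ENNReal.ofReal_lt_top⟩
  have hpr : ∀ k : Fin d, Measurable fun z : Euc d => z k := fun k => by fun_prop
  let μ : Fin d → Measure ℝ := fun k => ν.map fun z => z k
  have hμf : ∀ k, IsFiniteMeasure (μ k) := fun k => Measure.isFiniteMeasure_map ν _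
  have hμu : ∀ k, μ k univ ≤ ENNReal.ofReal (τ ^ p) := fun k => by
    rw [Measure.map_apply (hpr k) MeasurableSet.univ]; exact hνu
  choose T hT1 hT2 hT3 hT4 using fun k => exists_T (μ k) hr0 hε (show 0 < τ ^ p by positivity) (hμu k)
  set G : Set (Euc d) := {x | ∃ k, deriv (T k) (x k) ≠ 0} with hG
  have hGm : MeasurableSet G := by
    have : G = ⋃ k, (fun x : Euc d => deriv (T k) (x k)) ⁻¹' {0}ᶜ := by
      ext x; simp [hG]
    rw [this]
    refine MeasurableSet.iUnion fun k => ?_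
    exact ((measurable_deriv (T k)).comp (hpr k)) (measurableSet_singleton 0).compl
  have havgm := measurable_avg ε hf
  have hYle : ∀ x, ENNReal.ofReal ε * G.indicator (avg ε f) x ≤ ENNReal.ofReal ε * avg ε f x := fun x => by
    gcongr; exact indicator_le_self _ _ x
  refine ⟨T, fun x => ENNReal.ofReal ε * G.indicator (avg ε f) x, hT1, hT2, hT3,
    (havgm.indicator hGm).const_mul _, ?_, hYle, ?_, ?_⟩
  · intro x k hk
    have : x ∈ G := ⟨k, hk⟩
    simp [this]
  · intro x
    by_cases hx : x ∈ G
    swap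
    · simp [hx]
    simp only [hx, indicator_of_mem]
    obtain ⟨k, hk⟩ := hx
    have h1 : avg ε (fun z => f z ^ p) x ≤ ENNReal.ofReal ((ε ^ d)⁻¹) * ENNReal.ofReal (8 / r0 * ε * τ ^ p) := by
      unfold avg
      gcongr
      refine le_trans ?_ (hT4 k _ hk)
      rw [Measure.map_apply (hpr k) measurableSet_closedBall, withDensity_apply _ ((hpr k) measurableSet_closedBall)]
      apply lintegral_mono_set
      intro z hz
      show dist (z k) (x k) ≤ ε
      exact (PiLp.dist_apply_le z x k).trans hz
    have h2 := (avg_rpow hε hf hp x).trans (mul_le_mul_right h1 _)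
    have h3 := ENNReal.rpow_le_rpow h2 (show 0 ≤ 1 / p by positivity)
    rw [← ENNReal.rpow_mul, mul_one_div_cancel hp0.ne', ENNReal.rpow_one] at h3
    refine (mul_le_mul_right h3 _).trans (le_of_eq ?_)
    rw [← ENNReal.ofReal_mul (by positivity), show (ε ^ d)⁻¹ * (8 / r0 * ε * τ ^ p) = (8 / r0) * ((ε ^ d)⁻¹ * ε * τ ^ p) by ring,
      ENNReal.ofReal_mul (by positivity), ← mul_assoc, ENNReal.mul_rpow_of_nonneg _ _ (by positivity), mul_left_comm]
    congr 1
    rw [ENNReal.ofReal_rpow_of_nonneg (by positivity) (by positivity), ← ENNReal.ofReal_mul hε.le]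
    congr 1
    rw [Real.mul_rpow (by positivity) (by positivity), ← Real.rpow_mul hτ.le, mul_one_div_cancel hp0.ne', Real.rpow_one, ← mul_assoc]
    congr 1
    have : (ε ^ d)⁻¹ * ε = ε ^ (1 - (d:ℝ)) := by
      rw [Real.rpow_sub hε, Real.rpow_one, Real.rpow_natCast, div_eq_inv_mul]
    rw [this, ← Real.rpow_mul hε.le]
    conv_lhs => rw [← Real.rpow_one ε, ← Real.rpow_mul hε.le, ← Real.rpow_add hε]
    congr 1
    field_simp
    ring
  · calc ∫⁻ x, (ENNReal.ofReal ε * G.indicator (avg ε f) x) ^ p ≤ ∫⁻ x, ENNReal.ofReal ε ^ p * avg ε f x ^ p := by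
          apply lintegral_mono
          intro x
          dsimp only
          rw [← ENNReal.mul_rpow_of_nonneg _ _ hp0.le]
          exact ENNReal.rpow_le_rpow (hYle x) hp0.le
      _ ≤ ENNReal.ofReal ε ^ p * (volume (ball (0 : Euc d) 1) ^ p * ENNReal.ofReal (τ ^ p)) := by
          rw [lintegral_const_mul _ (havgm.pow_const p)]
          refine mul_le_mul_right ?_ _
          exact (lintegral_avg_rpow hε hf hp).trans (mul_le_mul_right hfp _)
      _ = _ := by
          rw [ENNReal.ofReal_mul (by positivity), ENNReal.ofReal_rpow_of_pos hε]
          ring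

lemma tendsto_L1_of_Lp {d : ℕ} {E : Type*} [NormedAddCommGroup E] {μ : Measure (Euc d)} [IsFiniteMeasure μ]
    {p : ℝ} (hp : 1 ≤ p) {f : ℕ → Euc d → E} (hf : ∀ n, AEStronglyMeasurable (f n) μ)
    (h : Tendsto (fun n => eLpNorm (f n) (ENNReal.ofReal p) μ) atTop (𝓝 0)) :
    Tendsto (fun n => ∫⁻ x, ‖f n x‖ₑ ∂μ) atTop (𝓝 0) := by
  have hP1 : 1 ≤ ENNReal.ofReal p := by simpa using hp
  set c := μ univ ^ (1 / (1 : ℝ≥0∞).toReal - 1 / (ENNReal.ofReal p).toReal) with hc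
  have hct : c ≠ ⊤ := by
    apply ENNReal.rpow_ne_top_of_nonneg _ (measure_ne_top _ _)
    rw [ENNReal.toReal_ofReal (by linarith)]
    simp only [ENNReal.toReal_one, div_one, one_div, sub_nonneg]
    exact inv_le_one_of_one_le₀ hp
  have h2 := ENNReal.Tendsto.mul_const (b := c) h (Or.inr hct)
  rw [zero_mul] at h2
  refine tendsto_of_tendsto_of_tendsto_of_le_of_le tendsto_const_nhds h2 (fun _ => zero_le) fun n => ?_
  dsimp only
  rw [← eLpNorm_one_eq_lintegral_enorm]
  exact eLpNorm_le_eLpNorm_mul_rpow_measure_univ hP1 (hf n)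

lemma IsCcSmooth.jac {d m : ℕ} {Ω : Set (Euc d)} {w : Euc d → Euc m} (hw : IsCcSmooth Ω w) :
    Continuous (smoothJac w) ∧ HasCompactSupport (smoothJac w) ∧ ∀ z, z ∉ Ω → smoothJac w z = 0 := by
  have hw1 : ContDiff ℝ 1 w := hw.1.of_le (by exact_mod_cast le_top)
  refine ⟨?_, ?_, ?_⟩
  · have := hw1.continuous_fderiv one_ne_zero
    unfold smoothJac
    fun_prop
  · refine (hw.2.1.fderiv ℝ).mono ?_
    intro z hz h
    apply hz
    funext i j
    simp [smoothJac, h]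
  · intro z hz
    have : fderiv ℝ w z = 0 := by
      by_contra hne
      exact hz (hw.2.2 (support_fderiv_subset ℝ hne))
    funext i j
    simp [smoothJac, this]

lemma F_bound {m d : ℕ} {ε CX : ℝ} (hε : 0 < ε) (hCX : 0 ≤ CX) (t : Fin d → ℝ) (ht : ∀ k, 0 ≤ t k ∧ t k ≤ 1)
    (A : Fin d → Euc d) (hA : ∀ k, ‖A k‖ ≤ CX) (J F : Mat m d)
    (hF : ∀ i k, F i k = - (ε * t k * ∑ j, A k j * J i j)) : ‖F‖ ≤ ε * CX * d * ‖J‖ := by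
  rw [pi_norm_le_iff_of_nonneg (by positivity)]
  intro i
  rw [pi_norm_le_iff_of_nonneg (by positivity)]
  intro k
  rw [hF, norm_neg, norm_mul, norm_mul, Real.norm_of_nonneg hε.le, Real.norm_of_nonneg (ht k).1]
  have h1 : ‖∑ j, A k j * J i j‖ ≤ d * (CX * ‖J‖) := by
    refine (norm_sum_le _ _).trans ?_
    calc ∑ j, ‖A k j * J i j‖ ≤ ∑ j : Fin d, CX * ‖J‖ := by
          apply Finset.sum_le_sum
          intro j _
          rw [norm_mul]
          gcongr
          · exact (PiLp.norm_apply_le (A k) j).trans (hA k)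
          · exact (norm_le_pi_norm (J i) j).trans (norm_le_pi_norm J i)
      _ = _ := by simp
  calc ε * t k * ‖∑ j, A k j * J i j‖ ≤ ε * 1 * (d * (CX * ‖J‖)) := by
        gcongr
        exact (ht k).2
    _ = _ := by ring

lemma per_tau {d m : ℕ} {Ω : Set (Euc d)} (hΩo : IsOpen Ω) (hΩb : Bornology.IsBounded Ω)
    (hΩl : HasLipschitzBoundary Ω) {p : ℝ} (hp : 1 ≤ p) {v : Euc d → Euc m} {Dv : Euc d → Mat m d}
    (hv : Measurable v) (hDv : Measurable Dv) (h0 : MemW1p0 Ω (ENNReal.ofReal p) v Dv) :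
    ∃ C : ℝ≥0, ∀ τ : ℝ, 0 < τ → ∀ ε0 : ℝ, 0 < ε0 →
      ∃ (ε : ℝ) (U : Euc d → Euc m) (k : Euc d → Euc d → ℝ) (Y : Euc d → ℝ≥0∞),
        0 < ε ∧ ε < ε0 ∧ ε ≤ 1 ∧ IsCcSmooth Ω U ∧
        eLpNorm (U - v) (ENNReal.ofReal p) (volume.restrict Ω) ≤ C * ENNReal.ofReal τ ∧
        eLpNorm (smoothJac U - Dv) (ENNReal.ofReal p) (volume.restrict Ω) ≤ C * ENNReal.ofReal τ ∧
        (∀ x, Continuous (k x)) ∧ (∀ x z, 0 ≤ k x z) ∧ (∀ x z, k x z ≤ C * (ε ^ d)⁻¹) ∧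
        (∀ x z, z ∉ closedBall x ε → k x z = 0) ∧ (∀ x, Integrable (k x)) ∧ (∀ x, ∫ z, k x z = 1) ∧
        Measurable Y ∧
        (∀ x, Y x ≤ C * ENNReal.ofReal (ε ^ (1 - ((d : ℝ) - 1) / p) * τ)) ∧
        ((∫⁻ x in Ω, Y x ^ p) ≤ C * ENNReal.ofReal (ε ^ p * τ ^ p)) ∧
        ∀ x, ‖smoothJac U x - ∫ z in Ω, k x z • Dv z‖ₑ ≤ C * (ENNReal.ofReal τ + Y x) := by
  have hp0 : 0 < p := by linarith
  have hP1 : 1 ≤ ENNReal.ofReal p := by simpa using hp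
  have hΩm := hΩo.measurableSet
  have hΩv : volume Ω < ⊤ := hΩb.measure_lt_top
  haveI : IsFiniteMeasure (volume.restrict Ω) := ⟨by simpa using hΩv⟩
  obtain ⟨⟨hvp, hDvp, -⟩, w, hw, hl1, hl2⟩ := h0
  obtain ⟨X, CX, r, hXs, hXd, hXb, hr, hr2, hX⟩ := exists_inner_field hΩo hΩb hΩl
  have hCX : 0 ≤ CX := (norm_nonneg _).trans (hXd 0)
  obtain ⟨κ, hκ⟩ := exists_moll d (show 0 < r / 2 by positivity)
  have hr0 : 0 < r / (4 * (d + 1)) := by positivity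
  have hvi : IntegrableOn v Ω := hvp.integrable hP1
  have hDvi : IntegrableOn Dv Ω := hDvp.integrable hP1
  have hJ := fun n => (hw n).jac
  have hL1 := tendsto_L1_of_Lp hp (fun n => (((hw n).1.continuous.measurable.sub hv).aestronglyMeasurable)) hl1
  have hL2 := tendsto_L1_of_Lp hp (fun n => (((hJ n).1.measurable.sub hDv).aestronglyMeasurable)) hl2
  set β := volume (ball (0 : Euc d) 1) with hβ
  have hβt : β ≠ ⊤ := measure_ball_lt_top.ne
  set CF : ℝ≥0 := Real.toNNReal (CX * d) * (1 + κ) with hCF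
  set c1 : ℝ≥0∞ := (β ^ (p - 1) * ENNReal.ofReal (8 / (r / (4 * (d + 1))))) ^ (1 / p) with hc1
  set c2 : ℝ≥0∞ := β ^ p with hc2
  set c3 : ℝ≥0∞ := κ * β + volume Ω ^ (1 / p) + 1 with hc3
  set c4 : ℝ≥0∞ := c3 + CF * (volume Ω ^ (1 / p) + c2 ^ (1 / p)) with hc4
  set A : ℝ≥0∞ := κ + (CF + (c1 + (c2 + (c3 + c4)))) with hA
  have hvt : volume Ω ^ (1 / p) ≠ ⊤ := ENNReal.rpow_ne_top_of_nonneg (by positivity) hΩv.ne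
  have hc1t : c1 ≠ ⊤ := ENNReal.rpow_ne_top_of_nonneg (by positivity)
    (ENNReal.mul_ne_top (ENNReal.rpow_ne_top_of_nonneg (by linarith) hβt) ENNReal.ofReal_ne_top)
  have hc2t : c2 ≠ ⊤ := ENNReal.rpow_ne_top_of_nonneg hp0.le hβt
  have hc3t : c3 ≠ ⊤ := by
    simp only [hc3, ne_eq, ENNReal.add_eq_top, not_or]
    exact ⟨⟨ENNReal.mul_ne_top ENNReal.coe_ne_top hβt, hvt⟩, ENNReal.one_ne_top⟩
  have hc4t : c4 ≠ ⊤ := by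
    apply ENNReal.add_ne_top.2 ⟨hc3t, ENNReal.mul_ne_top ENNReal.coe_ne_top (ENNReal.add_ne_top.2 ⟨hvt,
      ENNReal.rpow_ne_top_of_nonneg (by positivity) hc2t⟩)⟩
  have hAt : A ≠ ⊤ := by
    simp only [hA, ne_eq, ENNReal.add_eq_top, not_or]
    exact ⟨ENNReal.coe_ne_top, ENNReal.coe_ne_top, hc1t, hc2t, hc3t, hc4t⟩
  have hAκ : (κ : ℝ≥0∞) ≤ A := le_self_add
  have hACF : (CF : ℝ≥0∞) ≤ A := le_add_left le_self_add
  have hA1 : c1 ≤ A := le_add_left (le_add_left le_self_add)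
  have hA2 : c2 ≤ A := le_add_left (le_add_left (le_add_left le_self_add))
  have hA3 : c3 ≤ A := le_add_left (le_add_left (le_add_left (le_add_left le_self_add)))
  have hA4 : c4 ≤ A := le_add_left (le_add_left (le_add_left (le_add_left le_add_self)))
  refine ⟨A.toNNReal, fun τ hτ ε0 hε0 => ?_⟩
  rw [ENNReal.coe_toNNReal hAt]
  have hκA : κ ≤ A.toNNReal := by
    rw [← ENNReal.coe_le_coe, ENNReal.coe_toNNReal hAt]; exact hAκ
  have hτE : (0 : ℝ≥0∞) < ENNReal.ofReal τ := by simpa using hτ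
  obtain ⟨n, hn1, hn2⟩ := ((hl1.eventually (gt_mem_nhds hτE)).and (hl2.eventually (gt_mem_nhds hτE))).exists
  obtain ⟨hJc, hJs, hJ0⟩ := hJ n
  have hwc := (hw n).1.continuous
  have hw0 : ∀ z, z ∉ Ω → w n z = 0 := by
    intro z hz
    by_contra hne
    exact hz ((hw n).2.2 (subset_tsupport _ hne))
  obtain ⟨B, hB⟩ := hJc.bounded_above_of_compact_support hJs
  have hB0 : 0 ≤ B := (norm_nonneg _).trans (hB 0)
  obtain ⟨δ1, hδ1, hu1⟩ := Metric.uniformContinuous_iff.1 ((hw n).2.1.uniformContinuous_of_continuous hwc) τ hτ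
  obtain ⟨δ2, hδ2, hu2⟩ := Metric.uniformContinuous_iff.1 (hJs.uniformContinuous_of_continuous hJc) τ hτ
  obtain ⟨ε, hε, hεlt⟩ : ∃ ε : ℝ, 0 < ε ∧ ε < min (min ε0 (r / 4)) (min (min 1 (τ / (B + 1))) (min δ1 δ2)) :=
    exists_between (by positivity)
  simp only [lt_min_iff] at hεlt
  obtain ⟨⟨hεε0, hεr⟩, ⟨hε1, hετ⟩, hεδ1, hεδ2⟩ := hεlt
  have hεB : ε * B ≤ τ := by
    rw [lt_div_iff₀ (by positivity)] at hετ
    nlinarith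
  set q : Euc d → Mat m d := fun z => smoothJac (w n) z - Dv z with hq
  have hqm : Measurable q := hJc.measurable.sub hDv
  set f : Euc d → ℝ≥0∞ := Ω.indicator fun z => ‖q z‖ₑ with hf
  have hfm : Measurable f := hqm.enorm.indicator hΩm
  have hfp : ∫⁻ z, f z ^ p ≤ ENNReal.ofReal (τ ^ p) := by
    have h1 : ∫⁻ z, f z ^ p = ∫⁻ z in Ω, ‖q z‖ₑ ^ p := by
      rw [← lintegral_indicator hΩm]
      congr 1; funext z
      by_cases hz : z ∈ Ω <;> simp [hf, hz, hp0]
    have h2 : eLpNorm q (ENNReal.ofReal p) (volume.restrict Ω) < ENNReal.ofReal τ := hn2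
    rw [eLpNorm_ofReal_eq hp] at h2
    have h3 := ENNReal.rpow_le_rpow h2.le hp0.le
    rw [← ENNReal.rpow_mul, one_div_mul_cancel hp0.ne', ENNReal.rpow_one, ENNReal.ofReal_rpow_of_pos hτ] at h3
    rw [h1]; exact h3
  obtain ⟨T, Y, hT1, hT2, hT3, hYm, hY1, hY2, hY3, hY4⟩ := exists_Tvec hfm hp hτ hr0 hε hfp
  obtain ⟨ρ, hρs, hρ0, hρz, hρc, hρi, hρ1, hρb⟩ := hκ ε hε
  have hTx : ∀ x, ‖Tmap T x - x‖ ≤ r / 4 := fun x => by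
    refine (norm_Tmap_sub hr0.le hT2 x).trans (le_of_eq ?_)
    field_simp
  obtain ⟨hVs, hVJ⟩ := smoothJac_conv hΩm hρs hρc hvi hDvi hw hL1 hL2
  obtain ⟨hUc, hUt⟩ := support_U hΩb hXb hr hX hXs.continuous hT1 hTx hε hεr hr2 hρz v
  set V : Euc d → Euc m := fun y => ∫ z in Ω, ρ (y - z) • v z with hVdef
  set k : Euc d → Euc d → ℝ := fun x z => ρ (Pmap ε X T x - z) with hk
  have hkc : ∀ x, Continuous (k x) := fun x => hρs.continuous.comp (continuous_const.sub continuous_id)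
  have hk0 : ∀ x z, 0 ≤ k x z := fun x z => hρ0 _
  have hkb : ∀ x z, k x z ≤ κ * (ε ^ d)⁻¹ := fun x z => hρb _
  have hkz : ∀ x z, z ∉ closedBall x ε → k x z = 0 := by
    intro x z hz
    apply hρz
    rw [mem_closedBall, not_le, dist_comm, dist_eq_norm] at hz
    have h1 : ‖ε • X (Tmap T x)‖ ≤ ε / 2 := by
      rw [norm_smul, Real.norm_of_nonneg hε.le]
      nlinarith [hXb (Tmap T x)]
    have h2 : ‖x - z‖ ≤ ‖Pmap ε X T x - z‖ + ‖ε • X (Tmap T x)‖ := by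
      have : x - z = (Pmap ε X T x - z) + ε • X (Tmap T x) := by rw [Pmap]; abel
      rw [this]; exact norm_add_le _ _
    nlinarith
  have hki : ∀ x, Integrable (k x) := fun x => hρi.comp_sub_left _
  have hk1 : ∀ x, ∫ z, k x z = 1 := fun x => by
    rw [hk]; dsimp only; rw [integral_sub_left_eq_self ρ volume (Pmap ε X T x), hρ1]
  set U : Euc d → Euc m := fun x => V (Pmap ε X T x) with hU
  have hJU : ∀ x i l, smoothJac U x i l - (∫ z in Ω, k x z • Dv z) i l =
      -(ε * deriv (T l) (x l) * ∑ j, (fderiv ℝ X (Tmap T x) (EuclideanSpace.single l 1)) j *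
        (∫ z in Ω, k x z • Dv z) i j) := by
    intro x i l
    rw [hU, fderiv_comp_Pmap hT1 ε hXs hVs, hVJ]
    ring
  have hFb : ∀ x, ‖smoothJac U x - ∫ z in Ω, k x z • Dv z‖ₑ ≤ CF * (ENNReal.ofReal τ + Y x) := by
    intro x
    by_cases hx : ∃ l, deriv (T l) (x l) ≠ 0
    swap
    · push Not at hx
      have : smoothJac U x - ∫ z in Ω, k x z • Dv z = 0 := by
        funext i l
        have := hJU x i l
        rw [hx l] at this
        simpa using this
      rw [this]; simp
    obtain ⟨l, hl⟩ := hx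
    rw [hY1 x l hl]
    have h1 := F_bound hε hCX (fun l => deriv (T l) (x l)) (fun l => hT3 l (x l))
      (fun l => fderiv ℝ X (Tmap T x) (EuclideanSpace.single l 1))
      (fun l => by
        refine (ContinuousLinearMap.le_opNorm _ _).trans ?_
        simpa using hXd (Tmap T x)) (∫ z in Ω, k x z • Dv z) (smoothJac U x - ∫ z in Ω, k x z • Dv z) (hJU x)
    have hs : ∀ (u : Euc d → Mat m d), IntegrableOn u Ω → IntegrableOn (fun z => k x z • u z) Ω := fun u hu =>
      hu.bdd_smul (κ * (ε ^ d)⁻¹) (hkc x).aestronglyMeasurable (Eventually.of_forall fun z => by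
        rw [Real.norm_of_nonneg (hk0 x z)]; exact hkb x z)
    have hJi : IntegrableOn (smoothJac (w n)) Ω := (hJc.integrable_of_hasCompactSupport hJs).integrableOn
    have h2 : ∫ z in Ω, k x z • Dv z = (∫ z in Ω, k x z • smoothJac (w n) z) - ∫ z in Ω, k x z • q z := by
      simp_rw [hq, smul_sub]
      rw [integral_sub (hs _ hJi) (hs _ hDvi)]; abel
    have h3 : ‖∫ z in Ω, k x z • smoothJac (w n) z‖ₑ ≤ ENNReal.ofReal B := by
      rw [← ofReal_norm]
      apply ENNReal.ofReal_le_ofReal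
      refine (norm_integral_le_integral_norm _).trans ?_
      calc ∫ z in Ω, ‖k x z • smoothJac (w n) z‖ ≤ ∫ z in Ω, k x z * B := by
            apply integral_mono (hs _ hJi).norm ((hki x).integrableOn.mul_const B)
            intro z
            dsimp only
            rw [norm_smul, Real.norm_of_nonneg (hk0 x z)]
            exact mul_le_mul_of_nonneg_left (hB z) (hk0 x z)
        _ ≤ ∫ z, k x z * B := setIntegral_le_integral ((hki x).mul_const B)
            (Eventually.of_forall fun z => mul_nonneg (hk0 x z) hB0)
        _ = B := by rw [integral_mul_const, hk1, one_mul]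
    have h4 := enorm_kernel_le_avg hΩm hε (hk0 x) (hkb x) (hkz x) q
    have h5 : ‖∫ z in Ω, k x z • Dv z‖ₑ ≤ ENNReal.ofReal B + κ * avg ε f x := by
      rw [h2]
      exact enorm_sub_le.trans (add_le_add h3 h4)
    calc ‖smoothJac U x - ∫ z in Ω, k x z • Dv z‖ₑ
        ≤ ENNReal.ofReal (ε * CX * d) * ‖∫ z in Ω, k x z • Dv z‖ₑ := by
          rw [← ofReal_norm, ← ofReal_norm, ← ENNReal.ofReal_mul (by positivity)]
          exact ENNReal.ofReal_le_ofReal h1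
      _ ≤ ENNReal.ofReal (ε * CX * d) * (ENNReal.ofReal B + κ * avg ε f x) := by gcongr
      _ = ENNReal.ofReal (CX * d) * (ENNReal.ofReal (ε * B) + κ * (ENNReal.ofReal ε * avg ε f x)) := by
          rw [mul_assoc ε, ENNReal.ofReal_mul hε.le, ENNReal.ofReal_mul hε.le]
          ring
      _ ≤ ENNReal.ofReal (CX * d) * ((1 + κ) * ENNReal.ofReal τ + (1 + κ) * (ENNReal.ofReal ε * avg ε f x)) := by
          refine mul_le_mul_right (add_le_add ?_ ?_) _
          · refine (ENNReal.ofReal_le_ofReal hεB).trans ?_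
            exact le_mul_of_one_le_left zero_le le_self_add
          · exact mul_le_mul_left le_add_self _
      _ = _ := by
          rw [hCF]
          push_cast
          rw [ENNReal.ofReal]
          ring
  have hcs : ContDiff ℝ (⊤ : ℕ∞) U := hVs.comp (contDiff_Pmap hT1 ε hXs)
  refine ⟨ε, U, k, Y, hε, hεε0, hε1.le, ⟨hcs, hUc, hUt⟩, ?_, ?_, hkc, hk0, fun x z => (hkb x z).trans ?_, hkz, hki, hk1, hYm,
    fun x => (hY3 x).trans (mul_le_mul_left hA1 _), ?_, fun x => (hFb x).trans (mul_le_mul_left hACF _)⟩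
  · refine (eLpNorm_sum_le hΩm hε hp (κ := κ) (hwc.measurable.sub hv) (fun x => ?_) hn1.le).trans (mul_le_mul_left hA3 _)
    exact kernel_pointwise hΩm hε (hkc x) (hk0 x) (hkb x) (hkz x) (hki x) (hk1 x) hvi
      (hwc.integrable_of_hasCompactSupport (hw n).2.1) hw0 (fun z hz => by
        have := hu1 (show dist z x < δ1 by linarith)
        rw [dist_eq_norm] at this; exact this.le)
  · have hJUc : Continuous (smoothJac U) := (IsCcSmooth.jac (⟨hcs, hUc, hUt⟩ : IsCcSmooth Ω U)).1
    have hJVc : Continuous fun x => ∫ z in Ω, k x z • Dv z := by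
      have h1 : Continuous (smoothJac V) := by
        have := (hVs.of_le (show (1 : WithTop ℕ∞) ≤ (⊤ : ℕ∞) by exact_mod_cast le_top)).continuous_fderiv one_ne_zero
        unfold smoothJac
        fun_prop
      have h2 : (fun x => ∫ z in Ω, k x z • Dv z) = fun x => smoothJac V (Pmap ε X T x) := by
        funext x; rw [hVJ]
      rw [h2]
      exact h1.comp (contDiff_Pmap hT1 ε hXs).continuous
    have e1 : smoothJac U - Dv = (fun x => smoothJac U x - ∫ z in Ω, k x z • Dv z) + fun x => (∫ z in Ω, k x z • Dv z) - Dv x := by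
      funext x; simp
    rw [e1, add_comm]
    refine (eLpNorm_add_le (hJVc.measurable.sub hDv).aestronglyMeasurable (hJUc.sub hJVc).aestronglyMeasurable hP1).trans ?_
    refine le_trans ?_ (mul_le_mul_left hA4 _)
    rw [hc4, add_mul]
    refine add_le_add ?_ ?_
    · refine eLpNorm_sum_le hΩm hε hp (κ := κ) hqm (fun x => ?_) hn2.le
      exact kernel_pointwise hΩm hε (hkc x) (hk0 x) (hkb x) (hkz x) (hki x) (hk1 x) hDvi
        (hJc.integrable_of_hasCompactSupport hJs) hJ0 (fun z hz => by
          have := hu2 (show dist z x < δ2 by linarith)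
          rw [dist_eq_norm] at this; exact this.le)
    · have h6 : eLpNorm (fun x => smoothJac U x - ∫ z in Ω, k x z • Dv z) (ENNReal.ofReal p) (volume.restrict Ω) ≤
          CF * eLpNorm (fun x => ENNReal.ofReal τ + Y x) (ENNReal.ofReal p) (volume.restrict Ω) := by
        rw [eLpNorm_ofReal_eq hp, eLpNorm_ofReal_eq hp]
        have h7 : ∫⁻ x in Ω, ‖smoothJac U x - ∫ z in Ω, k x z • Dv z‖ₑ ^ p ≤
            (CF : ℝ≥0∞) ^ p * ∫⁻ x in Ω, ‖ENNReal.ofReal τ + Y x‖ₑ ^ p := by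
          rw [← lintegral_const_mul' _ _ (ENNReal.rpow_ne_top_of_nonneg hp0.le ENNReal.coe_ne_top)]
          apply lintegral_mono
          intro x
          dsimp only
          rw [← ENNReal.mul_rpow_of_nonneg _ _ hp0.le]
          exact ENNReal.rpow_le_rpow (hFb x) hp0.le
        refine (ENNReal.rpow_le_rpow h7 (by positivity)).trans (le_of_eq ?_)
        rw [ENNReal.mul_rpow_of_nonneg _ _ (by positivity), ← ENNReal.rpow_mul, mul_one_div_cancel hp0.ne', ENNReal.rpow_one]
      refine h6.trans ?_
      rw [mul_assoc]
      refine mul_le_mul_right ?_ _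
      refine (eLpNorm_add_le (f := fun _ => ENNReal.ofReal τ) (g := Y) aestronglyMeasurable_const hYm.aestronglyMeasurable hP1).trans ?_
      rw [add_mul]
      refine add_le_add ?_ ?_
      · rw [eLpNorm_ofReal_eq hp]
        simp only [enorm_eq_self, lintegral_const, Measure.restrict_apply_univ]
        rw [ENNReal.mul_rpow_of_nonneg _ _ (by positivity), ← ENNReal.rpow_mul, mul_one_div_cancel hp0.ne', ENNReal.rpow_one, mul_comm]
      · rw [eLpNorm_ofReal_eq hp]
        simp only [enorm_eq_self]
        refine (ENNReal.rpow_le_rpow ((setLIntegral_le_lintegral _ _).trans hY4) (by positivity)).trans ?_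
        rw [ENNReal.mul_rpow_of_nonneg _ _ (by positivity)]
        refine mul_le_mul_right ?_ _
        rw [ENNReal.ofReal_rpow_of_nonneg (by positivity) (by positivity), ← Real.mul_rpow hε.le hτ.le, ← Real.rpow_mul (by positivity), mul_one_div_cancel hp0.ne', Real.rpow_one]
        apply ENNReal.ofReal_le_ofReal
        nlinarith
  · refine mul_le_mul_of_nonneg_right ?_ (by positivity)
    exact_mod_cast hκA
  · exact (setLIntegral_le_lintegral _ _).trans (hY4.trans (mul_le_mul_left hA2 _))

lemma frob_bound {d m : ℕ} {Ω : Set (Euc d)} (hΩ : MeasurableSet Ω) {p : ℝ} (hp : 1 ≤ p)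
    {V : Euc d → Mat m d} (hV : Measurable V) (hN : (∫⁻ z in Ω, ‖V z‖ₑ ^ p) < ⊤) (C : ℝ≥0) (G0 : ℝ) :
    ∃ M : ℝ, 1 < M ∧ ∀ ε : ℝ, 0 < ε → ε ≤ 1 → ∀ (k : Euc d → ℝ) (x : Euc d), (∀ z, 0 ≤ k z) →
      (∀ z, k z ≤ C * (ε ^ d)⁻¹) → (∀ z, z ∉ closedBall x ε → k z = 0) → ∀ l : ℝ, 0 ≤ l → l ≤ 1 →
      ∀ ζ : Mat m d, ‖ζ‖ ≤ G0 →
      frobNorm ((∫ z in Ω, k z • V z) + l • ζ) ≤ M * ε ^ (-(d : ℝ) / p) := by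
  have hp0 : 0 < p := by linarith
  set N := ∫⁻ z in Ω, ‖V z‖ₑ ^ p with hNd
  set β := volume (ball (0 : Euc d) 1) with hβ
  have hβt : β ≠ ⊤ := measure_ball_lt_top.ne
  set Q : ℝ≥0∞ := (β ^ (p - 1) * N) ^ (1 / p) with hQ
  have hQt : Q ≠ ⊤ := ENNReal.rpow_ne_top_of_nonneg (by positivity)
    (ENNReal.mul_ne_top (ENNReal.rpow_ne_top_of_nonneg (by linarith) hβt) hN.ne)
  refine ⟨(m * d + 1) * (C * Q.toReal + |G0|) + 2, by
    have : 0 ≤ (m * d + 1) * (C * Q.toReal + |G0|) := by positivity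
    linarith, ?_⟩
  intro ε hε hε1 k x hkn hk hk0 l hl0 hl1 ζ hζ
  have hE1 : 1 ≤ ε ^ (-(d : ℝ) / p) := by
    apply Real.one_le_rpow_of_pos_of_le_one_of_nonpos hε hε1
    apply div_nonpos_of_nonpos_of_nonneg <;> simp [hp0.le]
  set f : Euc d → ℝ≥0∞ := Ω.indicator fun z => ‖V z‖ₑ with hf
  have hfm : Measurable f := (hV.enorm).indicator hΩ
  have hfp : ∫⁻ z, f z ^ p = N := by
    rw [hNd, ← lintegral_indicator hΩ]
    congr 1; ext z
    by_cases hz : z ∈ Ω <;> simp [hf, hz, hp0]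
  have h1 : avg ε f x ≤ Q * ENNReal.ofReal (ε ^ (-(d : ℝ) / p)) := by
    have h2 : avg ε f x ^ p ≤ β ^ (p - 1) * N * ENNReal.ofReal ((ε ^ d)⁻¹) := by
      refine (avg_rpow hε hfm hp x).trans ?_
      rw [mul_assoc]
      refine mul_le_mul_right ?_ _
      rw [avg, mul_comm]
      refine mul_le_mul_left ?_ _
      rw [← hfp]
      exact setLIntegral_le_lintegral _ _
    have h3 : avg ε f x ≤ (β ^ (p - 1) * N * ENNReal.ofReal ((ε ^ d)⁻¹)) ^ (1 / p) := by
      rw [one_div, ENNReal.le_rpow_inv_iff hp0]; exact h2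
    refine h3.trans (le_of_eq ?_)
    rw [ENNReal.mul_rpow_of_nonneg _ _ (by positivity), ENNReal.ofReal_rpow_of_pos (by positivity)]
    congr 2
    rw [← Real.rpow_natCast, ← Real.rpow_neg hε.le, ← Real.rpow_mul hε.le]
    congr 1; ring
  have h4 : ‖∫ z in Ω, k z • V z‖ ≤ C * Q.toReal * ε ^ (-(d : ℝ) / p) := by
    have h5 := (enorm_kernel_le_avg hΩ hε hkn hk hk0 V).trans (mul_le_mul_right h1 _)
    have h6 : (C : ℝ≥0∞) * (Q * ENNReal.ofReal (ε ^ (-(d : ℝ) / p))) =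
        ENNReal.ofReal (C * Q.toReal * ε ^ (-(d : ℝ) / p)) := by
      rw [ENNReal.ofReal_mul (by positivity), ENNReal.ofReal_mul (by positivity), ENNReal.ofReal_toReal hQt,
        ENNReal.ofReal_coe_nnreal, mul_assoc]
    rw [h6, ← ofReal_norm, ENNReal.ofReal_le_ofReal_iff (by positivity)] at h5
    exact h5
  have h7 : ‖l • ζ‖ ≤ |G0| * ε ^ (-(d : ℝ) / p) := by
    rw [norm_smul, Real.norm_of_nonneg hl0]
    calc l * ‖ζ‖ ≤ 1 * |G0| := mul_le_mul hl1 (hζ.trans (le_abs_self _)) (norm_nonneg _) zero_le_one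
      _ = |G0| * 1 := by ring
      _ ≤ _ := by gcongr
  calc frobNorm ((∫ z in Ω, k z • V z) + l • ζ) ≤ (m * d + 1) * ‖(∫ z in Ω, k z • V z) + l • ζ‖ := frobNorm_le_norm _
    _ ≤ (m * d + 1) * (C * Q.toReal * ε ^ (-(d : ℝ) / p) + |G0| * ε ^ (-(d : ℝ) / p)) := by
        gcongr; exact (norm_add_le _ _).trans (add_le_add h4 h7)
    _ ≤ ((m * d + 1) * (C * Q.toReal + |G0|) + 2) * ε ^ (-(d : ℝ) / p) := by nlinarith

lemma limsup_dom {α : Type*} [MeasurableSpace α] {μ : Measure α} {f : ℕ → α → ℝ≥0∞}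
    (hf : ∀ n, Measurable (f n))
    (H : ∀ η : ℝ≥0∞, 0 < η → ∃ (D : α → ℝ≥0∞) (R : ℕ → α → ℝ≥0∞), (∫⁻ x, D x ∂μ) < ⊤ ∧
      (∀ n, Measurable (R n)) ∧ ∀ᶠ n in atTop, (∫⁻ x, R n x ∂μ) ≤ η ∧ ∀ᵐ x ∂μ, f n x ≤ D x + R n x) :
    limsup (fun n => ∫⁻ x, f n x ∂μ) atTop ≤ ∫⁻ x, limsup (fun n => f n x) atTop ∂μ := by
  apply ENNReal.le_of_forall_pos_le_add
  intro η hη hfin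
  obtain ⟨D, R, hD, hR, hev⟩ := H η (by simpa using hη)
  obtain ⟨N, hN⟩ := eventually_atTop.1 hev
  set D' : α → ℝ≥0∞ := fun x => ⨆ n, (f (n + N) x - R (n + N) x) with hD'
  have hD'm : Measurable D' := Measurable.iSup fun n => (hf _).sub (hR _)
  have hD'D : D' ≤ᵐ[μ] D := by
    have : ∀ᵐ x ∂μ, ∀ n, f (n + N) x ≤ D x + R (n + N) x := ae_all_iff.2 fun n => (hN (n + N) (by omega)).2
    filter_upwards [this] with x hx
    exact iSup_le fun n => tsub_le_iff_right.2 (hx n)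
  have hD't : (∫⁻ x, D' x ∂μ) < ⊤ := (lintegral_mono_ae hD'D).trans_lt hD
  set h : ℕ → α → ℝ≥0∞ := fun n x => min (f (n + N) x) (D' x) with hh
  have hhm : ∀ n, Measurable (h n) := fun n => (hf _).min hD'm
  have h1 : limsup (fun n => ∫⁻ x, h n x ∂μ) atTop ≤ ∫⁻ x, limsup (fun n => h n x) atTop ∂μ :=
    limsup_lintegral_le D' hhm (fun n => Eventually.of_forall fun x => min_le_right _ _) hD't.ne
  have h2 : ∀ n, ∫⁻ x, f (n + N) x ∂μ ≤ (∫⁻ x, h n x ∂μ) + η := by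
    intro n
    calc ∫⁻ x, f (n + N) x ∂μ ≤ ∫⁻ x, h n x + R (n + N) x ∂μ := by
          apply lintegral_mono
          intro x
          simp only [hh]
          rcases le_total (f (n + N) x) (D' x) with h | h
          · rw [min_eq_left h]; exact le_self_add
          · rw [min_eq_right h]
            exact tsub_le_iff_right.1 (le_iSup (fun n => f (n + N) x - R (n + N) x) n)
      _ = _ := lintegral_add_left (hhm n) _
      _ ≤ _ := add_le_add le_rfl (hN (n + N) (by omega)).1
  rw [← limsup_nat_add _ N]
  calc limsup (fun n => ∫⁻ x, f (n + N) x ∂μ) atTop ≤ limsup (fun n => (∫⁻ x, h n x ∂μ) + η) atTop :=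
        limsup_le_limsup (Eventually.of_forall h2)
    _ = limsup (fun n => (∫⁻ x, h n x ∂μ)) atTop + η :=
        limsup_add_const _ _ _ (by isBoundedDefault) (by isBoundedDefault)
    _ ≤ (∫⁻ x, limsup (fun n => f n x) atTop ∂μ) + η := by
        refine add_le_add (h1.trans (lintegral_mono fun x => ?_)) le_rfl
        rw [← limsup_nat_add (fun n => f n x) N]
        exact limsup_le_limsup (Eventually.of_forall fun n => min_le_left _ _)

lemma exists_trunc {α : Type*} [MeasurableSpace α] {μ : Measure α} {G : α → ℝ≥0∞} (hG : Measurable G)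
    (hGt : (∫⁻ x, G x ∂μ) < ⊤) {η : ℝ≥0∞} (hη : 0 < η) :
    ∃ K : ℝ≥0, ∫⁻ x, (G x - K) ∂μ ≤ η := by
  have h : Tendsto (fun n : ℕ => ∫⁻ x, (G x - n) ∂μ) atTop (𝓝 (∫⁻ _, 0 ∂μ)) := by
    refine tendsto_lintegral_of_dominated_convergence G (fun n => hG.sub measurable_const)
      (fun n => Eventually.of_forall fun x => tsub_le_self) hGt.ne ?_
    filter_upwards [ae_lt_top hG hGt.ne] with x hx
    obtain ⟨n, hn⟩ := ENNReal.exists_nat_gt hx.ne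
    refine tendsto_const_nhds.congr' ?_
    filter_upwards [eventually_ge_atTop n] with k hk
    symm
    apply tsub_eq_zero_of_le
    exact hn.le.trans (by exact_mod_cast hk)
  rw [lintegral_zero] at h
  obtain ⟨n, hn⟩ := ((tendsto_order.1 h).2 η hη).exists
  exact ⟨n, by simpa using hn.le⟩

lemma smoothJac_C1 {d m : ℕ} {g : Euc d → Euc m} (hg1 : ContDiff ℝ 1 g) (hgc : HasCompactSupport g) :
    Continuous (smoothJac g) ∧ HasCompactSupport (smoothJac g) := by
  constructor
  · have h := hg1.continuous_fderiv (by norm_num)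
    refine continuous_pi fun i => continuous_pi fun j => ?_
    simp only [smoothJac]
    fun_prop
  · have h := hgc.fderiv (𝕜 := ℝ)
    refine h.mono ?_
    intro x hx
    rw [Function.mem_support] at hx ⊢
    intro h0; apply hx
    ext i j
    simp [smoothJac, h0]

/-- pointwise estimate -/
lemma pointwise_energy {d m : ℕ} {Ω : Set (Euc d)} (hΩ : MeasurableSet Ω) (hΩv : volume Ω < ⊤)
    {W : Euc d → Mat m d → ℝ≥0∞} {x : Euc d} (hconv : ConvexENNReal (W x))
    {t s : ℝ} (ht0 : 0 < t) (ht1 : t < 1) (hs : 1 < s) {C : ℝ≥0} {ε τ : ℝ} (hε : 0 < ε) (hτ : 0 < τ)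
    {Dg Dv : Euc d → Mat m d} (hDg : Continuous Dg) (hDgc : HasCompactSupport Dg)
    (hDv : IntegrableOn Dv Ω) {k : Euc d → ℝ} (hkc : Continuous k) (hkn : ∀ z, 0 ≤ k z)
    (hk : ∀ z, k z ≤ C * (ε ^ d)⁻¹) (hk0 : ∀ z, z ∉ closedBall x ε → k z = 0) (hki : Integrable k)
    (hk1 : ∫ z, k z = 1) (hmod : ∀ z, dist z x ≤ ε → ‖Dg x - Dg z‖ ≤ τ)
    {DU : Mat m d} {Y : ℝ≥0∞} (hDU : ‖DU - ∫ z in Ω, k z • Dv z‖ₑ ≤ C * (ENNReal.ofReal τ + Y))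
    {CM : ℝ} {α : ℝ≥0∞}
    (ha4 : W x ((∫ z in Ω, k z • (Dg z + Dv z)) + (1 - ∫ z in Ω, k z) • Dg x) ≤
      ENNReal.ofReal CM * biconj (fun η => essInf (fun y => W y η) (volume.restrict (closedBall x ε ∩ Ω)))
        ((∫ z in Ω, k z • (Dg z + Dv z)) + (1 - ∫ z in Ω, k z) • Dg x) + α)
    (hJ : biconj (fun η => essInf (fun y => W y η) (volume.restrict (closedBall x ε ∩ Ω)))
        ((∫ z in Ω, k z • (Dg z + Dv z)) + (1 - ∫ z in Ω, k z) • Dg x) ≤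
      (∫⁻ z in Ω, ENNReal.ofReal (k z) * W z (Dg z + Dv z)) + W x (Dg x))
    {S S' R : ℝ≥0∞} (hS : W x 0 ≤ S)
    (hR : ∀ ζ : Mat m d, ‖ζ‖ₑ ≤ (Real.toNNReal (t / ((1 - t) * (1 - 1 / s))) * (1 + C) : ℝ≥0) *
      (ENNReal.ofReal τ + Y) → W x ζ ≤ S' + R) :
    W x (Dg x + t • DU) ≤ ENNReal.ofReal CM * C * avg ε (Ω.indicator fun z => W z (Dg z + Dv z)) x +
      (ENNReal.ofReal CM * (W x (s • Dg x) + S) + W x (s • Dg x) + S') + R + α := by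
  have hs0 : 0 < s := by linarith
  set κ' := (1 - t) * (1 - 1 / s) with hκ'
  have hκ0 : 0 < κ' := by
    apply mul_pos (by linarith)
    have : 1 / s < 1 := by rw [div_lt_one hs0]; exact hs
    linarith
  set l := ∫ z in Ω, k z with hl
  set ξ := (∫ z in Ω, k z • (Dg z + Dv z)) + (1 - l) • Dg x with hξ
  have hkb : ∀ z, ‖k z‖ ≤ C * (ε ^ d)⁻¹ := fun z => by rw [Real.norm_of_nonneg (hkn z)]; exact hk z
  have hDgi : IntegrableOn Dg Ω := (hDg.integrable_of_hasCompactSupport hDgc).integrableOn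
  have i1 : IntegrableOn (fun z => k z • Dg z) Ω :=
    hDgi.bdd_smul (C * (ε ^ d)⁻¹) hkc.aestronglyMeasurable (Eventually.of_forall hkb)
  have i2 : IntegrableOn (fun z => k z • Dv z) Ω :=
    hDv.bdd_smul (C * (ε ^ d)⁻¹) hkc.aestronglyMeasurable (Eventually.of_forall hkb)
  have i3 : IntegrableOn k Ω := hki.integrableOn
  have hl1 : l ≤ 1 := by
    rw [← hk1]; exact setIntegral_le_integral hki (Eventually.of_forall hkn)
  set E := ∫ z in Ω, k z • (Dg x - Dg z) with hE
  set F := DU - ∫ z in Ω, k z • Dv z with hF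
  have hEe : E = l • Dg x - ∫ z in Ω, k z • Dg z := by
    rw [hE, hl, ← integral_smul_const, ← integral_sub (i3.smul_const _) i1]
    congr 1; ext1 z; rw [smul_sub]
  have hsum : Dg x + DU = ξ + (E + F) := by
    rw [hEe, hF, hξ]
    have : ∫ z in Ω, k z • (Dg z + Dv z) = (∫ z in Ω, k z • Dg z) + ∫ z in Ω, k z • Dv z := by
      rw [← integral_add i1 i2]; congr 1; ext1 z; rw [smul_add]
    rw [this]; module
  have hEn : ‖E‖ₑ ≤ ENNReal.ofReal τ := by
    rw [← ofReal_norm]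
    apply ENNReal.ofReal_le_ofReal
    calc ‖E‖ ≤ ∫ z in Ω, τ * k z := by
          apply norm_integral_le_of_norm_le (i3.const_mul τ) (Eventually.of_forall fun z => ?_)
          rw [norm_smul, Real.norm_of_nonneg (hkn z), mul_comm]
          by_cases hz : z ∈ closedBall x ε
          · exact mul_le_mul_of_nonneg_right (hmod z hz) (hkn z)
          · simp [hk0 z hz]
      _ = τ * l := integral_const_mul _ _
      _ ≤ τ := by nlinarith
  have hW0 : W x (Dg x) ≤ W x (s • Dg x) + S := by
    have h := hconv (s • Dg x) 0 (1 / s) (by positivity) (by rw [div_le_one hs0]; exact hs.le)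
    have e : (1 / s) • s • Dg x + (1 - 1 / s) • (0 : Mat m d) = Dg x := by
      rw [smul_zero, add_zero, smul_smul, one_div_mul_cancel hs0.ne', one_smul]
    rw [e] at h
    refine h.trans (add_le_add ?_ ((?_ : _ ≤ W x 0).trans hS))
    · refine mul_le_of_le_one_left zero_le ?_
      rw [ENNReal.ofReal_le_one, div_le_one hs0]; exact hs.le
    · refine mul_le_of_le_one_left zero_le ?_
      rw [ENNReal.ofReal_le_one]
      have : 0 < 1 / s := by positivity
      linarith
  have h3 : W x ((t / κ') • (E + F)) ≤ S' + R := by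
    apply hR
    rw [enorm_smul]
    calc ‖t / κ'‖ₑ * ‖E + F‖ₑ ≤ ‖t / κ'‖ₑ * (ENNReal.ofReal τ + C * (ENNReal.ofReal τ + Y)) := by
          gcongr; exact (enorm_add_le _ _).trans (add_le_add hEn hDU)
      _ ≤ ‖t / κ'‖ₑ * ((ENNReal.ofReal τ + Y) + C * (ENNReal.ofReal τ + Y)) := by
          gcongr; exact le_self_add
      _ = _ := by
          rw [Real.enorm_of_nonneg (by positivity)]
          push_cast
          rw [← ENNReal.ofReal]
          ring
  have hc := convex_three hconv ht0.le ht1.le hs ξ (s • Dg x) ((t / κ') • (E + F))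
  have e : t • ξ + ((1 - t) / s) • s • Dg x + ((1 - t) * (1 - 1 / s)) • (t / κ') • (E + F) = Dg x + t • DU := by
    have hD : DU = ξ + (E + F) - Dg x := by rw [← hsum]; abel
    rw [hD, ← hκ', smul_smul, smul_smul, mul_div_cancel₀ _ hκ0.ne', div_mul_cancel₀ _ hs0.ne']
    module
  rw [e] at hc
  have hlk := lintegral_kernel_le_avg hΩ hε hk hk0 (fun z => W z (Dg z + Dv z))
  have h1 : W x ξ ≤ ENNReal.ofReal CM * (C * avg ε (Ω.indicator fun z => W z (Dg z + Dv z)) x +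
      (W x (s • Dg x) + S)) + α := by
    refine ha4.trans (add_le_add (mul_le_mul_right (hJ.trans (add_le_add hlk hW0)) _) le_rfl)
  refine hc.trans ((add_le_add (add_le_add h1 le_rfl) h3).trans (le_of_eq ?_))
  ring

lemma avg_trunc {d : ℕ} {Ω : Set (Euc d)} (hΩ : MeasurableSet Ω) {ε : ℝ} (hε : 0 < ε) {G : Euc d → ℝ≥0∞}
    (hG : Measurable G) (K : ℝ≥0) (x : Euc d) :
    avg ε (Ω.indicator G) x ≤ volume (ball (0 : Euc d) 1) * K + avg ε (Ω.indicator fun z => G z - K) x := by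
  rw [← ofReal_inv_mul_vol hε x]
  simp only [avg]
  rw [mul_assoc, ← mul_add]
  refine mul_le_mul_right ?_ _
  have : (volume (closedBall x ε)) * (K : ℝ≥0∞) = ∫⁻ _ in closedBall x ε, (K : ℝ≥0∞) := by
    rw [setLIntegral_const, mul_comm]
  rw [this, ← lintegral_add_left measurable_const]
  apply lintegral_mono
  intro z
  by_cases hz : z ∈ Ω
  · simp only [hz, indicator_of_mem]; exact le_add_tsub
  · simp [hz]

lemma measurable_W {d m : ℕ} {W : Euc d → Mat m d → ℝ≥0∞} (hW : Measurable (Function.uncurry W))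
    {V : Euc d → Mat m d} (hV : Measurable V) : Measurable fun x => W x (V x) :=
  hW.comp (measurable_id.prodMk hV)

lemma energy_t {d m : ℕ} {Ω : Set (Euc d)} (hΩo : IsOpen Ω) (hΩb : Bornology.IsBounded Ω)
    (hΩl : HasLipschitzBoundary Ω) {p : ℝ} (hp : 1 ≤ p) {W : Euc d → Mat m d → ℝ≥0∞}
    (hW : Assumption1 Ω p W) {Dg : Euc d → Mat m d} (hDg : Continuous Dg) (hDgc : HasCompactSupport Dg)
    {s : ℝ} (hs : 1 < s) (hgW : (∫⁻ x in Ω, W x (s • Dg x)) < ⊤)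
    {v : Euc d → Euc m} {Dv : Euc d → Mat m d} (hv : Measurable v) (hDv : Measurable Dv)
    (h0 : MemW1p0 Ω (ENNReal.ofReal p) v Dv) (hfin : (∫⁻ x in Ω, W x (Dg x + Dv x)) < ⊤)
    {t : ℝ} (ht0 : 0 < t) (ht1 : t < 1) {η : ℝ} (hη : 0 < η) :
    ∃ U : Euc d → Euc m, IsCcSmooth Ω U ∧
      eLpNorm (U - v) (ENNReal.ofReal p) (volume.restrict Ω) ≤ ENNReal.ofReal η ∧
      eLpNorm (smoothJac U - Dv) (ENNReal.ofReal p) (volume.restrict Ω) ≤ ENNReal.ofReal η ∧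
      (∫⁻ x in Ω, W x (Dg x + t • smoothJac U x)) ≤ (∫⁻ x in Ω, W x (Dg x + t • Dv x)) + ENNReal.ofReal η := by
  have hp0 : 0 < p := by linarith
  have hs0 : 0 < s := by linarith
  have hP1 : 1 ≤ ENNReal.ofReal p := by simpa using hp
  have hΩm := hΩo.measurableSet
  have hΩv : volume Ω < ⊤ := hΩb.measure_lt_top
  have : IsFiniteMeasure (volume.restrict Ω) := ⟨by simpa using hΩv⟩
  have hWm := hW.1
  obtain ⟨C, hC⟩ := per_tau hΩo hΩb hΩl hp hv hDv h0
  have hDvp := h0.1.2.1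
  have hDvi : IntegrableOn Dv Ω := hDvp.integrable hP1
  have hDup : MemLp (fun z => Dg z + Dv z) (ENNReal.ofReal p) (volume.restrict Ω) :=
    MemLp.add ((hDg.memLp_of_hasCompactSupport hDgc).restrict Ω) hDvp
  have hN : (∫⁻ z in Ω, ‖Dg z + Dv z‖ₑ ^ p) < ⊤ := by
    have h := hDup.2
    rw [eLpNorm_ofReal_eq hp] at h
    by_contra hc
    rw [not_lt, top_le_iff] at hc
    rw [hc, ENNReal.top_rpow_of_pos (by positivity)] at h
    exact lt_irrefl _ h
  have hDum : Measurable fun z => Dg z + Dv z := hDg.measurable.add hDv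
  obtain ⟨G0, hG0⟩ := hDgc.exists_bound_of_continuous hDg
  obtain ⟨M, hM1, hM⟩ := frob_bound hΩm hp hDum hN C G0
  obtain ⟨CM, δ₀, α, hCM, hδ₀, hα, ha4⟩ := hW.2.2.2.2 M hM1
  have hτ0 : ∀ n : ℕ, (0 : ℝ) < 1 / ((n : ℝ) + 1) := fun n => by positivity
  have hmod : ∀ n : ℕ, ∃ δ : ℝ, 0 < δ ∧ ∀ x z, dist z x < δ → ‖Dg x - Dg z‖ ≤ 1 / ((n : ℝ) + 1) := by
    intro n
    obtain ⟨δ, hδ, h⟩ := Metric.uniformContinuous_iff.1 (hDgc.uniformContinuous_of_continuous hDg) _ (hτ0 n)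
    refine ⟨δ, hδ, fun x z hz => ?_⟩
    have := h hz
    rw [dist_comm, dist_eq_norm] at this
    exact this.le
  choose δ hδ0 hδ using hmod
  choose ε U k Y hε0 hε hε1 hU hUv hUD hkc hkn hk hk0 hki hk1 hYm hY1 hY2 hF using
    fun n : ℕ => hC (1 / ((n : ℝ) + 1)) (hτ0 n) (min δ₀ (δ n)) (lt_min hδ₀ (hδ0 n))
  have hτl : Tendsto (fun n : ℕ => 1 / ((n : ℝ) + 1)) atTop (𝓝 0) := tendsto_one_div_add_atTop_nhds_zero_nat
  have hτl' : Tendsto (fun n : ℕ => (C : ℝ≥0∞) * ENNReal.ofReal (1 / ((n : ℝ) + 1))) atTop (𝓝 0) := by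
    have := ENNReal.Tendsto.const_mul (a := (C : ℝ≥0∞)) (ENNReal.tendsto_ofReal hτl) (Or.inr ENNReal.coe_ne_top)
    simpa using this
  have hDUl : Tendsto (fun n => eLpNorm (smoothJac (U n) - Dv) (ENNReal.ofReal p) (volume.restrict Ω)) atTop (𝓝 0) :=
    tendsto_of_tendsto_of_tendsto_of_le_of_le tendsto_const_nhds hτl' (fun _ => zero_le) hUD
  have hUm : ∀ n, Measurable (smoothJac (U n)) := fun n => (hU n).jac.1.measurable
  obtain ⟨ns, hns, hae⟩ := (tendstoInMeasure_of_tendsto_eLpNorm (by positivity)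
    (fun n => (hUm n).aestronglyMeasurable) hDv.aestronglyMeasurable hDUl).exists_seq_tendsto_ae
  obtain ⟨θ, hθ, S, hSm, hSi, hS⟩ := small_ball hΩv hp hW
  obtain ⟨S', hS'm, hS'i, R, hRm, hRl, hR⟩ := error_term hΩv hp hW
    (Real.toNNReal (t / ((1 - t) * (1 - 1 / s))) * (1 + C)) C ε (fun n => 1 / ((n : ℝ) + 1)) hε0 hε1 hτ0 hτl
    Y hYm hY1 hY2
  have hconv : ∀ᵐ x ∂volume.restrict Ω, ConvexENNReal (W x) := hW.2.1.mono fun x hx => hx.1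
  have hSt : ∀ᵐ x ∂volume.restrict Ω, S x < ⊤ := ae_lt_top hSm hSi.ne
  have hball : ∀ᵐ x ∂volume.restrict Ω, ∃ B : ℝ≥0∞, B < ⊤ ∧ ∀ ξ, ‖ξ‖ < θ → W x ξ ≤ B := by
    filter_upwards [hS, hSt] with x h1 h2
    exact ⟨S x, h2, h1⟩
  set G : Euc d → ℝ≥0∞ := fun z => W z (Dg z + Dv z) with hG
  have hGm : Measurable G := measurable_W hWm hDum
  have hBm : Measurable fun x => W x (s • Dg x) := measurable_W hWm (hDg.measurable.const_smul s)
  set β := volume (ball (0 : Euc d) 1) with hβ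
  have hβt : β ≠ ⊤ := measure_ball_lt_top.ne
  set D1 : Euc d → ℝ≥0∞ := fun x => ENNReal.ofReal CM * (W x (s • Dg x) + S x) + W x (s • Dg x) + S' x with hD1
  have hD1m : Measurable D1 := (((hBm.add hSm).const_mul _).add hBm).add hS'm
  have hD1i : (∫⁻ x in Ω, D1 x) < ⊤ := by
    simp only [hD1]
    rw [lintegral_add_right _ hS'm, lintegral_add_right _ hBm, lintegral_const_mul' _ _ ENNReal.ofReal_ne_top,
      lintegral_add_right _ hSm]
    exact ENNReal.add_lt_top.2 ⟨ENNReal.add_lt_top.2 ⟨ENNReal.mul_lt_top ENNReal.ofReal_lt_top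
      (ENNReal.add_lt_top.2 ⟨hgW, hSi⟩), hgW⟩, hS'i⟩
  have hpt : ∀ᶠ n in atTop, ∀ᵐ x ∂volume.restrict Ω, W x (Dg x + t • smoothJac (U n) x) ≤
      ENNReal.ofReal CM * C * avg (ε n) (Ω.indicator G) x + D1 x + R n x + α x := by
    filter_upwards [hR] with n hRn
    have hJ := biconj_jensen Ω W hconv hθ hball (hε0 n)
    filter_upwards [hRn, hJ, hconv, hS, ae_restrict_mem hΩm] with x hx1 hx2 hx3 hx4 hx5
    have hkb : ∀ z, ‖k n x z‖ ≤ C * (ε n ^ d)⁻¹ := fun z => by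
      rw [Real.norm_of_nonneg (hkn n x z)]; exact hk n x z
    have hl1 : ∫ z in Ω, k n x z ≤ 1 := by
      rw [← hk1 n x]; exact setIntegral_le_integral (hki n x) (Eventually.of_forall (hkn n x))
    have hl0 : 0 ≤ ∫ z in Ω, k n x z := setIntegral_nonneg hΩm fun z _ => hkn n x z
    have hDui : IntegrableOn (fun z => k n x z • (Dg z + Dv z)) Ω :=
      (hDup.integrable hP1).bdd_smul (C * (ε n ^ d)⁻¹) (hkc n x).aestronglyMeasurable (Eventually.of_forall hkb)
    refine pointwise_energy hΩm hΩv hx3 ht0 ht1 hs (hε0 n) (hτ0 n) hDg hDgc hDvi (hkc n x) (hkn n x)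
      (hk n x) (hk0 n x) (hki n x) (hk1 n x) ?_ (hF n x) ?_ ?_ (hx4 0 (by simpa using hθ)) hx1
    · intro z hz
      exact hδ n x z (hz.trans_lt ((hε n).trans_le (min_le_right _ _)))
    · refine ha4 (ε n) (hε0 n) ((hε n).trans_le (min_le_left _ _)) x hx5 _ ?_
      exact hM (ε n) (hε0 n) (hε1 n) (k n x) x (hkn n x) (hk n x) (hk0 n x) _ (by linarith) (by linarith) _ (hG0 x)
    · exact hx2 (k n x) _ (hkn n x) (hk0 n x) (hki n x).integrableOn hl1 hDui (Dg x)
  set f : ℕ → Euc d → ℝ≥0∞ := fun j x => W x (Dg x + t • smoothJac (U (ns j)) x) with hf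
  have hfm : ∀ j, Measurable (f j) := fun j => measurable_W hWm (hDg.measurable.add ((hUm _).const_smul t))
  have hlim := limsup_dom (μ := volume.restrict Ω) hfm (by
    intro η' hη'
    set c : ℝ≥0∞ := ENNReal.ofReal CM * C * β with hc
    have hct : c ≠ ⊤ := ENNReal.mul_ne_top (ENNReal.mul_ne_top ENNReal.ofReal_ne_top ENNReal.coe_ne_top) hβt
    obtain ⟨K, hK⟩ := exists_trunc (μ := volume.restrict Ω) hGm hfin (η := η' / 2 / (c + 1))
      (ENNReal.div_pos (ENNReal.half_pos hη'.ne').ne' (by simp [hct]))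
    refine ⟨fun x => (c * K + D1 x) + α x, fun j x => ENNReal.ofReal CM * C *
      avg (ε (ns j)) (Ω.indicator fun z => G z - K) x + R (ns j) x, ?_, ?_, ?_⟩
    · have hm1 : Measurable fun x => c * K + D1 x := measurable_const.add hD1m
      simp only
      rw [lintegral_add_left hm1, lintegral_add_left measurable_const, lintegral_const,
        Measure.restrict_apply_univ]
      exact ENNReal.add_lt_top.2 ⟨ENNReal.add_lt_top.2 ⟨ENNReal.mul_lt_top
        (ENNReal.mul_lt_top hct.lt_top ENNReal.coe_lt_top) hΩv, hD1i⟩, hα⟩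
    · intro j
      exact ((measurable_avg _ ((hGm.sub measurable_const).indicator hΩm)).const_mul _).add (hRm _)
    · have e1 : ∀ᶠ j in atTop, ∫⁻ x in Ω, R (ns j) x ≤ η' / 2 := by
        have := (tendsto_order.1 (hRl.comp hns.tendsto_atTop)).2 (η' / 2) (ENNReal.half_pos hη'.ne')
        exact this.mono fun j hj => le_of_lt hj
      filter_upwards [e1, hns.tendsto_atTop.eventually hpt] with j hj1 hj2
      constructor
      · have hm : Measurable (Ω.indicator fun z => G z - (K : ℝ≥0∞)) := (hGm.sub measurable_const).indicator hΩm
        rw [lintegral_add_right _ (hRm _), lintegral_const_mul _ (measurable_avg _ hm), ← ENNReal.add_halves η']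
        refine add_le_add ?_ hj1
        calc ENNReal.ofReal CM * C * ∫⁻ x in Ω, avg (ε (ns j)) (Ω.indicator fun z => G z - K) x
            ≤ ENNReal.ofReal CM * C * ∫⁻ x, avg (ε (ns j)) (Ω.indicator fun z => G z - K) x :=
              mul_le_mul_right (setLIntegral_le_lintegral _ _) _
          _ = c * ∫⁻ x in Ω, (G x - K) := by
              rw [lintegral_avg (hε0 _) hm, lintegral_indicator hΩm, hc]; ring
          _ ≤ (c + 1) * (η' / 2 / (c + 1)) := mul_le_mul' le_self_add hK
          _ ≤ η' / 2 := ENNReal.mul_div_le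
      · filter_upwards [hj2] with x hx
        refine hx.trans ?_
        calc _ ≤ ENNReal.ofReal CM * C * (β * K + avg (ε (ns j)) (Ω.indicator fun z => G z - K) x) + D1 x +
              R (ns j) x + α x := by
              gcongr
              exact avg_trunc hΩm (hε0 _) hGm K x
          _ = _ := by rw [hc]; ring)
  have hGt : ∀ᵐ x ∂volume.restrict Ω, G x < ⊤ := ae_lt_top hGm hfin.ne
  have hBt : ∀ᵐ x ∂volume.restrict Ω, W x (s • Dg x) < ⊤ := ae_lt_top hBm hgW.ne
  have hcomb : ∀ x, t • (Dg x + Dv x) + ((1 - t) / s) • s • Dg x = Dg x + t • Dv x := by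
    intro x
    rw [smul_smul, div_mul_cancel₀ _ hs0.ne']; module
  have hlim2 : ∫⁻ x in Ω, limsup (fun j => f j x) atTop ≤ ∫⁻ x in Ω, W x (Dg x + t • Dv x) := by
    apply lintegral_mono_ae
    filter_upwards [hconv, hS, hSt, hGt, hBt, hae] with x h1 h2 h3 h4 h5 h6
    have := limsup_le_interior h1 hθ h3 h2 ht0.le ht1 hs (Dg x + Dv x) (s • Dg x) h4 h5
      (fun j => Dg x + t • smoothJac (U (ns j)) x) (by
        rw [hcomb]; exact (h6.const_smul t).const_add _)
    rw [hcomb] at this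
    exact this
  have hI : ∫⁻ x in Ω, W x (Dg x + t • Dv x) < ⊤ := by
    calc ∫⁻ x in Ω, W x (Dg x + t • Dv x) ≤ ∫⁻ x in Ω, (G x + W x (s • Dg x) + S x) := by
          apply lintegral_mono_ae
          filter_upwards [hconv, hS] with x h1 h2
          have := convex_three h1 ht0.le ht1.le hs (Dg x + Dv x) (s • Dg x) 0
          rw [smul_zero, add_zero, hcomb] at this
          exact this.trans (add_le_add le_rfl (h2 0 (by simpa using hθ)))
      _ < ⊤ := by
          rw [lintegral_add_right _ hSm, lintegral_add_right _ hBm]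
          exact ENNReal.add_lt_top.2 ⟨ENNReal.add_lt_top.2 ⟨hfin, hgW⟩, hSi⟩
  have hlt : limsup (fun j => ∫⁻ x in Ω, f j x) atTop < (∫⁻ x in Ω, W x (Dg x + t • Dv x)) + ENNReal.ofReal η :=
    (hlim.trans hlim2).trans_lt (ENNReal.lt_add_right hI.ne (by simpa using hη))
  have ev1 := eventually_lt_of_limsup_lt hlt
  have ev2 := (tendsto_order.1 (hτl'.comp hns.tendsto_atTop)).2 (ENNReal.ofReal η) (by simpa using hη)
  obtain ⟨j, hj1, hj2⟩ := (ev1.and ev2).exists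
  exact ⟨U (ns j), hU _, (hUv _).trans hj2.le, (hUD _).trans hj2.le, hj1.le⟩

lemma IsCcSmooth.const_smul {d m : ℕ} {Ω : Set (Euc d)} {U : Euc d → Euc m} (hU : IsCcSmooth Ω U) (t : ℝ) :
    IsCcSmooth Ω (t • U) ∧ smoothJac (t • U) = t • smoothJac U := by
  refine ⟨⟨hU.1.const_smul t, ?_, ?_⟩, ?_⟩
  · exact hU.2.1.mono (Function.support_const_smul_subset t U)
  · exact (closure_mono (Function.support_const_smul_subset t U)).trans hU.2.2
  · ext x i j
    have : DifferentiableAt ℝ U x := (hU.1.differentiable (by simp)).differentiableAt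
    simp only [smoothJac, Pi.smul_apply]
    rw [fderiv_const_smul this]
    simp

lemma eLpNorm_smul_sub_le {d : ℕ} {E : Type*} [NormedAddCommGroup E] [NormedSpace ℝ E] {μ : Measure (Euc d)}
    {p : ℝ≥0∞} (hp : 1 ≤ p) {t : ℝ} (ht0 : 0 < t) (ht1 : t < 1) {U v : Euc d → E}
    (hU : AEStronglyMeasurable U μ) (hv : AEStronglyMeasurable v μ) :
    eLpNorm (t • U - v) p μ ≤ eLpNorm (U - v) p μ + ENNReal.ofReal (1 - t) * eLpNorm v p μ := by
  have e : t • U - v = t • (U - v) + (t - 1) • v := by module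
  rw [e]
  refine (eLpNorm_add_le ((hU.sub hv).const_smul t) (hv.const_smul _) hp).trans (add_le_add ?_ ?_)
  · rw [eLpNorm_const_smul]
    refine mul_le_of_le_one_left zero_le ?_
    rw [Real.enorm_of_nonneg ht0.le, ENNReal.ofReal_le_one]; exact ht1.le
  · rw [eLpNorm_const_smul, ← enorm_neg, neg_sub, Real.enorm_of_nonneg (by linarith)]

lemma energy_exists {d m : ℕ} {Ω : Set (Euc d)} (hΩo : IsOpen Ω) (hΩb : Bornology.IsBounded Ω)
    (hΩl : HasLipschitzBoundary Ω) {p : ℝ} (hp : 1 ≤ p) {W : Euc d → Mat m d → ℝ≥0∞}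
    (hW : Assumption1 Ω p W) {Dg : Euc d → Mat m d} (hDg : Continuous Dg) (hDgc : HasCompactSupport Dg)
    {s : ℝ} (hs : 1 < s) (hgW : (∫⁻ x in Ω, W x (s • Dg x)) < ⊤)
    {v : Euc d → Euc m} {Dv : Euc d → Mat m d} (hv : Measurable v) (hDv : Measurable Dv)
    (h0 : MemW1p0 Ω (ENNReal.ofReal p) v Dv) (hfin : (∫⁻ x in Ω, W x (Dg x + Dv x)) < ⊤)
    {η : ℝ} (hη : 0 < η) :
    ∃ U : Euc d → Euc m, IsCcSmooth Ω U ∧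
      eLpNorm (U - v) (ENNReal.ofReal p) (volume.restrict Ω) ≤ ENNReal.ofReal η ∧
      eLpNorm (smoothJac U - Dv) (ENNReal.ofReal p) (volume.restrict Ω) ≤ ENNReal.ofReal η ∧
      (∫⁻ x in Ω, W x (Dg x + smoothJac U x)) ≤ (∫⁻ x in Ω, W x (Dg x + Dv x)) + ENNReal.ofReal η := by
  have hs0 : 0 < s := by linarith
  have hP1 : 1 ≤ ENNReal.ofReal p := by simpa using hp
  have hΩv : volume Ω < ⊤ := hΩb.measure_lt_top
  have hWm := hW.1
  have hconv : ∀ᵐ x ∂volume.restrict Ω, ConvexENNReal (W x) := hW.2.1.mono fun x hx => hx.1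
  obtain ⟨θ, hθ, S, hSm, hSi, hS⟩ := small_ball hΩv hp hW
  have hBm : Measurable fun x => W x (s • Dg x) := measurable_W hWm (hDg.measurable.const_smul s)
  have hDgm : Measurable fun x => W x (Dg x) := measurable_W hWm hDg.measurable
  have hGm : Measurable fun x => W x (Dg x + Dv x) := measurable_W hWm (hDg.measurable.add hDv)
  have hg0 : (∫⁻ x in Ω, W x (Dg x)) < ⊤ := by
    calc (∫⁻ x in Ω, W x (Dg x)) ≤ ∫⁻ x in Ω, (W x (s • Dg x) + S x) := by
          apply lintegral_mono_ae
          filter_upwards [hconv, hS] with x h1 h2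
          have h := h1 (s • Dg x) 0 (1 / s) (by positivity) (by rw [div_le_one hs0]; exact hs.le)
          have e : (1 / s) • s • Dg x + (1 - 1 / s) • (0 : Mat m d) = Dg x := by
            rw [smul_zero, add_zero, smul_smul, one_div_mul_cancel hs0.ne', one_smul]
          rw [e] at h
          refine h.trans (add_le_add ?_ ((?_ : _ ≤ W x 0).trans (h2 0 (by simpa using hθ))))
          · refine mul_le_of_le_one_left zero_le ?_
            rw [ENNReal.ofReal_le_one, div_le_one hs0]; exact hs.le
          · refine mul_le_of_le_one_left zero_le ?_
            rw [ENNReal.ofReal_le_one]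
            have : 0 < 1 / s := by positivity
            linarith
      _ < ⊤ := by
          rw [lintegral_add_right _ hSm]
          exact ENNReal.add_lt_top.2 ⟨hgW, hSi⟩
  set Q : ℝ≥0∞ := eLpNorm v (ENNReal.ofReal p) (volume.restrict Ω) +
    eLpNorm Dv (ENNReal.ofReal p) (volume.restrict Ω) + ∫⁻ x in Ω, W x (Dg x) with hQ
  have hQt : Q ≠ ⊤ := (ENNReal.add_lt_top.2 ⟨ENNReal.add_lt_top.2 ⟨h0.1.1.2, h0.1.2.1.2⟩, hg0⟩).ne
  set r : ℝ := min (1 / 2) (η / 2 / (Q.toReal + 1)) with hr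
  have hr0 : 0 < r := lt_min (by norm_num) (by positivity)
  have hr1 : r ≤ 1 / 2 := min_le_left _ _
  have hrQ : ENNReal.ofReal (1 - (1 - r)) * Q ≤ ENNReal.ofReal (η / 2) := by
    rw [sub_sub_cancel, ← ENNReal.ofReal_toReal hQt, ← ENNReal.ofReal_mul hr0.le]
    apply ENNReal.ofReal_le_ofReal
    have h1 : r ≤ η / 2 / (Q.toReal + 1) := min_le_right _ _
    rw [le_div_iff₀ (by positivity)] at h1
    nlinarith
  have ht0 : 0 < 1 - r := by linarith
  have ht1 : 1 - r < 1 := by linarith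
  set t := 1 - r with ht
  obtain ⟨U, hU, hU1, hU2, hU3⟩ := energy_t hΩo hΩb hΩl hp hW hDg hDgc hs hgW hv hDv h0 hfin ht0 ht1 (half_pos hη)
  have hηη : ENNReal.ofReal (η / 2) + ENNReal.ofReal (η / 2) = ENNReal.ofReal η := by
    rw [← ENNReal.ofReal_add (by positivity) (by positivity), add_halves]
  obtain ⟨hs1, hs2⟩ := hU.const_smul t
  refine ⟨t • U, hs1, ?_, ?_, ?_⟩
  · rw [← hηη]
    refine (eLpNorm_smul_sub_le hP1 ht0 ht1 hU.1.continuous.aestronglyMeasurable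
      hv.aestronglyMeasurable).trans (add_le_add hU1 (le_trans (mul_le_mul_right ?_ _) hrQ))
    rw [hQ, add_assoc]; exact le_self_add
  · rw [← hηη, hs2]
    refine (eLpNorm_smul_sub_le hP1 ht0 ht1 hU.jac.1.aestronglyMeasurable
      hDv.aestronglyMeasurable).trans (add_le_add hU2 (le_trans (mul_le_mul_right ?_ _) hrQ))
    rw [hQ]; exact le_add_self.trans le_self_add
  · rw [hs2]
    refine hU3.trans ?_
    rw [← hηη, ← add_assoc]
    refine add_le_add ?_ le_rfl
    calc ∫⁻ x in Ω, W x (Dg x + t • Dv x) ≤ ∫⁻ x in Ω, (W x (Dg x + Dv x) + ENNReal.ofReal (1 - t) * W x (Dg x)) := by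
          apply lintegral_mono_ae
          filter_upwards [hconv] with x h1
          have h := h1 (Dg x + Dv x) (Dg x) t ht0.le ht1.le
          have e : t • (Dg x + Dv x) + (1 - t) • Dg x = Dg x + t • Dv x := by module
          rw [e] at h
          refine h.trans (add_le_add ?_ le_rfl)
          refine mul_le_of_le_one_left zero_le ?_
          rw [ENNReal.ofReal_le_one]; exact ht1.le
      _ = (∫⁻ x in Ω, W x (Dg x + Dv x)) + ENNReal.ofReal (1 - t) * ∫⁻ x in Ω, W x (Dg x) := by
          rw [lintegral_add_left hGm, lintegral_const_mul _ hDgm]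
      _ ≤ _ := by
          refine add_le_add le_rfl (le_trans (mul_le_mul_right ?_ _) hrQ)
          rw [hQ]; exact le_add_self

lemma energy_liminf {d m : ℕ} {Ω : Set (Euc d)} {p : ℝ} (hp : 1 ≤ p) {W : Euc d → Mat m d → ℝ≥0∞}
    (hW : Assumption1 Ω p W) {Dg : Euc d → Mat m d} (hDg : Continuous Dg)
    {Dv : Euc d → Mat m d} (hDv : Measurable Dv) {V : ℕ → Euc d → Mat m d} (hV : ∀ n, Measurable (V n))
    (hl : Tendsto (fun n => eLpNorm (V n - Dv) (ENNReal.ofReal p) (volume.restrict Ω)) atTop (𝓝 0)) :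
    (∫⁻ x in Ω, W x (Dg x + Dv x)) ≤ liminf (fun n => ∫⁻ x in Ω, W x (Dg x + V n x)) atTop := by
  have hp0 : 0 < p := by linarith
  by_contra hc
  rw [not_le] at hc
  obtain ⟨a, ha1, ha2⟩ := exists_between hc
  have hfr := frequently_lt_of_liminf_lt (by isBoundedDefault) ha1
  obtain ⟨ms, hms, hlt⟩ := extraction_of_frequently_atTop hfr
  obtain ⟨ns, hns, hae⟩ := (tendstoInMeasure_of_tendsto_eLpNorm (f := fun n => V (ms n)) (by positivity)
    (fun n => (hV (ms n)).aestronglyMeasurable) hDv.aestronglyMeasurable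
    (hl.comp hms.tendsto_atTop)).exists_seq_tendsto_ae
  have hF := lintegral_liminf_le (u := atTop) (μ := volume.restrict Ω) (f := fun j x => W x (Dg x + V (ms (ns j)) x))
    (fun j => measurable_W hW.1 (hDg.measurable.add (hV _)))
  have h1 : ∫⁻ x in Ω, W x (Dg x + Dv x) ≤ ∫⁻ x in Ω, liminf (fun j => W x (Dg x + V (ms (ns j)) x)) atTop := by
    apply lintegral_mono_ae
    filter_upwards [hW.2.1, hae] with x hx1 hx2
    have hx3 : Tendsto (fun j => Dg x + V (ms (ns j)) x) atTop (𝓝 (Dg x + Dv x)) := hx2.const_add _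
    refine (le_liminf_iff).2 fun y hy => hx3.eventually (hx1.2 _ y hy)
  have h2 : liminf (fun j => ∫⁻ x in Ω, W x (Dg x + V (ms (ns j)) x)) atTop ≤ a := by
    refine (liminf_le_liminf (v := fun _ => a) (Eventually.of_forall fun j => (hlt (ns j)).le)).trans (by simp)
  exact absurd ((h1.trans hF).trans h2) (not_le.2 ha2)

lemma main_measurable {d m : ℕ} {Ω : Set (Euc d)} (hΩo : IsOpen Ω) (hΩb : Bornology.IsBounded Ω)
    (hΩl : HasLipschitzBoundary Ω) {p : ℝ} (hp : 1 ≤ p) {W : Euc d → Mat m d → ℝ≥0∞}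
    (hW : Assumption1 Ω p W) {Dg : Euc d → Mat m d} (hDg : Continuous Dg) (hDgc : HasCompactSupport Dg)
    {s : ℝ} (hs : 1 < s) (hgW : (∫⁻ x in Ω, W x (s • Dg x)) < ⊤)
    {v : Euc d → Euc m} {Dv : Euc d → Mat m d} (hv : Measurable v) (hDv : Measurable Dv)
    (h0 : MemW1p0 Ω (ENNReal.ofReal p) v Dv) :
    ∃ φ : ℕ → Euc d → Euc m, (∀ n, IsCcSmooth Ω (φ n)) ∧
        TendstoW1p Ω (ENNReal.ofReal p) φ (fun n => smoothJac (φ n)) v Dv ∧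
        Tendsto (fun n => ∫⁻ x in Ω, W x (Dg x + smoothJac (φ n) x)) atTop
          (𝓝 (∫⁻ x in Ω, W x (Dg x + Dv x))) := by
  rcases eq_or_ne (∫⁻ x in Ω, W x (Dg x + Dv x)) ⊤ with htop | hfin
  · obtain ⟨-, w, hw, hl⟩ := h0
    refine ⟨w, hw, hl, ?_⟩
    refine tendsto_of_le_liminf_of_limsup_le
      (energy_liminf hp hW hDg hDv (fun n => (hw n).jac.1.measurable) hl.2) ?_
    rw [htop]; exact le_top
  · choose φ h1 h2 h3 h4 using fun n : ℕ => energy_exists hΩo hΩb hΩl hp hW hDg hDgc hs hgW hv hDv h0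
      (lt_top_iff_ne_top.2 hfin) (η := 1 / ((n : ℝ) + 1)) (by positivity)
    have hτ : Tendsto (fun n : ℕ => ENNReal.ofReal (1 / ((n : ℝ) + 1))) atTop (𝓝 0) := by
      simpa using ENNReal.tendsto_ofReal tendsto_one_div_add_atTop_nhds_zero_nat
    have hl1 := tendsto_of_tendsto_of_tendsto_of_le_of_le tendsto_const_nhds hτ (fun _ => zero_le) h2
    have hl2 := tendsto_of_tendsto_of_tendsto_of_le_of_le tendsto_const_nhds hτ (fun _ => zero_le) h3
    refine ⟨φ, h1, ⟨hl1, hl2⟩, ?_⟩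
    refine tendsto_of_le_liminf_of_limsup_le
      (energy_liminf hp hW hDg hDv (fun n => (h1 n).jac.1.measurable) hl2) ?_
    have hT : Tendsto (fun n : ℕ => (∫⁻ x in Ω, W x (Dg x + Dv x)) + ENNReal.ofReal (1 / ((n : ℝ) + 1))) atTop
        (𝓝 ((∫⁻ x in Ω, W x (Dg x + Dv x)) + 0)) := tendsto_const_nhds.add hτ
    rw [add_zero] at hT
    refine (limsup_le_limsup (Eventually.of_forall h4)).trans hT.limsup_eq.le

lemma main_general {d m : ℕ} {Ω : Set (Euc d)} (hΩo : IsOpen Ω) (hΩb : Bornology.IsBounded Ω)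
    (hΩl : HasLipschitzBoundary Ω) {p : ℝ} (hp : 1 ≤ p) {W : Euc d → Mat m d → ℝ≥0∞}
    (hW : Assumption1 Ω p W) {Dg : Euc d → Mat m d} (hDg : Continuous Dg) (hDgc : HasCompactSupport Dg)
    {s : ℝ} (hs : 1 < s) (hgW : (∫⁻ x in Ω, W x (s • Dg x)) < ⊤)
    {v : Euc d → Euc m} {Dv : Euc d → Mat m d} 
    (h0 : MemW1p0 Ω (ENNReal.ofReal p) v Dv) :
    ∃ φ : ℕ → Euc d → Euc m, (∀ n, IsCcSmooth Ω (φ n)) ∧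
        TendstoW1p Ω (ENNReal.ofReal p) φ (fun n => smoothJac (φ n)) v Dv ∧
        Tendsto (fun n => ∫⁻ x in Ω, W x (Dg x + smoothJac (φ n) x)) atTop
          (𝓝 (∫⁻ x in Ω, W x (Dg x + Dv x))) := by
  obtain ⟨⟨hvp, hDvp, hwk⟩, w, hw, hl⟩ := h0
  set v' := hvp.1.mk v with hv'
  set Dv' := hDvp.1.mk Dv with hDv'
  have ev : v =ᵐ[volume.restrict Ω] v' := hvp.1.ae_eq_mk
  have eD : Dv =ᵐ[volume.restrict Ω] Dv' := hDvp.1.ae_eq_mk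
  have hvm : Measurable v' := hvp.1.stronglyMeasurable_mk.measurable
  have hDvm : Measurable Dv' := hDvp.1.stronglyMeasurable_mk.measurable
  have key : ∀ u : ℕ → Euc d → Euc m,
      TendstoW1p Ω (ENNReal.ofReal p) u (fun n => smoothJac (u n)) v Dv ↔
      TendstoW1p Ω (ENNReal.ofReal p) u (fun n => smoothJac (u n)) v' Dv' := by
    intro u
    have a1 : ∀ n, eLpNorm (u n - v) (ENNReal.ofReal p) (volume.restrict Ω) =
        eLpNorm (u n - v') (ENNReal.ofReal p) (volume.restrict Ω) := fun n =>
      eLpNorm_congr_ae (by filter_upwards [ev] with x hx; simp [hx])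
    have a2 : ∀ n, eLpNorm (smoothJac (u n) - Dv) (ENNReal.ofReal p) (volume.restrict Ω) =
        eLpNorm (smoothJac (u n) - Dv') (ENNReal.ofReal p) (volume.restrict Ω) := fun n =>
      eLpNorm_congr_ae (by filter_upwards [eD] with x hx; simp [hx])
    simp only [TendstoW1p, a1, a2]
  have hI : ∫⁻ x in Ω, W x (Dg x + Dv x) = ∫⁻ x in Ω, W x (Dg x + Dv' x) :=
    lintegral_congr_ae (by filter_upwards [eD] with x hx; rw [hx])
  have h0' : MemW1p0 Ω (ENNReal.ofReal p) v' Dv' := by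
    refine ⟨⟨(memLp_congr_ae ev).1 hvp, (memLp_congr_ae eD).1 hDvp, ?_⟩, w, hw, (key w).1 hl⟩
    intro φ f1 f2 f3 i j
    have := hwk φ f1 f2 f3 i j
    have b1 : ∫ x in Ω, v x i * fderiv ℝ φ x (EuclideanSpace.single j 1) =
        ∫ x in Ω, v' x i * fderiv ℝ φ x (EuclideanSpace.single j 1) :=
      integral_congr_ae (by filter_upwards [ev] with x hx; rw [hx])
    have b2 : ∫ x in Ω, Dv x i j * φ x = ∫ x in Ω, Dv' x i j * φ x :=
      integral_congr_ae (by filter_upwards [eD] with x hx; rw [hx])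
    rw [← b1, ← b2]; exact this
  obtain ⟨φ, h1, h2, h3⟩ := main_measurable hΩo hΩb hΩl hp hW hDg hDgc hs hgW hvm hDvm h0'
  exact ⟨φ, h1, (key φ).2 h2, by rw [hI]; exact h3⟩

/-- **Lemma 3.4.** Let `Ω ⊂ ℝ^d` be a bounded open set with Lipschitz
boundary, let `W : Ω × ℝ^{m×d} → [0,+∞]` satisfy Assumption 1, and let `g ∈ C_c^1(ℝ^d)^m`
be such that `∫_Ω W(x, s Dg) dx < ∞` for some `s > 1`. Then for any
`u = g + v ∈ g + W_0^{1,p}(Ω)^m` there is a sequence `u_n = g + φ_n ∈ g + C_c^∞(Ω)^m`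
with `u_n → u` strongly in `W^{1,p}(Ω)^m` and `∫_Ω W(x, Du_n) dx → ∫_Ω W(x, Du) dx`. -/
theorem approximation_compact_support
    (d m : ℕ) (Ω : Set (Euc d)) (hΩo : IsOpen Ω) (hΩb : Bornology.IsBounded Ω)
    (hΩl : HasLipschitzBoundary Ω)
    (p : ℝ) (hp1 : 1 ≤ p)
    (W : Euc d → Mat m d → ℝ≥0∞)
    (hW : Assumption1 Ω p W)
    (g : Euc d → Euc m) (hg1 : ContDiff ℝ 1 g) (hgc : HasCompactSupport g)
    (hgW : ∃ s : ℝ, 1 < s ∧ (∫⁻ x in Ω, W x (s • smoothJac g x)) < ⊤) :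
    ∀ (v : Euc d → Euc m) (Dv : Euc d → Mat m d),
      MemW1p0 Ω (ENNReal.ofReal p) v Dv →
      ∃ φ : ℕ → Euc d → Euc m, (∀ n, IsCcSmooth Ω (φ n)) ∧
        TendstoW1p Ω (ENNReal.ofReal p) φ (fun n => smoothJac (φ n)) v Dv ∧
        Tendsto (fun n => ∫⁻ x in Ω, W x (smoothJac g x + smoothJac (φ n) x)) atTop
          (𝓝 (∫⁻ x in Ω, W x (smoothJac g x + Dv x))) := by
  intro v Dv h0
  obtain ⟨s, hs, hgW⟩ := hgW
  obtain ⟨hc, hcs⟩ := smoothJac_C1 hg1 hgc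
  exact main_general hΩo hΩb hΩl hp1 hW hc hcs hs hgW h0

end
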